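/- arXiv:2312.16816 — 4 statements merged into one kernel-verified Lean document; each statement's English description precedes it below -/
import Mathlib

section
/- In the Segal-Bargmann space of ℂ^{n×n} with Gaussian measure π^{-n²} e^{-Tr(z*z)} dz, the squared norm of the determinant function z ↦ det(z) equals n!. Equivalently, for the complex Ginibre ensemble, E|λ₁(z)⋯λₙ(z)|² = n!. -/
open MeasureTheory

/-- One-variable factor: `a` and `b` say whether `w` and its conjugate occur. -/
noncomputable def ginF (a b : Prop) [Decidable a] [Decidable b] (w : ℂ) : ℂ :=
  (if a then w else 1) * (if b then (starRingEnd ℂ) w else 1) *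
    ((Real.exp (-(Complex.normSq w)) : ℝ) : ℂ)

lemma gin_int0 : ∫ w : ℂ, Real.exp (-(Complex.normSq w)) = Real.pi := by
  have h := Complex.integral_rpow_mul_exp_neg_rpow (p := 2) (q := 0) (by norm_num) (by norm_num)
  simp only [Real.rpow_zero, one_mul] at h
  norm_num at h
  simpa [Complex.normSq_eq_norm_sq] using h

lemma gin_int2 : ∫ w : ℂ, Complex.normSq w * Real.exp (-(Complex.normSq w)) = Real.pi := by
  have h := Complex.integral_rpow_mul_exp_neg_rpow (p := 2) (q := 2) (by norm_num) (by norm_num)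
  norm_num at h
  simpa [Complex.normSq_eq_norm_sq] using h

lemma gin_able0 : Integrable (fun w : ℂ => Real.exp (-(Complex.normSq w))) := by
  by_contra h
  have := integral_undef h
  rw [gin_int0] at this
  exact Real.pi_ne_zero this

lemma gin_able2 : Integrable (fun w : ℂ => Complex.normSq w * Real.exp (-(Complex.normSq w))) := by
  by_contra h
  have := integral_undef h
  rw [gin_int2] at this
  exact Real.pi_ne_zero this

lemma ginF_able (a b : Prop) [Decidable a] [Decidable b] : Integrable (ginF a b) := by
  refine (gin_able0.add gin_able2).mono' ?_ ?_
  · apply Continuous.aestronglyMeasurable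
    unfold ginF
    have := Complex.continuous_normSq
    have := Complex.continuous_conj
    split_ifs <;> fun_prop
  · refine Filter.Eventually.of_forall fun w => ?_
    have hpos := Real.exp_pos (-(Complex.normSq w))
    simp only [ginF, norm_mul, Complex.norm_real, Real.norm_eq_abs, Real.abs_exp, Pi.add_apply]
    rw [← one_add_mul]
    refine mul_le_mul_of_nonneg_right ?_ hpos.le
    rw [Complex.normSq_eq_norm_sq]
    split_ifs <;> simp <;> nlinarith [norm_nonneg w, sq_nonneg (‖w‖ - 1)]

lemma ginF_iff (a b : Prop) [Decidable a] [Decidable b] (h : a ↔ b) :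
    ∫ w, ginF a b w = (Real.pi : ℂ) := by
  by_cases hb : b
  · have ha : a := h.2 hb
    rw [← gin_int2, ← integral_complex_ofReal]
    simp [ginF, ha, hb, Complex.mul_conj]
  · have ha : ¬ a := fun x => hb (h.1 x)
    rw [← gin_int0, ← integral_complex_ofReal]
    simp [ginF, ha, hb]

lemma ginF_ne (a b : Prop) [Decidable a] [Decidable b] (ha : a) (hb : ¬ b) :
    ∫ w, ginF a b w = 0 := by
  have h := integral_neg_eq_self (ginF a b) (volume : Measure ℂ)
  have h2 : ∀ w, ginF a b (-w) = - ginF a b w := by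
    intro w
    simp [ginF, ha, hb]
  simp only [h2, integral_neg] at h
  exact self_eq_neg.mp h.symm

lemma gin_prod (n : ℕ) (σ τ : Equiv.Perm (Fin n)) (z : Fin n × Fin n → ℂ) :
    ∏ p : Fin n × Fin n, ginF (σ p.2 = p.1) (τ p.2 = p.1) (z p) =
      (∏ j, z (σ j, j)) * (∏ j, (starRingEnd ℂ) (z (τ j, j))) *
        ((Real.exp (-(∑ p, Complex.normSq (z p))) : ℝ) : ℂ) := by
  unfold ginF
  rw [Finset.prod_mul_distrib, Finset.prod_mul_distrib, ← Finset.sum_neg_distrib, Real.exp_sum,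
    Complex.ofReal_prod]
  congr 2
  · rw [Fintype.prod_prod_type_right]
    simp
  · rw [Fintype.prod_prod_type_right]
    simp

lemma gin_integral (n : ℕ) (σ τ : Equiv.Perm (Fin n)) :
    ∫ z : Fin n × Fin n → ℂ, ∏ p, ginF (σ p.2 = p.1) (τ p.2 = p.1) (z p) =
      if σ = τ then (Real.pi : ℂ) ^ (n ^ 2) else 0 := by
  rw [integral_fintype_prod_volume_eq_prod
    (f := fun p : Fin n × Fin n => ginF (σ p.2 = p.1) (τ p.2 = p.1))]
  split_ifs with h
  · subst h
    rw [Finset.prod_congr rfl (fun p _ => ginF_iff _ _ Iff.rfl)]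
    simp [sq]
  · obtain ⟨j, hj⟩ : ∃ j, σ j ≠ τ j := by
      by_contra! hc
      exact h (Equiv.ext hc)
    exact Finset.prod_eq_zero (Finset.mem_univ (σ j, j)) (ginF_ne _ _ rfl (fun e => hj e.symm))

lemma gin_expand (n : ℕ) (z : Fin n × Fin n → ℂ) :
    ((‖(Matrix.of fun i j : Fin n => z (i, j)).det‖ ^ 2 *
            Real.exp (-(∑ p, Complex.normSq (z p))) : ℝ) : ℂ) =
      ∑ σ : Equiv.Perm (Fin n), ∑ τ : Equiv.Perm (Fin n),
        (((Equiv.Perm.sign σ : ℤ) : ℂ) * ((Equiv.Perm.sign τ : ℤ) : ℂ)) *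
          ∏ p : Fin n × Fin n, ginF (σ p.2 = p.1) (τ p.2 = p.1) (z p) := by
  simp only [gin_prod]
  rw [Complex.ofReal_mul, Complex.ofReal_pow, ← Complex.mul_conj', Matrix.det_apply', map_sum,
    Finset.sum_mul_sum, Finset.sum_mul]
  refine Finset.sum_congr rfl fun σ _ => ?_
  rw [Finset.sum_mul]
  refine Finset.sum_congr rfl fun τ _ => ?_
  simp only [Matrix.of_apply, map_mul, map_prod, map_intCast]
  ring

/-- In the Segal–Bargmann space of `ℂ^{n×n}` with Gaussian measure
`π^{-n²} e^{-Tr(z*z)} dz` (the complex Ginibre ensemble), the squared norm of the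
determinant function equals `n!`: `E|λ₁(z)⋯λₙ(z)|² = n!`. -/
theorem ginibre_expectation_det_sq (n : ℕ) :
    (Real.pi) ^ (-(n ^ 2 : ℤ)) *
        ∫ z : Fin n × Fin n → ℂ,
          ‖(Matrix.of fun i j : Fin n => z (i, j)).det‖ ^ 2 *
            Real.exp (-(∑ p, Complex.normSq (z p))) = (Nat.factorial n : ℝ) := by
  have key : ∫ z : Fin n × Fin n → ℂ,
          ‖(Matrix.of fun i j : Fin n => z (i, j)).det‖ ^ 2 *
            Real.exp (-(∑ p, Complex.normSq (z p))) = (Nat.factorial n : ℝ) * Real.pi ^ (n ^ 2) := by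
    apply Complex.ofReal_injective
    rw [← integral_complex_ofReal]
    simp only [gin_expand]
    have hI : ∀ σ τ : Equiv.Perm (Fin n), Integrable (fun z : Fin n × Fin n → ℂ =>
        (((Equiv.Perm.sign σ : ℤ) : ℂ) * ((Equiv.Perm.sign τ : ℤ) : ℂ)) *
          ∏ p : Fin n × Fin n, ginF (σ p.2 = p.1) (τ p.2 = p.1) (z p)) := by
      intro σ τ
      exact (Integrable.fintype_prod
        (f := fun p : Fin n × Fin n => ginF (σ p.2 = p.1) (τ p.2 = p.1))
        (fun p => ginF_able _ _)).const_mul _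
    rw [integral_finsetSum _ (fun σ _ => integrable_finsetSum _ (fun τ _ => hI σ τ))]
    simp_rw [integral_finsetSum _ (fun τ _ => hI _ τ), integral_const_mul, gin_integral]
    have hs : ∀ σ : Equiv.Perm (Fin n),
        ((Equiv.Perm.sign σ : ℤ) : ℂ) * ((Equiv.Perm.sign σ : ℤ) : ℂ) = 1 := by
      intro σ
      rw [← Int.cast_mul, ← Units.val_mul, Int.units_mul_self]
      simp
    simp [hs, Fintype.card_perm]
  rw [key, zpow_neg]
  have : (Real.pi : ℝ) ^ ((n : ℤ) ^ 2) = Real.pi ^ (n ^ 2) := by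
    exact_mod_cast zpow_natCast Real.pi (n ^ 2)
  rw [this]
  field_simp
end

section
/- A holomorphic function on the n×n complex matrices that is invariant under conjugation by all unitary matrices and vanishes on all diagonal matrices with distinct entries vanishes identically. -/
attribute [local instance] Matrix.normedAddCommGroup Matrix.normedSpace

/-- By continuity, `F` vanishes on all diagonal matrices. -/
theorem aux_diag (n : ℕ)
    (F : Matrix (Fin n) (Fin n) ℂ → ℂ) (hF : Continuous F)
    (hD : ∀ d : Fin n → ℂ, Function.Injective d → F (Matrix.diagonal d) = 0)
    (d : Fin n → ℂ) : F (Matrix.diagonal d) = 0 := by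
  let e : Fin n → ℂ := fun i => ((i : ℕ) : ℂ)
  let g : ℂ → ℂ := fun w => F (Matrix.diagonal (fun i => d i + w * e i))
  have hg : Continuous g := by
    refine hF.comp (Continuous.matrix_diagonal ?_)
    fun_prop
  let S : Set ℂ := Set.range (fun p : Fin n × Fin n => (d p.1 - d p.2) / (e p.2 - e p.1))
  have hS : Dense Sᶜ := (Set.finite_range _).countable.dense_compl ℂ
  have h0 : g = fun _ => 0 := by
    refine Continuous.ext_on hS hg continuous_const ?_
    intro w hw
    refine hD _ ?_
    intro i j hij
    by_contra hne
    apply hw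
    refine ⟨(i, j), ?_⟩
    have hne' : e j - e i ≠ 0 := by
      intro h
      apply hne
      have h2 : ((j : ℕ) : ℂ) = ((i : ℕ) : ℂ) := sub_eq_zero.mp h
      exact (Fin.ext (Nat.cast_injective h2)).symm
    simp only at hij ⊢
    rw [div_eq_iff hne']
    linear_combination hij
  have := congrFun h0 0
  simpa [g] using this

/-- `F` vanishes on Hermitian matrices. -/
theorem aux_herm (n : ℕ)
    (F : Matrix (Fin n) (Fin n) ℂ → ℂ) (hF : Continuous F)
    (hU : ∀ u : Matrix.unitaryGroup (Fin n) ℂ, ∀ z,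
      F ((↑(u⁻¹) : Matrix (Fin n) (Fin n) ℂ) * z * (↑u : Matrix (Fin n) (Fin n) ℂ)) = F z)
    (hD : ∀ d : Fin n → ℂ, Function.Injective d → F (Matrix.diagonal d) = 0)
    (A : Matrix (Fin n) (Fin n) ℂ) (hA : A.IsHermitian) : F A = 0 := by
  have h := hA.conjStarAlgAut_star_eigenvectorUnitary
  rw [Unitary.conjStarAlgAut_star_apply] at h
  rw [← hU hA.eigenvectorUnitary A]
  have h2 : ((hA.eigenvectorUnitary⁻¹ : Matrix.unitaryGroup (Fin n) ℂ) :
      Matrix (Fin n) (Fin n) ℂ) = star (hA.eigenvectorUnitary : Matrix (Fin n) (Fin n) ℂ) := rfl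
  rw [h2, h]
  exact aux_diag n F hF hD _

/-- A holomorphic function on `M_n(ℂ)` invariant under unitary conjugation which
vanishes on all diagonal matrices with pairwise distinct entries vanishes identically. -/
theorem unitary_invariant_holomorphic_vanishing_on_Dreg_eq_zero (n : ℕ)
    (F : Matrix (Fin n) (Fin n) ℂ → ℂ) (hF : Differentiable ℂ F)
    (hU : ∀ u : Matrix.unitaryGroup (Fin n) ℂ, ∀ z,
      F ((↑(u⁻¹) : Matrix (Fin n) (Fin n) ℂ) * z * (↑u : Matrix (Fin n) (Fin n) ℂ)) = F z)
    (hD : ∀ d : Fin n → ℂ, Function.Injective d → F (Matrix.diagonal d) = 0) :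
    ∀ z, F z = 0 := by
  intro z
  have hz := realPart_add_I_smul_imaginaryPart z
  set h : Matrix (Fin n) (Fin n) ℂ := (realPart z : Matrix (Fin n) (Fin n) ℂ) with hh
  set k : Matrix (Fin n) (Fin n) ℂ := (imaginaryPart z : Matrix (Fin n) (Fin n) ℂ) with hk
  have hhH : star h = h := (realPart z).2
  have hkH : star k = k := (imaginaryPart z).2
  let g : ℂ → ℂ := fun w => F (h + w • k)
  have hg : Differentiable ℂ g := by
    refine hF.comp ?_
    fun_prop
  have hreal : ∀ t : ℝ, g (t : ℂ) = 0 := by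
    intro t
    refine aux_herm n F hF.continuous hU hD _ ?_
    change star (h + (t : ℂ) • k) = _
    rw [star_add, star_smul, hhH, hkH]
    simp
  have han : AnalyticOnNhd ℂ g Set.univ := fun w _ => hg.analyticAt w
  have hfreq : ∃ᶠ w in nhdsWithin (0 : ℂ) {0}ᶜ, g w = 0 := by
    have ht : Filter.Tendsto (fun t : ℝ => (t : ℂ)) (nhdsWithin (0 : ℝ) {0}ᶜ)
        (nhdsWithin (0 : ℂ) {0}ᶜ) := by
      refine tendsto_nhdsWithin_iff.2 ⟨?_, ?_⟩
      · exact (Complex.continuous_ofReal.tendsto' 0 0 (by simp)).mono_left nhdsWithin_le_nhds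
      · filter_upwards [self_mem_nhdsWithin] with t ht
        simpa using ht
    exact ht.frequently (Filter.Frequently.of_forall hreal)
  have := han.eqOn_zero_of_preconnected_of_frequently_eq_zero isPreconnected_univ
    (Set.mem_univ 0) hfreq (Set.mem_univ Complex.I)
  rw [← hz]
  exact this
end

section
/- The HCIZ kernel identity holds: for real diagonal matrices A = diag(a₁,…,aₙ), B = diag(b₁,…,bₙ) with a₁ < ⋯ < aₙ and b₁ < ⋯ < bₙ, the integral ∫_{U(n)} e^{Tr(uAu⁻¹B)} du equals (∏_{p=1}^{n−1} p!) · det[e^{a_i b_j}]_{i,j=1}^n / (Δ(A) Δ(B)), where Δ(A) = ∏_{i<j}(a_j − a_i). -/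
open MeasureTheory

noncomputable instance unitaryGroupMeasurableSpace (n : ℕ) :
    MeasurableSpace (Matrix.unitaryGroup (Fin n) ℂ) := borel _

instance unitaryGroupBorelSpace (n : ℕ) :
    BorelSpace (Matrix.unitaryGroup (Fin n) ℂ) := ⟨rfl⟩

set_option linter.unusedSimpArgs false

namespace HCIZ

open scoped Matrix.Norms.Operator

abbrev UG (n : ℕ) := Matrix.unitaryGroup (Fin n) ℂ
abbrev MM (n : ℕ) := Matrix (Fin n) (Fin n) ℂ

instance instCompactUG (n : ℕ) : CompactSpace (UG n) := by
  refine (isCompact_iff_compactSpace (s := (Matrix.unitaryGroup (Fin n) ℂ : Set (MM n)))).1 ?_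
  have hc : IsClosed ((Matrix.unitaryGroup (Fin n) ℂ : Set (MM n))) := by
    have : (Matrix.unitaryGroup (Fin n) ℂ : Set (MM n)) = {A | A * star A = 1} := by
      ext A; exact Matrix.mem_unitaryGroup_iff
    rw [this]
    exact isClosed_eq (by fun_prop) (by fun_prop)
  have hp : IsCompact (Set.univ.pi fun _ : Fin n => Set.univ.pi fun _ : Fin n =>
      Metric.closedBall (0 : ℂ) 1) :=
    isCompact_univ_pi fun _ => isCompact_univ_pi fun _ => isCompact_closedBall _ _
  refine hp.of_isClosed_subset hc ?_
  intro A hA i _ j _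
  simpa using entry_norm_bound_of_unitary hA i j

theorem hasDerivAt_param {𝕜 : Type*} [RCLike 𝕜] {K : Type*} [TopologicalSpace K] [CompactSpace K]
    [MeasurableSpace K] [BorelSpace K] (μ : Measure K) [IsFiniteMeasure μ]
    [NormedSpace 𝕜 ℂ]
    (f f' : 𝕜 → K → ℂ) (hf : ∀ t, Continuous (f t)) (hf' : Continuous (Function.uncurry f'))
    (h : ∀ t u, HasDerivAt (fun s => f s u) (f' t u) t) (t₀ : 𝕜) :
    HasDerivAt (fun t => ∫ u, f t u ∂μ) (∫ u, f' t₀ u ∂μ) t₀ := by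
  have hf'c : ∀ t, Continuous (f' t) := fun t => hf'.comp (by fun_prop : Continuous fun u => (t, u))
  have hK : IsCompact ((Metric.closedBall t₀ 1) ×ˢ (Set.univ : Set K)) :=
    (isCompact_closedBall _ _).prod isCompact_univ
  obtain ⟨C, hC⟩ := hK.exists_bound_of_continuousOn hf'.continuousOn
  refine (hasDerivAt_integral_of_dominated_loc_of_deriv_le (bound := fun _ => C)
    (s := Metric.closedBall t₀ 1) (Metric.closedBall_mem_nhds _ one_pos) ?_ ?_ ?_ ?_ ?_ ?_).2
  · exact Filter.Eventually.of_forall fun t => (hf t).aestronglyMeasurable_of_compactSpace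
  · exact (hf t₀).integrable_of_hasCompactSupport (HasCompactSupport.of_compactSpace _)
  · exact (hf'c t₀).aestronglyMeasurable_of_compactSpace
  · exact Filter.Eventually.of_forall fun u t ht => hC (t, u) ⟨ht, Set.mem_univ _⟩
  · exact integrable_const _
  · exact Filter.Eventually.of_forall fun u t _ => h t u

theorem integrable_cont {n : ℕ} (μ : Measure (UG n)) [IsFiniteMeasure μ] {f : UG n → ℂ}
    (hf : Continuous f) : Integrable f μ :=
  hf.integrable_of_hasCompactSupport (HasCompactSupport.of_compactSpace _)

/-- The matrix `X(u) = u diag(l) u*`. -/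
noncomputable def XX {n : ℕ} (l : Fin n → ℂ) (u : UG n) : MM n :=
  (u : MM n) * Matrix.diagonal l * star (u : MM n)

theorem continuous_XX {n : ℕ} (l : Fin n → ℂ) : Continuous (XX l) := by
  unfold XX; fun_prop

theorem XX_mul {n : ℕ} (l : Fin n → ℂ) (g u : UG n) :
    XX l (g * u) = (g : MM n) * XX l u * star (g : MM n) := by
  simp [XX, mul_assoc]

noncomputable def cur {n : ℕ} (Y : MM n) (t : ℝ) (X : MM n) : MM n :=
  NormedSpace.exp (t • Y) * X * NormedSpace.exp (t • (-Y))

noncomputable def cur' {n : ℕ} (Y : MM n) (t : ℝ) (X : MM n) : MM n :=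
  NormedSpace.exp (t • Y) * (Y * X - X * Y) * NormedSpace.exp (t • (-Y))

theorem cont_exp_smul {n : ℕ} (Z : MM n) : Continuous fun t : ℝ => NormedSpace.exp (t • Z) :=
  continuous_iff_continuousAt.2 fun t => (hasDerivAt_exp_smul_const (𝕂 := ℝ) Z t).continuousAt

theorem cur_hasDeriv {n : ℕ} (Y : MM n) (t : ℝ) (X : MM n) :
    HasDerivAt (fun s => cur Y s X) (cur' Y t X) t := by
  have h1 := hasDerivAt_exp_smul_const (𝕂 := ℝ) Y t
  have h2 := hasDerivAt_exp_smul_const' (𝕂 := ℝ) (-Y) t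
  have := (h1.mul_const X).mul h2
  have e : cur' Y t X = NormedSpace.exp (t • Y) * Y * X * NormedSpace.exp (t • (-Y)) +
      NormedSpace.exp (t • Y) * X * (-Y * NormedSpace.exp (t • (-Y))) := by
    unfold cur'
    noncomm_ring
  rw [e]
  exact this

theorem cur_const {n : ℕ} (μ : Measure (UG n)) [μ.IsHaarMeasure] [IsProbabilityMeasure μ]
    (l : Fin n → ℂ) (Ψ : MM n → ℂ) (Y : MM n) (hY : star Y = -Y) (t : ℝ) :
    ∫ u, Ψ (cur Y t (XX l u)) ∂μ = ∫ u, Ψ (XX l u) ∂μ := by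
  have hsk : star (t • Y) = -(t • Y) := by rw [star_smul, hY]; simp
  have hst : star (NormedSpace.exp (t • Y)) = NormedSpace.exp (-(t • Y)) := by
    rw [← hsk]; exact (Matrix.exp_conjTranspose (t • Y)).symm
  have hun : NormedSpace.exp (t • Y) ∈ Matrix.unitaryGroup (Fin n) ℂ := by
    rw [Matrix.mem_unitaryGroup_iff, hst,
      ← Matrix.exp_add_of_commute _ _ (Commute.neg_right (Commute.refl (t • Y)))]
    simp
  let g : UG n := ⟨NormedSpace.exp (t • Y), hun⟩
  have hg : ∀ u, cur Y t (XX l u) = XX l (g * u) := by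
    intro u
    rw [XX_mul]
    simp only [cur, g]
    rw [hst, smul_neg]
  simp_rw [hg]
  exact integral_mul_left_eq_self (fun u => Ψ (XX l u)) g

theorem ward_skew {n : ℕ} (μ : Measure (UG n)) [μ.IsHaarMeasure] [IsProbabilityMeasure μ]
    (l : Fin n → ℂ) (Ψ : MM n → ℂ) (hΨ : ContDiff ℂ 1 Ψ) (Y : MM n) (hY : star Y = -Y) :
    ∫ u, fderiv ℂ Ψ (XX l u) (Y * XX l u - XX l u * Y) ∂μ = 0 := by
  have hX := continuous_XX l
  have hp : Continuous fun p : ℝ × UG n => (p.1, XX l p.2) := by fun_prop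
  have h1 : Continuous fun p : ℝ × UG n => cur Y p.1 (XX l p.2) := by
    have := cont_exp_smul Y; have := cont_exp_smul (-Y)
    unfold cur; fun_prop
  have h2 : Continuous fun p : ℝ × UG n => cur' Y p.1 (XX l p.2) := by
    have := cont_exp_smul Y; have := cont_exp_smul (-Y)
    unfold cur'; fun_prop
  have hΨc := hΨ.continuous
  have hΨd := hΨ.continuous_fderiv one_ne_zero
  have hc0 : ∀ t : ℝ, Continuous fun u : UG n => Ψ (cur Y t (XX l u)) := by
    intro t
    unfold cur; fun_prop
  have hc1 : Continuous fun p : ℝ × UG n =>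
      fderiv ℂ Ψ (cur Y p.1 (XX l p.2)) (cur' Y p.1 (XX l p.2)) := by
    fun_prop
  have hder := hasDerivAt_param (𝕜 := ℝ) μ (fun t u => Ψ (cur Y t (XX l u)))
    (fun t u => fderiv ℂ Ψ (cur Y t (XX l u)) (cur' Y t (XX l u)))
    hc0 hc1
    (by
      intro t u
      have h1 := (hΨ.differentiable one_ne_zero (cur Y t (XX l u))).hasFDerivAt
      exact (h1.restrictScalars ℝ).comp_hasDerivAt t (cur_hasDeriv Y t (XX l u))) 0
  simp_rw [cur_const μ l Ψ Y hY] at hder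
  have := hder.unique (hasDerivAt_const (0 : ℝ) _)
  simpa [cur, cur'] using this

theorem ward {n : ℕ} (μ : Measure (UG n)) [μ.IsHaarMeasure] [IsProbabilityMeasure μ]
    (l : Fin n → ℂ) (Ψ : MM n → ℂ) (hΨ : ContDiff ℂ 1 Ψ) (Y : MM n) :
    ∫ u, fderiv ℂ Ψ (XX l u) (Y * XX l u - XX l u * Y) ∂μ = 0 := by
  let Y1 : MM n := (1/2 : ℂ) • (Y - star Y)
  let Y2 : MM n := (Complex.I/2) • (Y + star Y)
  have e : Y = Y1 - Complex.I • Y2 := by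
    simp only [Y1, Y2, smul_smul]
    have : Complex.I * (Complex.I / 2) = -(1/2) := by
      rw [← mul_div_assoc, Complex.I_mul_I]; ring
    rw [this]; module
  have h1 : star Y1 = -Y1 := by
    simp only [Y1, star_smul, star_sub, star_star]
    have : star (1/2 : ℂ) = 1/2 := by simp
    rw [this]; module
  have h2 : star Y2 = -Y2 := by
    simp only [Y2, star_smul, star_add, star_star]
    have : star (Complex.I/2 : ℂ) = -(Complex.I/2) := by simp [neg_div]
    rw [this]; module
  have w1 := ward_skew μ l Ψ hΨ Y1 h1
  have w2 := ward_skew μ l Ψ hΨ Y2 h2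
  have hX := continuous_XX l
  have hInt : ∀ Z : MM n, Integrable (fun u => fderiv ℂ Ψ (XX l u) (Z * XX l u - XX l u * Z)) μ := by
    intro Z
    apply integrable_cont
    exact ((hΨ.continuous_fderiv one_ne_zero).comp hX).clm_apply (by fun_prop)
  have key : ∀ u, fderiv ℂ Ψ (XX l u) (Y * XX l u - XX l u * Y) =
      fderiv ℂ Ψ (XX l u) (Y1 * XX l u - XX l u * Y1) -
      Complex.I • fderiv ℂ Ψ (XX l u) (Y2 * XX l u - XX l u * Y2) := by
    intro u
    rw [← map_smul, ← map_sub]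
    congr 1
    conv_lhs => rw [e]
    simp only [sub_mul, mul_sub, smul_mul_assoc, mul_smul_comm, smul_sub]
    abel
  simp_rw [key]
  rw [integral_sub (hInt Y1) (Integrable.fun_smul _ (hInt Y2)), integral_smul, w1, w2]
  simp

/-- Replace the rows of `X` outside `S` by those of the identity. -/
noncomputable def ZS {n : ℕ} (S : Finset (Fin n)) (X : MM n) : MM n :=
  Matrix.of fun k => if k ∈ S then X k else Pi.single k 1

theorem ZS_erase {n : ℕ} (S : Finset (Fin n)) (X : MM n) (i : Fin n) :
    (ZS S X).updateRow i (Pi.single i 1) = ZS (S.erase i) X := by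
  ext a b
  by_cases h : a = i
  · subst h; simp [ZS]
  · simp [ZS, Matrix.updateRow_ne h, h]

theorem G_conj_mat {n : ℕ} (S : Finset (Fin n)) {i k : Fin n} (hi : i ∈ S) (hk : k ∈ S)
    (hik : i ≠ k) (X : MM n) (t : ℂ) :
    (ZS S (Matrix.transvection k i t * X * Matrix.transvection k i (-t))).updateRow i
        (Pi.single k 1) =
      (((ZS S X).updateRow i (Pi.single k 1 + t • Pi.single i 1)).updateRow k (X k + t • X i)) *
        Matrix.transvection k i (-t) := by
  ext a b
  have hki : k ≠ i := hik.symm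
  by_cases hb : b = i
  · subst hb
    rw [Matrix.mul_transvection_apply_same]
    by_cases ha : a = b
    · subst ha
      simp [Matrix.updateRow_ne hik, hik, hki]
    · rw [Matrix.updateRow_ne ha]
      by_cases hak : a = k
      · subst hak
        simp [ZS, hk, Matrix.mul_transvection_apply_same, Matrix.transvection_mul_apply_same]
      · rw [Matrix.updateRow_ne hak, Matrix.updateRow_ne ha]
        by_cases haS : a ∈ S
        · simp [ZS, haS, Matrix.mul_transvection_apply_same,
            Matrix.transvection_mul_apply_of_ne _ _ _ _ hak]
        · simp [ZS, haS, hak, Ne.symm hak]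
  · rw [Matrix.mul_transvection_apply_of_ne _ _ _ _ hb]
    by_cases ha : a = i
    · subst ha
      simp [Matrix.updateRow_ne hik, hb]
    · rw [Matrix.updateRow_ne ha]
      by_cases hak : a = k
      · subst hak
        simp [ZS, hk, Matrix.mul_transvection_apply_of_ne _ _ _ _ hb,
          Matrix.transvection_mul_apply_same]
      · rw [Matrix.updateRow_ne hak, Matrix.updateRow_ne ha]
        by_cases haS : a ∈ S
        · simp [ZS, haS, Matrix.mul_transvection_apply_of_ne _ _ _ _ hb,
            Matrix.transvection_mul_apply_of_ne _ _ _ _ hak]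
        · simp [ZS, haS]

theorem G_conj {n : ℕ} (S : Finset (Fin n)) {i k : Fin n} (hi : i ∈ S) (hk : k ∈ S)
    (hik : i ≠ k) (X : MM n) : ∃ g : ℂ, ∀ t : ℂ,
    ((ZS S (Matrix.transvection k i t * X * Matrix.transvection k i (-t))).updateRow i
        (Pi.single k 1)).det =
      ((ZS S X).updateRow i (Pi.single k 1)).det +
        t * ((ZS (S.erase i) X).det - (ZS (S.erase k) X).det) + t ^ 2 * g := by
  refine ⟨(((ZS S X).updateRow i (Pi.single i 1)).updateRow k (X i)).det, fun t => ?_⟩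
  rw [G_conj_mat S hi hk hik, Matrix.det_mul, Matrix.det_transvection_of_ne _ _ hik.symm, mul_one]
  have hki : k ≠ i := hik.symm
  have e1 : ((ZS S X).updateRow i (Pi.single k 1)).updateRow k (X k) =
      (ZS S X).updateRow i (Pi.single k 1) := by
    ext a b
    by_cases ha : a = k
    · subst ha; simp [Matrix.updateRow_ne hki, ZS, hk]
    · rw [Matrix.updateRow_ne ha]
  have e2 : ((ZS S X).updateRow i (Pi.single i 1)).updateRow k (X k) = ZS (S.erase i) X := by
    rw [ZS_erase]
    ext a b
    by_cases ha : a = k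
    · subst ha; simp [ZS, hk, hki]
    · rw [Matrix.updateRow_ne ha]
  have e3 : (((ZS S X).updateRow i (Pi.single k 1)).updateRow k (X i)).det =
      - (ZS (S.erase k) X).det := by
    rw [← ZS_erase]
    have : (((ZS S X).updateRow i (Pi.single k 1)).updateRow k (X i)) =
        ((ZS S X).updateRow k (Pi.single k 1)).submatrix (Equiv.swap i k) id := by
      ext a b
      by_cases ha : a = k
      · subst ha; simp [Matrix.updateRow_ne hik, ZS, hi]
      · rw [Matrix.updateRow_ne ha]
        by_cases ha' : a = i
        · subst ha'; simp
        · rw [Matrix.updateRow_ne ha']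
          simp [Equiv.swap_apply_of_ne_of_ne ha' ha, Matrix.updateRow_ne ha]
    rw [this, Matrix.det_permute]
    simp [Equiv.Perm.sign_swap hik]
  simp only [Matrix.det_updateRow_add, Matrix.det_updateRow_smul]
  rw [Matrix.updateRow_comm _ hik, Matrix.updateRow_comm _ hik]
  simp only [Matrix.det_updateRow_add, Matrix.det_updateRow_smul]
  simp only [Matrix.updateRow_comm _ hki]
  rw [e1, e2, e3]
  ring

theorem diag_conj {n : ℕ} {i k : Fin n} (hik : i ≠ k) (X : MM n) (t : ℂ) (j : Fin n) :
    (Matrix.transvection k i t * X * Matrix.transvection k i (-t)) j j =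
      X j j + t * ((if j = k then X i k else 0) - (if j = i then X i k else 0)) := by
  have hki : k ≠ i := hik.symm
  by_cases hj : j = i
  · subst hj
    rw [Matrix.mul_transvection_apply_same, Matrix.transvection_mul_apply_of_ne _ _ _ _ hik,
      Matrix.transvection_mul_apply_of_ne _ _ _ _ hik]
    simp [hik]
  · rw [Matrix.mul_transvection_apply_of_ne _ _ _ _ hj]
    by_cases hjk : j = k
    · subst hjk
      rw [Matrix.transvection_mul_apply_same]
      simp [hj]
    · rw [Matrix.transvection_mul_apply_of_ne _ _ _ _ hjk]
      simp [hj, hjk]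

noncomputable def wt {n : ℕ} (c : Fin n → ℂ) (X : MM n) : ℂ := Complex.exp (∑ j, c j * X j j)

theorem wt_conj {n : ℕ} (c : Fin n → ℂ) {i k : Fin n} (hik : i ≠ k) (X : MM n) (t : ℂ) :
    wt c (Matrix.transvection k i t * X * Matrix.transvection k i (-t)) =
      wt c X * Complex.exp (t * ((c k - c i) * X i k)) := by
  unfold wt
  rw [← Complex.exp_add]
  congr 1
  simp_rw [diag_conj hik, mul_add, Finset.sum_add_distrib]
  congr 1
  simp only [mul_sub, Finset.sum_sub_distrib]
  simp
  ring

theorem entry_contDiff {n : ℕ} (i j : Fin n) : ContDiff ℂ 1 (fun X : MM n => X i j) :=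
  (LinearMap.toContinuousLinearMap
    ({ toFun := fun X => X i j, map_add' := fun _ _ => rfl, map_smul' := fun _ _ => rfl } :
      MM n →ₗ[ℂ] ℂ)).contDiff

theorem det_contDiff {n : ℕ} (f : MM n → MM n) (h : ∀ i j, ContDiff ℂ 1 (fun X => f X i j)) :
    ContDiff ℂ 1 (fun X => (f X).det) := by
  simp_rw [Matrix.det_apply']
  exact ContDiff.sum fun σ _ => contDiff_const.mul (contDiff_prod fun i _ => h _ _)

theorem ZSdet_contDiff {n : ℕ} (S : Finset (Fin n)) (i k : Fin n) :
    ContDiff ℂ 1 (fun X : MM n => ((ZS S X).updateRow i (Pi.single k 1)).det) := by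
  apply det_contDiff
  intro a b
  by_cases ha : a = i
  · subst ha
    simp only [Matrix.updateRow_self]
    exact contDiff_const
  · simp only [Matrix.updateRow_ne ha]
    by_cases hS : a ∈ S
    · simp only [ZS, hS, if_true, Matrix.of_apply]
      exact entry_contDiff a b
    · simp only [ZS, hS, if_false, Matrix.of_apply]
      exact contDiff_const

theorem wt_contDiff {n : ℕ} (c : Fin n → ℂ) : ContDiff ℂ 1 (wt c) := by
  unfold wt
  exact (ContDiff.sum fun j _ => contDiff_const.mul (entry_contDiff j j)).cexp

noncomputable def dT {n : ℕ} (T : Finset (Fin n)) (X : MM n) : ℂ := ∏ j ∈ T, X j j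

theorem dT_contDiff {n : ℕ} (T : Finset (Fin n)) : ContDiff ℂ 1 (dT T) := by
  unfold dT
  exact contDiff_prod fun j _ => entry_contDiff j j

theorem dT_conj {n : ℕ} (T : Finset (Fin n)) {i k : Fin n} (hi : i ∉ T) (hk : k ∉ T)
    (hik : i ≠ k) (X : MM n) (t : ℂ) :
    dT T (Matrix.transvection k i t * X * Matrix.transvection k i (-t)) = dT T X := by
  unfold dT
  refine Finset.prod_congr rfl fun j hj => ?_
  have h1 : j ≠ k := by rintro rfl; exact hk hj
  have h2 : j ≠ i := by rintro rfl; exact hi hj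
  rw [diag_conj hik, if_neg h1, if_neg h2]
  simp

theorem conj_hasDeriv {n : ℕ} (i k : Fin n) (X : MM n) :
    HasDerivAt (fun t : ℂ => Matrix.transvection k i t * X * Matrix.transvection k i (-t))
      (Matrix.single k i 1 * X - X * Matrix.single k i 1) 0 := by
  have e : ∀ t : ℂ, Matrix.transvection k i t = 1 + t • (Matrix.single k i 1 : MM n) := by
    intro t; simp [Matrix.transvection]
  have h1 : HasDerivAt (fun t : ℂ => Matrix.transvection k i t) (Matrix.single k i 1 : MM n) 0 := by
    simp_rw [e]
    have := ((hasDerivAt_id (0 : ℂ)).smul_const (Matrix.single k i 1 : MM n)).const_add (1 : MM n)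
    rw [one_smul] at this
    exact this
  have h2 : HasDerivAt (fun t : ℂ => Matrix.transvection k i (-t))
      (-(Matrix.single k i 1 : MM n)) 0 := by
    simp_rw [e]
    have := ((hasDerivAt_neg (0 : ℂ)).smul_const (Matrix.single k i 1 : MM n)).const_add (1 : MM n)
    rw [neg_smul, one_smul] at this
    exact this
  have := (h1.mul_const X).mul h2
  refine HasDerivAt.congr_deriv this ?_
  simp only [e]
  simp [sub_eq_add_neg]

theorem ward_G {n : ℕ} (μ : Measure (UG n)) [μ.IsHaarMeasure] [IsProbabilityMeasure μ]
    (l c : Fin n → ℂ) (S T : Finset (Fin n)) (hST : Disjoint S T) {i k : Fin n}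
    (hi : i ∈ S) (hk : k ∈ S) (hik : i ≠ k) :
    ∫ u, (dT T (XX l u) * ((ZS (S.erase i) (XX l u)).det - (ZS (S.erase k) (XX l u)).det
      + (c k - c i) * (XX l u i k * ((ZS S (XX l u)).updateRow i (Pi.single k 1)).det)) *
        wt c (XX l u)) ∂μ = 0 := by
  have hiT : i ∉ T := Finset.disjoint_left.1 hST hi
  have hkT : k ∉ T := Finset.disjoint_left.1 hST hk
  let Ψ : MM n → ℂ := fun X => ((ZS S X).updateRow i (Pi.single k 1)).det * dT T X * wt c X
  have hΨ : ContDiff ℂ 1 Ψ :=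
    ((ZSdet_contDiff S i k).mul (dT_contDiff T)).mul (wt_contDiff c)
  have := ward μ l Ψ hΨ (Matrix.single k i 1)
  rw [← this]
  congr 1
  funext u
  generalize XX l u = X
  have h1 := conj_hasDeriv i k X
  have h0 : Matrix.transvection k i (0:ℂ) * X * Matrix.transvection k i (-(0:ℂ)) = X := by simp
  have h2 : HasFDerivAt Ψ (fderiv ℂ Ψ X)
      (Matrix.transvection k i (0:ℂ) * X * Matrix.transvection k i (-(0:ℂ))) := by
    rw [h0]; exact (hΨ.differentiable one_ne_zero X).hasFDerivAt
  have h3 := h2.comp_hasDerivAt (0:ℂ) h1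
  obtain ⟨g, hg⟩ := G_conj S hi hk hik X
  have h4 : (Ψ ∘ fun t : ℂ => Matrix.transvection k i t * X * Matrix.transvection k i (-t)) =
      fun t : ℂ => (((ZS S X).updateRow i (Pi.single k 1)).det +
        t * ((ZS (S.erase i) X).det - (ZS (S.erase k) X).det) + t ^ 2 * g) * dT T X *
        (wt c X * Complex.exp (t * ((c k - c i) * X i k))) := by
    funext t
    simp only [Ψ, Function.comp, hg, wt_conj c hik, dT_conj T hiT hkT hik]
  rw [h4] at h3
  have h5 : HasDerivAt (fun t : ℂ => (((ZS S X).updateRow i (Pi.single k 1)).det +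
        t * ((ZS (S.erase i) X).det - (ZS (S.erase k) X).det) + t ^ 2 * g) * dT T X *
        (wt c X * Complex.exp (t * ((c k - c i) * X i k))))
      (((ZS (S.erase i) X).det - (ZS (S.erase k) X).det) * dT T X * wt c X +
        ((ZS S X).updateRow i (Pi.single k 1)).det * dT T X *
          (wt c X * ((c k - c i) * X i k))) 0 := by
    have ha : HasDerivAt (fun t : ℂ => ((ZS S X).updateRow i (Pi.single k 1)).det +
        t * ((ZS (S.erase i) X).det - (ZS (S.erase k) X).det) + t ^ 2 * g)
        ((ZS (S.erase i) X).det - (ZS (S.erase k) X).det) 0 := by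
      have := (((hasDerivAt_id (0:ℂ)).mul_const
        ((ZS (S.erase i) X).det - (ZS (S.erase k) X).det)).const_add
          (((ZS S X).updateRow i (Pi.single k 1)).det)).add
            (((hasDerivAt_id (0:ℂ)).pow 2).mul_const g)
      refine HasDerivAt.congr_deriv this ?_
      simp
    have hb : HasDerivAt (fun t : ℂ => wt c X * Complex.exp (t * ((c k - c i) * X i k)))
        (wt c X * ((c k - c i) * X i k)) 0 := by
      have := (((hasDerivAt_id (0:ℂ)).mul_const ((c k - c i) * X i k)).cexp).const_mul (wt c X)
      simpa using this
    have := (ha.mul_const (dT T X)).mul hb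
    refine HasDerivAt.congr_deriv this ?_
    simp
  have := h3.unique h5
  refine Eq.trans ?_ this.symm
  ring

/-- The symbol matrix. -/
noncomputable def KS {n : ℕ} (S : Finset (Fin n)) (θ c : Fin n → ℂ) : MM n :=
  Matrix.of fun k l => if k ∈ S then
      (if k = l then θ k + ∑ j ∈ S.erase k, (c k - c j)⁻¹
        else if l ∈ S then -(c k - c l)⁻¹ else 0)
    else if k = l then 1 else 0

theorem KS_col {n : ℕ} (S : Finset (Fin n)) (θ c : Fin n → ℂ) (hc : Function.Injective c)
    (k : Fin n) (hk : k ∈ S) :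
    ((KS S θ c).updateCol k (fun j => if j ∈ S then 1 else 0)).det = (KS (S.erase k) θ c).det := by
  set A := (KS S θ c).updateCol k (fun j => if j ∈ S then 1 else 0) with hA
  let A' : MM n := Matrix.of fun i j => if i ∈ S.erase k then A i j - A k j else A i j
  have h1 : A'.det = A.det := by
    refine Matrix.det_eq_of_forall_row_eq_smul_add_const
      (c := fun i => if i ∈ S.erase k then -1 else 0) k (by simp) ?_
    intro i j
    by_cases hi : i ∈ S.erase k <;> simp only [A', Matrix.of_apply, hi, if_true, if_false] <;> ring
  have hcol : A' = A'.updateCol k (Pi.single k 1) := by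
    ext i j
    by_cases hj : j = k
    · subst hj
      rw [Matrix.updateCol_self]
      by_cases hij : i = j
      · subst hij; simp [A', A, hk]
      · by_cases hi : i ∈ S <;> simp [A', A, hij, hi, hk]
    · rw [Matrix.updateCol_ne hj]
  have h2 : A'.det = (A'.updateRow k (Pi.single k 1)).det := by
    rw [← Matrix.adjugate_apply]
    conv_lhs => rw [hcol]
    rw [← Matrix.cramer_apply, Matrix.cramer_eq_adjugate_mulVec]
    simp
  let γ : Fin n → ℂ := fun j => if j ∈ S.erase k then c j - c k else 1
  have hγ : ∀ j, γ j ≠ 0 := by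
    intro j
    by_cases hj : j ∈ S.erase k
    · simp only [γ, hj, if_true]
      exact sub_ne_zero.2 fun h => (Finset.mem_erase.1 hj).1 (hc h)
    · simp only [γ, hj, if_false]
      exact one_ne_zero
  have hne : ∀ i j, i ≠ j → c i - c j ≠ 0 := fun i j h => sub_ne_zero.2 fun h' => h (hc h')
  have h3 : (A'.updateRow k (Pi.single k 1)) * Matrix.diagonal γ =
      Matrix.diagonal γ * KS (S.erase k) θ c := by
    ext i j
    rw [Matrix.mul_diagonal, Matrix.diagonal_mul]
    by_cases hi : i = k
    · subst hi
      rw [Matrix.updateRow_self]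
      by_cases hj : j = i
      · subst hj; simp [KS]
      · simp [KS, hj, Ne.symm hj]
    · rw [Matrix.updateRow_ne hi]
      by_cases hiS : i ∈ S
      · have hie : i ∈ S.erase k := Finset.mem_erase.2 ⟨hi, hiS⟩
        by_cases hj : j = k
        · subst hj
          simp [A', A, hiS, hk, KS, hi, γ]
        · simp only [A', Matrix.of_apply, hie, if_true, A, Matrix.updateCol_ne hj]
          by_cases hij : i = j
          · subst hij
            simp only [KS, Matrix.of_apply, hiS, hk, hie, if_true, Ne.symm hi, if_false]
            have : (S.erase i) = insert k ((S.erase k).erase i) := by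
              ext x; simp only [Finset.mem_insert, Finset.mem_erase]
              constructor
              · rintro ⟨h1, h2⟩
                by_cases hx : x = k
                · exact Or.inl hx
                · exact Or.inr ⟨h1, hx, h2⟩
              · rintro (rfl | ⟨h1, h2, h3⟩)
                · exact ⟨Ne.symm hi, hk⟩
                · exact ⟨h1, h3⟩
            rw [this, Finset.sum_insert (by simp)]
            have e : (c k - c i)⁻¹ = - (c i - c k)⁻¹ := by rw [← inv_neg, neg_sub]
            rw [e]; ring
          · by_cases hjS : j ∈ S
            · have hje : j ∈ S.erase k := Finset.mem_erase.2 ⟨hj, hjS⟩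
              simp only [KS, Matrix.of_apply, hiS, hk, hie, hjS, hje, hij, if_true, Ne.symm hj,
                if_false, γ]
              have a1 := hne i j hij
              have a2 := hne k j (Ne.symm hj)
              field_simp
              ring
            · simp [KS, hiS, hie, hij, hjS, hk, Ne.symm hj]
      · have hie : i ∉ S.erase k := fun h => hiS (Finset.mem_of_mem_erase h)
        by_cases hj : j = k
        · subst hj
          simp [A', hie, A, hiS, KS, hi]
        · simp only [A', Matrix.of_apply, hie, if_false, A, Matrix.updateCol_ne hj]
          by_cases hij : i = j
          · subst hij; simp [KS, hiS, hie, mul_comm]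
          · simp [KS, hiS, hie, hij]
  have h4 := congrArg Matrix.det h3
  rw [Matrix.det_mul, Matrix.det_mul, Matrix.det_diagonal, mul_comm] at h4
  rw [← h1, h2]
  exact mul_left_cancel₀ (Finset.prod_ne_zero_iff.2 fun j _ => hγ j) h4

theorem KS_rec {n : ℕ} (S : Finset (Fin n)) (θ c : Fin n → ℂ) (hc : Function.Injective c)
    (i : Fin n) (hi : i ∈ S) :
    (KS S θ c).det = θ i * (KS (S.erase i) θ c).det + ∑ k ∈ S.erase i, (c i - c k)⁻¹ *
      ((KS (S.erase i) θ c).det - (KS (S.erase k) θ c).det) := by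
  have h := congrFun (Matrix.mulVec_cramer (KS S θ c) (fun j => if j ∈ S then 1 else 0)) i
  simp only [Pi.smul_apply, hi, if_true, smul_eq_mul, mul_one] at h
  rw [← h, Matrix.mulVec, dotProduct]
  have h0 : ∀ k, KS S θ c i k * (KS S θ c).cramer (fun j => if j ∈ S then 1 else 0) k =
      if k ∈ S then KS S θ c i k * (KS (S.erase k) θ c).det else 0 := by
    intro k
    by_cases hk : k ∈ S
    · rw [if_pos hk, Matrix.cramer_apply, KS_col S θ c hc k hk]
    · have : i ≠ k := by rintro rfl; exact hk hi
      simp [hk, KS, hi, this]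
  simp_rw [h0]
  rw [Finset.sum_ite_mem, Finset.univ_inter, ← Finset.add_sum_erase _ _ hi]
  have h1 : ∀ k ∈ S.erase i, KS S θ c i k * (KS (S.erase k) θ c).det =
      -((c i - c k)⁻¹ * (KS (S.erase k) θ c).det) := by
    intro k hk
    have hk' := Finset.mem_erase.1 hk
    simp [KS, hi, hk'.2, Ne.symm hk'.1]
  rw [Finset.sum_congr rfl h1]
  have h2 : KS S θ c i i = θ i + ∑ j ∈ S.erase i, (c i - c j)⁻¹ := by simp [KS, hi]
  rw [h2]
  simp only [mul_sub, Finset.sum_sub_distrib, Finset.sum_neg_distrib, ← Finset.sum_mul]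
  ring

theorem ZS_expand {n : ℕ} (S : Finset (Fin n)) (X : MM n) (i : Fin n) (hi : i ∈ S) :
    (ZS S X).det = X i i * (ZS (S.erase i) X).det +
      ∑ k ∈ S.erase i, X i k * ((ZS S X).updateRow i (Pi.single k 1)).det := by
  rw [Matrix.det_eq_sum_mul_adjugate_row _ i]
  simp_rw [Matrix.adjugate_apply]
  have h0 : ∀ k, ZS S X i k * ((ZS S X).updateRow i (Pi.single k 1)).det =
      if k ∈ S then X i k * ((ZS S X).updateRow i (Pi.single k 1)).det else 0 := by
    intro k
    have e : ZS S X i k = X i k := by simp [ZS, hi]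
    by_cases hk : k ∈ S
    · rw [if_pos hk, e]
    · have hik : i ≠ k := by rintro rfl; exact hk hi
      rw [if_neg hk, Matrix.det_zero_of_row_eq hik, mul_zero]
      funext j
      rw [Matrix.updateRow_self, Matrix.updateRow_ne (Ne.symm hik)]
      simp [ZS, hk]
  simp_rw [h0]
  rw [Finset.sum_ite_mem, Finset.univ_inter, ← Finset.add_sum_erase _ _ hi, ZS_erase]

/-- Weighted average over the orbit. -/
noncomputable def av {n : ℕ} (μ : Measure (UG n)) (l c : Fin n → ℂ) (f : MM n → ℂ) : ℂ :=
  ∫ u, f (XX l u) * wt c (XX l u) ∂μ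

theorem av_int {n : ℕ} (μ : Measure (UG n)) [IsProbabilityMeasure μ] (l c : Fin n → ℂ)
    {f : MM n → ℂ} (hf : ContDiff ℂ 1 f) :
    Integrable (fun u => f (XX l u) * wt c (XX l u)) μ := by
  apply integrable_cont
  have h1 := hf.continuous
  have h2 := (wt_contDiff c).continuous
  have h3 := continuous_XX l
  fun_prop

theorem av_add {n : ℕ} (μ : Measure (UG n)) [IsProbabilityMeasure μ] (l c : Fin n → ℂ)
    {f g : MM n → ℂ} (hf : ContDiff ℂ 1 f) (hg : ContDiff ℂ 1 g) :
    av μ l c (fun X => f X + g X) = av μ l c f + av μ l c g := by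
  unfold av
  rw [← integral_add (av_int μ l c hf) (av_int μ l c hg)]
  simp only [add_mul]

theorem av_sub {n : ℕ} (μ : Measure (UG n)) [IsProbabilityMeasure μ] (l c : Fin n → ℂ)
    {f g : MM n → ℂ} (hf : ContDiff ℂ 1 f) (hg : ContDiff ℂ 1 g) :
    av μ l c (fun X => f X - g X) = av μ l c f - av μ l c g := by
  unfold av
  rw [← integral_sub (av_int μ l c hf) (av_int μ l c hg)]
  simp only [sub_mul]

theorem av_mul {n : ℕ} (μ : Measure (UG n)) (l c : Fin n → ℂ) (r : ℂ) (f : MM n → ℂ) :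
    av μ l c (fun X => r * f X) = r * av μ l c f := by
  unfold av
  rw [← integral_const_mul]
  simp only [mul_assoc]

theorem av_sum {n : ℕ} (μ : Measure (UG n)) [IsProbabilityMeasure μ] (l c : Fin n → ℂ)
    {ι : Type*} (s : Finset ι)
    {f : ι → MM n → ℂ} (hf : ∀ i ∈ s, ContDiff ℂ 1 (f i)) :
    av μ l c (fun X => ∑ i ∈ s, f i X) = ∑ i ∈ s, av μ l c (f i) := by
  unfold av
  rw [← integral_finsetSum s fun i hi => av_int μ l c (hf i hi)]
  simp only [Finset.sum_mul]

theorem ZS_contDiff {n : ℕ} (S : Finset (Fin n)) :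
    ContDiff ℂ 1 (fun X : MM n => (ZS S X).det) := by
  apply det_contDiff
  intro a b
  by_cases hS : a ∈ S
  · simp only [ZS, hS, if_true, Matrix.of_apply]
    exact entry_contDiff a b
  · simp only [ZS, hS, if_false, Matrix.of_apply]
    exact contDiff_const

theorem KS_contDiff {n : ℕ} (S : Finset (Fin n)) (c : Fin n → ℂ) :
    ContDiff ℂ 1 (fun X : MM n => (KS S (fun i => X i i) c).det) := by
  apply det_contDiff
  intro a b
  simp only [KS, Matrix.of_apply]
  split_ifs
  · exact (entry_contDiff a a).add contDiff_const
  all_goals exact contDiff_const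

theorem dT_insert {n : ℕ} (T : Finset (Fin n)) (i : Fin n) (hi : i ∉ T) (X : MM n) :
    dT (insert i T) X = dT T X * X i i := by
  unfold dT
  rw [Finset.prod_insert hi, mul_comm]

theorem star_eq {n : ℕ} (μ : Measure (UG n)) [μ.IsHaarMeasure] [IsProbabilityMeasure μ]
    (l c : Fin n → ℂ) (hc : Function.Injective c) (S : Finset (Fin n)) :
    ∀ T : Finset (Fin n), Disjoint S T →
    av μ l c (fun X => dT T X * (ZS S X).det) =
      av μ l c (fun X => dT T X * (KS S (fun i => X i i) c).det) := by
  induction S using Finset.strongInduction with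
  | H S ih =>
  intro T hST
  rcases S.eq_empty_or_nonempty with rfl | ⟨i, hi⟩
  · have h1 : ∀ X : MM n, ZS ∅ X = 1 := by
      intro X; ext a b; simp [ZS, Matrix.one_apply, Pi.single_apply, eq_comm]
    have h2 : ∀ θ : Fin n → ℂ, KS ∅ θ c = 1 := by
      intro X; ext a b; simp [KS, Matrix.one_apply]
    simp_rw [h1, h2]
  · have hiT : i ∉ T := Finset.disjoint_left.1 hST hi
    have hD : ∀ k, Disjoint (S.erase k) T := fun k =>
      Finset.disjoint_of_subset_left (Finset.erase_subset _ _) hST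
    have hDi : Disjoint (S.erase i) (insert i T) := by
      rw [Finset.disjoint_insert_right]; exact ⟨by simp, hD i⟩
    have ih0 := ih (S.erase i) (Finset.erase_ssubset hi) (insert i T) hDi
    have ih1 := ih (S.erase i) (Finset.erase_ssubset hi) T (hD i)
    have ihk := fun k (hk : k ∈ S) => ih (S.erase k) (Finset.erase_ssubset hk) T (hD k)
    have cd := dT_contDiff T
    have cd' := dT_contDiff (insert i T)
    have eL : (fun X : MM n => dT T X * (ZS S X).det) = fun X =>
        dT (insert i T) X * (ZS (S.erase i) X).det + ∑ k ∈ S.erase i,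
          dT T X * (X i k * ((ZS S X).updateRow i (Pi.single k 1)).det) := by
      funext X
      rw [ZS_expand S X i hi, dT_insert T i hiT, mul_add, Finset.mul_sum]
      ring
    have eR : (fun X : MM n => dT T X * (KS S (fun i => X i i) c).det) = fun X =>
        dT (insert i T) X * (KS (S.erase i) (fun i => X i i) c).det + ∑ k ∈ S.erase i,
          (c i - c k)⁻¹ * (dT T X * (KS (S.erase i) (fun i => X i i) c).det -
            dT T X * (KS (S.erase k) (fun i => X i i) c).det) := by
      funext X
      rw [KS_rec S _ c hc i hi, dT_insert T i hiT, mul_add, Finset.mul_sum]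
      congr 1
      · ring
      · exact Finset.sum_congr rfl fun k _ => by ring
    rw [eL, eR, av_add, av_add, ih0, av_sum, av_sum]
    · congr 1
      refine Finset.sum_congr rfl fun k hk => ?_
      have hk' := Finset.mem_erase.1 hk
      rw [av_mul, av_sub _ _ _ (cd.mul (KS_contDiff _ c)) (cd.mul (KS_contDiff _ c)),
        ← ih1, ← ihk k hk'.2, ← av_sub _ _ _ (cd.mul (ZS_contDiff _)) (cd.mul (ZS_contDiff _))]
      have hw := ward_G μ l c S T hST hi hk'.2 (Ne.symm hk'.1)
      have hne : c i - c k ≠ 0 := sub_ne_zero.2 fun h => hk'.1 (hc h).symm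
      have hw' : av μ l c (fun X => (dT T X * (ZS (S.erase i) X).det -
          dT T X * (ZS (S.erase k) X).det) -
          (c i - c k) * (dT T X * (X i k * ((ZS S X).updateRow i (Pi.single k 1)).det))) = 0 := by
        rw [← hw]
        unfold av
        congr 1
        funext u
        ring
      have cG := cd.mul ((entry_contDiff i k).mul (ZSdet_contDiff S i k))
      rw [av_sub _ _ _ ((cd.mul (ZS_contDiff _)).sub (cd.mul (ZS_contDiff _)))
        (contDiff_const.mul cG), av_mul, sub_eq_zero] at hw'
      rw [hw', inv_mul_cancel_left₀ hne]
    · intro k _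
      exact contDiff_const.mul ((cd.mul (KS_contDiff _ c)).sub (cd.mul (KS_contDiff _ c)))
    · intro k _
      exact cd.mul ((entry_contDiff i k).mul (ZSdet_contDiff S i k))
    · exact cd'.mul (KS_contDiff _ c)
    · exact ContDiff.sum fun k _ => contDiff_const.mul
        ((cd.mul (KS_contDiff _ c)).sub (cd.mul (KS_contDiff _ c)))
    · exact cd'.mul (ZS_contDiff _)
    · exact ContDiff.sum fun k _ => cd.mul ((entry_contDiff i k).mul (ZSdet_contDiff S i k))

theorem XX_sub {n : ℕ} (l : Fin n → ℂ) (z : ℂ) (u : UG n) :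
    XX (fun j => l j - z) u = XX l u - Matrix.diagonal (fun _ => z) := by
  have h : (u : MM n) * star (u : MM n) = 1 := Matrix.mem_unitaryGroup_iff.1 u.2
  have e : Matrix.diagonal (fun j => l j - z) = Matrix.diagonal l - z • (1 : MM n) := by
    ext i j
    by_cases hij : i = j
    · subst hij; simp
    · simp [hij]
  have e2 : Matrix.diagonal (fun _ => z) = z • (1 : MM n) := by
    ext i j
    by_cases hij : i = j
    · subst hij; simp
    · simp [hij]
  unfold XX
  rw [e, e2, mul_sub, sub_mul]
  simp [h]

theorem XX_det {n : ℕ} (l : Fin n → ℂ) (u : UG n) : (XX l u).det = ∏ j, l j := by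
  have h : (u : MM n) * star (u : MM n) = 1 := Matrix.mem_unitaryGroup_iff.1 u.2
  unfold XX
  rw [Matrix.det_mul, Matrix.det_mul, mul_right_comm, ← Matrix.det_mul, h, Matrix.det_one,
    Matrix.det_diagonal, one_mul]

/-- The Capelli type identity. -/
theorem capelli {n : ℕ} (μ : Measure (UG n)) [μ.IsHaarMeasure] [IsProbabilityMeasure μ]
    (l c : Fin n → ℂ) (hc : Function.Injective c) (z : ℂ) :
    (∏ j, (l j - z)) * ∫ u, wt c (XX l u) ∂μ =
      ∫ u, (KS Finset.univ (fun i => XX l u i i - z) c).det * wt c (XX l u) ∂μ := by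
  have h := star_eq μ (fun j => l j - z) c hc Finset.univ ∅ (by simp)
  have hZ : ∀ X : MM n, ZS Finset.univ X = X := by
    intro X; ext a b; simp [ZS]
  have hw : ∀ u, wt c (XX (fun j => l j - z) u) =
      Complex.exp (-(∑ j, c j * z)) * wt c (XX l u) := by
    intro u
    unfold wt
    rw [← Complex.exp_add, XX_sub]
    congr 1
    simp [mul_sub]
    ring
  unfold av at h
  simp_rw [hZ, dT, Finset.prod_empty, one_mul, XX_det, hw] at h
  simp only [XX_sub, Matrix.sub_apply, Matrix.diagonal_apply_eq] at h
  simp_rw [mul_left_comm _ (Complex.exp (-(∑ j, c j * z)))] at h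
  rw [integral_const_mul, integral_const_mul, integral_const_mul] at h
  exact mul_left_cancel₀ (Complex.exp_ne_zero _) h

open Polynomial in
theorem symbol_vandermonde {n : ℕ} (θ c : Fin n → ℂ) (hc : Function.Injective c) :
    (Matrix.vandermonde c).det * (KS Finset.univ θ c).det =
      (Matrix.of fun i j : Fin n => θ i * c i ^ (j : ℕ) +
        ((j : ℕ) : ℂ) * c i ^ ((j : ℕ) - 1)).det := by
  let e : Fin n → ℂ[X] := fun l => ∏ p ∈ Finset.univ.erase l, (X - C (c p))
  have hdeg : ∀ l, (e l).natDegree < n := by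
    intro l
    simp only [e]
    rw [natDegree_prod_of_monic _ _ fun p _ => monic_X_sub_C _]
    simp only [natDegree_X_sub_C, Finset.sum_const, smul_eq_mul, mul_one]
    rw [Finset.card_erase_of_mem (Finset.mem_univ _), Finset.card_univ, Fintype.card_fin]
    have := l.2
    omega
  let Cm : MM n := Matrix.of fun j l => (e l).coeff j
  let ω : Fin n → ℂ := fun k => ∏ p ∈ Finset.univ.erase k, (c k - c p)
  have hne : ∀ i j, i ≠ j → c i - c j ≠ 0 := fun i j h => sub_ne_zero.2 fun h' => h (hc h')
  have hω : ∏ k, ω k ≠ 0 := Finset.prod_ne_zero_iff.2 fun k _ =>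
    Finset.prod_ne_zero_iff.2 fun p hp => hne _ _ (Finset.ne_of_mem_erase hp).symm
  have hev : ∀ k l, (e l).eval (c k) = if k = l then ω k else 0 := by
    intro k l
    simp only [e, eval_prod, eval_sub, eval_X, eval_C]
    by_cases h : k = l
    · subst h; simp [ω]
    · rw [if_neg h]
      exact Finset.prod_eq_zero (Finset.mem_erase.2 ⟨h, Finset.mem_univ _⟩) (sub_self _)
  have hdv : ∀ k l, (derivative (e l)).eval (c k) =
      ω k * (if k = l then ∑ j ∈ Finset.univ.erase k, (c k - c j)⁻¹ else (c k - c l)⁻¹) := by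
    intro k l
    simp only [e, derivative_prod_finset, eval_finset_sum, eval_mul, derivative_X_sub_C, eval_one, mul_one,
      eval_prod, eval_sub, eval_X, eval_C]
    by_cases h : k = l
    · subst h
      rw [if_pos rfl, Finset.mul_sum]
      refine Finset.sum_congr rfl fun i hi => ?_
      simp only [ω]
      rw [← Finset.mul_prod_erase _ _ hi, mul_comm (c k - c i), mul_assoc,
        mul_inv_cancel₀ (hne _ _ (Finset.ne_of_mem_erase hi).symm), mul_one]
    · rw [if_neg h]
      have hk : k ∈ Finset.univ.erase l := Finset.mem_erase.2 ⟨h, Finset.mem_univ _⟩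
      rw [Finset.sum_eq_single_of_mem k hk]
      · have hl : l ∈ Finset.univ.erase k := Finset.mem_erase.2 ⟨Ne.symm h, Finset.mem_univ _⟩
        simp only [ω]
        rw [← Finset.mul_prod_erase _ _ hl, mul_comm (c k - c l), mul_assoc,
          mul_inv_cancel₀ (hne _ _ h), mul_one, Finset.erase_right_comm]
      · intro i _ hik
        exact Finset.prod_eq_zero (Finset.mem_erase.2 ⟨Ne.symm hik, hk⟩) (sub_self _)
  have h1 : Matrix.vandermonde c * Cm = Matrix.diagonal ω := by
    ext k l
    rw [Matrix.mul_apply, Matrix.diagonal_apply, ← hev k l, eval_eq_sum_range' (hdeg l),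
      Finset.sum_range]
    exact Finset.sum_congr rfl fun j _ => by simp [Cm, mul_comm]
  have h2 : (Matrix.of fun i j : Fin n => θ i * c i ^ (j : ℕ) +
        ((j : ℕ) : ℂ) * c i ^ ((j : ℕ) - 1)) * Cm =
        Matrix.diagonal ω * (KS Finset.univ θ c).transpose := by
    ext k l
    rw [Matrix.mul_apply, Matrix.diagonal_mul, Matrix.transpose_apply]
    have e1 : ∑ j, (Matrix.of fun i j : Fin n => θ i * c i ^ (j : ℕ) +
        ((j : ℕ) : ℂ) * c i ^ ((j : ℕ) - 1)) k j * Cm j l =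
        θ k * (e l).eval (c k) + (derivative (e l)).eval (c k) := by
      rw [derivative_eval, sum_over_range' _ (by simp) n (hdeg l), eval_eq_sum_range' (hdeg l),
        Finset.sum_range, Finset.sum_range, Finset.mul_sum, ← Finset.sum_add_distrib]
      exact Finset.sum_congr rfl fun j _ => by simp [Cm]; ring
    rw [e1, hev, hdv]
    by_cases h : k = l
    · subst h; simp [KS]; ring
    · have : (c l - c k)⁻¹ = -(c k - c l)⁻¹ := by rw [← inv_neg, neg_sub]
      simp [KS, h, Ne.symm h, this]
  have d1 := congrArg Matrix.det h1
  have d2 := congrArg Matrix.det h2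
  rw [Matrix.det_mul, Matrix.det_diagonal] at d1
  rw [Matrix.det_mul, Matrix.det_mul, Matrix.det_diagonal, Matrix.det_transpose, ← d1] at d2
  have hC : Cm.det ≠ 0 := by
    intro h0; rw [h0, mul_zero] at d1; exact hω d1.symm
  apply mul_right_cancel₀ hC
  rw [d2]; ring

/-- `EE j m c x` is the `m`-th derivative in `c` of `c ^ j * exp (c * x)`. -/
noncomputable def EE : ℕ → ℕ → ℂ → ℂ → ℂ
  | 0, m, c, x => x ^ m * Complex.exp (c * x)
  | j + 1, m, c, x => c * EE j m c x + m * EE j (m - 1) c x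

theorem EE_deriv (j m : ℕ) (c x : ℂ) :
    HasDerivAt (fun t => EE j m t x) (EE j (m + 1) c x) c := by
  induction j generalizing m with
  | zero =>
    simp only [EE]
    have := (((hasDerivAt_id c).mul_const x).cexp).const_mul (x ^ m)
    refine HasDerivAt.congr_deriv this ?_
    simp only [id]
    ring
  | succ j ih =>
    simp only [EE]
    have := ((hasDerivAt_id c).mul (ih m)).add ((ih (m - 1)).const_mul (m : ℂ))
    refine HasDerivAt.congr_deriv this ?_
    cases m with
    | zero => simp; ring
    | succ m => simp; ring

theorem EE_cont (j m : ℕ) : Continuous (fun p : ℂ × ℂ => EE j m p.1 p.2) := by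
  induction j generalizing m with
  | zero => simp only [EE]; fun_prop
  | succ j ih =>
    simp only [EE]
    exact (continuous_fst.mul (ih m)).add (continuous_const.mul (ih (m - 1)))

theorem EE_zero (j : ℕ) (c x : ℂ) : EE j 0 c x = c ^ j * Complex.exp (c * x) := by
  induction j with
  | zero => simp [EE]
  | succ j ih => simp [EE, ih]; ring

theorem EE_one (j : ℕ) (c x : ℂ) :
    EE j 1 c x = (x * c ^ j + j * c ^ (j - 1)) * Complex.exp (c * x) := by
  induction j with
  | zero => simp [EE]
  | succ j ih =>
    simp only [EE, ih, Nat.sub_self, EE_zero]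
    cases j with
    | zero => simp; ring
    | succ j => push_cast; simp; ring

theorem EE_at_zero_lt (j m : ℕ) (x : ℂ) (h : m < j) : EE j m 0 x = 0 := by
  induction j generalizing m with
  | zero => omega
  | succ j ih =>
    simp only [EE, zero_mul, zero_add]
    cases m with
    | zero => simp
    | succ m => rw [ih _ (by omega), mul_zero]

theorem EE_at_zero_eq (m : ℕ) (x : ℂ) : EE m m 0 x = m.factorial := by
  induction m with
  | zero => simp [EE]
  | succ m ih =>
    simp only [EE, zero_mul, zero_add, Nat.add_sub_cancel, ih, Nat.factorial_succ]
    push_cast; ring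

/-- The determinant integrand. -/
noncomputable def dE {n : ℕ} (α : Fin n → ℕ) (c x : Fin n → ℂ) : ℂ :=
  (Matrix.of fun i j : Fin n => EE j (α i) (c i) (x i)).det

theorem dE_deriv {n : ℕ} (α : Fin n → ℕ) (c x : Fin n → ℂ) (k : Fin n) (t : ℂ) :
    HasDerivAt (fun s => dE α (Function.update c k s) x)
      (dE (Function.update α k (α k + 1)) (Function.update c k t) x) t := by
  let A : MM n := Matrix.of fun i j : Fin n => EE j (α i) (c i) (x i)
  let Lc : (Fin n → ℂ) →ₗ[ℂ] ℂ := (LinearMap.proj k).comp (Matrix.cramer A.transpose)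
  have hL : ∀ b, Lc b = (A.updateRow k b).det := by
    intro b
    simp [Lc, Matrix.cramer_transpose_apply]
  have h1 : ∀ s, dE α (Function.update c k s) x = Lc (fun j : Fin n => EE j (α k) s (x k)) := by
    intro s
    rw [hL]; unfold dE
    congr 1
    ext i j
    by_cases hi : i = k
    · subst hi; simp
    · simp [hi, A]
  have h2 : dE (Function.update α k (α k + 1)) (Function.update c k t) x =
      Lc (fun j : Fin n => EE j (α k + 1) t (x k)) := by
    rw [hL]; unfold dE
    congr 1
    ext i j
    by_cases hi : i = k
    · subst hi; simp
    · simp [hi, A]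
  simp_rw [h1]
  rw [h2]
  have h3 : HasDerivAt (fun s => fun j : Fin n => EE j (α k) s (x k))
      (fun j : Fin n => EE j (α k + 1) t (x k)) t :=
    hasDerivAt_pi.2 fun j => EE_deriv j (α k) t (x k)
  exact (LinearMap.toContinuousLinearMap Lc).hasFDerivAt.comp_hasDerivAt t h3

theorem dE_cont {n : ℕ} (α : Fin n → ℕ) :
    Continuous fun p : (Fin n → ℂ) × (Fin n → ℂ) => dE α p.1 p.2 := by
  unfold dE
  simp_rw [Matrix.det_apply']
  refine continuous_finsetSum _ fun σ _ => continuous_const.mul ?_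
  refine continuous_finsetProd _ fun i _ => ?_
  simp only [Matrix.of_apply]
  exact (EE_cont _ _).comp
    (by fun_prop : Continuous fun p : (Fin n → ℂ) × (Fin n → ℂ) => (p.1 (σ i), p.2 (σ i)))

/-- Diagonal entries. -/
noncomputable def dg {n : ℕ} (l : Fin n → ℂ) (u : UG n) : Fin n → ℂ := fun i => XX l u i i

theorem dg_cont {n : ℕ} (l : Fin n → ℂ) : Continuous (dg l) := by
  unfold dg
  have := continuous_XX l
  fun_prop

noncomputable def JJ {n : ℕ} (μ : Measure (UG n)) (l : Fin n → ℂ) (α : Fin n → ℕ)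
    (c : Fin n → ℂ) : ℂ := ∫ u, dE α c (dg l u) ∂μ

theorem JJ_deriv {n : ℕ} (μ : Measure (UG n)) [IsProbabilityMeasure μ] (l : Fin n → ℂ)
    (α : Fin n → ℕ) (c : Fin n → ℂ) (k : Fin n) (t : ℂ) :
    HasDerivAt (fun s => JJ μ l α (Function.update c k s))
      (JJ μ l (Function.update α k (α k + 1)) (Function.update c k t)) t := by
  unfold JJ
  have hd := dg_cont l
  refine hasDerivAt_param (𝕜 := ℂ) μ (fun s u => dE α (Function.update c k s) (dg l u))
    (fun s u => dE (Function.update α k (α k + 1)) (Function.update c k s) (dg l u))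
    ?_ ?_ ?_ t
  · intro s
    exact (dE_cont α).comp (by fun_prop : Continuous fun u => (Function.update c k s, dg l u))
  · refine (dE_cont (Function.update α k (α k + 1))).comp
      (?_ : Continuous fun p : ℂ × UG n => (Function.update c k p.1, dg l p.2))
    have hu : Continuous fun p : ℂ × UG n => Function.update c k p.1 := by fun_prop
    exact hu.prodMk (hd.comp continuous_snd)
  · intro s u
    exact dE_deriv α c (dg l u) k s

theorem JJ_cont {n : ℕ} (μ : Measure (UG n)) [IsProbabilityMeasure μ] (l : Fin n → ℂ)
    (α : Fin n → ℕ) : Continuous (JJ μ l α) := by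
  have hd := dg_cont l
  have h : Continuous (Function.uncurry fun (c : Fin n → ℂ) (u : UG n) => dE α c (dg l u)) :=
    (dE_cont α).comp (by fun_prop :
      Continuous fun p : (Fin n → ℂ) × UG n => (p.1, dg l p.2))
  have := continuous_parametric_integral_of_continuous (μ := μ) h (s := Set.univ) isCompact_univ
  simp only [Measure.restrict_univ] at this
  exact this

/-- The functional. -/
noncomputable def Lam {n : ℕ} (μ : Measure (UG n)) (l : Fin n → ℂ) (c : Fin n → ℂ) :
    MvPolynomial (Fin n) ℂ →ₗ[ℂ] ℂ :=
  (MvPolynomial.basisMonomials (Fin n) ℂ).constr ℂ fun α => JJ μ l α c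

theorem Lam_monomial {n : ℕ} (μ : Measure (UG n)) (l : Fin n → ℂ) (c : Fin n → ℂ)
    (α : Fin n →₀ ℕ) (r : ℂ) : Lam μ l c (MvPolynomial.monomial α r) = r * JJ μ l α c := by
  have h : MvPolynomial.monomial α r = r • MvPolynomial.monomial α (1 : ℂ) := by
    rw [MvPolynomial.smul_monomial, smul_eq_mul, mul_one]
  rw [h, map_smul, smul_eq_mul]
  congr 1
  have := (MvPolynomial.basisMonomials (Fin n) ℂ).constr_basis ℂ (fun α => JJ μ l α c) α
  simpa [Lam] using this

theorem Lam_deriv {n : ℕ} (μ : Measure (UG n)) [IsProbabilityMeasure μ] (l : Fin n → ℂ)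
    (c : Fin n → ℂ) (k : Fin n) (p : MvPolynomial (Fin n) ℂ) (t : ℂ) :
    HasDerivAt (fun s => Lam μ l (Function.update c k s) p)
      (Lam μ l (Function.update c k t) (MvPolynomial.X k * p)) t := by
  induction p using MvPolynomial.induction_on' with
  | monomial α r =>
    have h : (MvPolynomial.X k * MvPolynomial.monomial α r : MvPolynomial (Fin n) ℂ) =
        MvPolynomial.monomial (Finsupp.single k 1 + α) r := by
      rw [MvPolynomial.X, MvPolynomial.monomial_mul, one_mul]
    rw [h]
    simp_rw [Lam_monomial]
    have e : ((Finsupp.single k 1 + α : Fin n →₀ ℕ) : Fin n → ℕ) =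
        Function.update α k (α k + 1) := by
      funext i
      by_cases hi : i = k
      · subst hi; simp [add_comm]
      · simp [hi, Finsupp.single_apply, Ne.symm hi]
    rw [e]
    exact (JJ_deriv μ l α c k t).const_mul r
  | add p q hp hq =>
    simp only [map_add, mul_add]
    exact hp.add hq

theorem Lam_cont {n : ℕ} (μ : Measure (UG n)) [IsProbabilityMeasure μ] (l : Fin n → ℂ)
    (p : MvPolynomial (Fin n) ℂ) : Continuous fun c => Lam μ l c p := by
  induction p using MvPolynomial.induction_on' with
  | monomial α r =>
    simp_rw [Lam_monomial]
    exact continuous_const.mul (JJ_cont μ l α)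
  | add p q hp hq =>
    simp only [map_add]
    exact hp.add hq

theorem wt_eq {n : ℕ} (l c : Fin n → ℂ) (u : UG n) :
    wt c (XX l u) = ∏ i, Complex.exp (c i * dg l u i) := by
  rw [← Complex.exp_sum]; rfl

theorem det_row_scale {n : ℕ} (v : Fin n → ℂ) (A : MM n) :
    (Matrix.of fun i j => A i j * v i).det = A.det * ∏ i, v i := by
  rw [← Matrix.det_diagonal, mul_comm, ← Matrix.det_mul]
  congr 1
  ext i j
  simp [Matrix.diagonal_mul, mul_comm]

theorem JJ_zero {n : ℕ} (μ : Measure (UG n)) (l c : Fin n → ℂ) :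
    JJ μ l 0 c = (Matrix.vandermonde c).det * ∫ u, wt c (XX l u) ∂μ := by
  unfold JJ dE
  rw [← integral_const_mul]
  congr 1
  funext u
  rw [wt_eq, ← det_row_scale]
  congr 1
  ext i j
  simp [EE_zero]

theorem R0_det {n : ℕ} (μ : Measure (UG n)) [μ.IsHaarMeasure] [IsProbabilityMeasure μ]
    (l c : Fin n → ℂ) (hc : Function.Injective c) (z : ℂ) :
    (∏ j, (l j - z)) * JJ μ l 0 c =
      ∫ u, (Matrix.of fun i j : Fin n => EE j 1 (c i) (dg l u i) -
        z * EE j 0 (c i) (dg l u i)).det ∂μ := by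
  rw [JJ_zero, mul_left_comm, capelli μ l c hc z, ← integral_const_mul]
  congr 1
  funext u
  rw [← mul_assoc, symbol_vandermonde _ c hc, wt_eq, ← det_row_scale]
  congr 1
  ext i j
  simp only [EE_zero, EE_one, Matrix.of_apply, dg]
  ring

theorem det_subset_expand {n : ℕ} (c x : Fin n → ℂ) (z : ℂ) :
    (Matrix.of fun i j : Fin n => EE j 1 (c i) (x i) - z * EE j 0 (c i) (x i)).det =
      ∑ s : Finset (Fin n), (∏ _i ∈ sᶜ, (-z)) * dE (fun i => if i ∈ s then 1 else 0) c x := by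
  let m1 : Fin n → Fin n → ℂ := fun i j => EE j 1 (c i) (x i)
  let m0 : Fin n → Fin n → ℂ := fun i j => EE j 0 (c i) (x i)
  let f := (Matrix.detRowAlternating (n := Fin n) (R := ℂ)).toMultilinearMap
  have h := f.map_add_univ m1 (fun i => (-z) • m0 i)
  have hL : (Matrix.of fun i j : Fin n => EE j 1 (c i) (x i) - z * EE j 0 (c i) (x i)).det =
      f (m1 + fun i => (-z) • m0 i) := by
    change _ = Matrix.det _
    congr 1
    ext i j
    simp [m1, m0, sub_eq_add_neg]
  rw [hL, h]
  refine Finset.sum_congr rfl fun s _ => ?_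
  have e1 : s.piecewise m1 (fun i => (-z) • m0 i) =
      sᶜ.piecewise (fun i => (fun _ => -z) i • (s.piecewise m1 m0) i) (s.piecewise m1 m0) := by
    funext i
    by_cases hi : i ∈ s
    · simp [hi]
    · simp [hi]
  rw [e1, f.map_piecewise_smul (fun _ => -z) (s.piecewise m1 m0) sᶜ, smul_eq_mul]
  congr 1
  unfold dE
  change Matrix.det _ = _
  congr 1
  ext i j
  by_cases hi : i ∈ s
  · simp [hi, m1]
  · simp [hi, m0]

theorem dE_int {n : ℕ} (μ : Measure (UG n)) [IsProbabilityMeasure μ] (l : Fin n → ℂ)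
    (α : Fin n → ℕ) (c : Fin n → ℂ) : Integrable (fun u => dE α c (dg l u)) μ := by
  apply integrable_cont
  have hd := dg_cont l
  exact (dE_cont α).comp (by fun_prop : Continuous fun u => (c, dg l u))

open MvPolynomial in
theorem R0 {n : ℕ} (μ : Measure (UG n)) [μ.IsHaarMeasure] [IsProbabilityMeasure μ]
    (l c : Fin n → ℂ) (hc : Function.Injective c) (z : ℂ) :
    Lam μ l c (∏ k, (X k - C z)) = Lam μ l c (∏ j, (C (l j) - C z)) := by
  have hR : Lam μ l c (∏ j, (C (l j) - C z)) = (∏ j, (l j - z)) * JJ μ l 0 c := by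
    simp_rw [← C_sub, ← map_prod]
    exact Lam_monomial μ l c 0 _
  rw [hR, R0_det μ l c hc z]
  simp_rw [det_subset_expand]
  rw [integral_finsetSum _ fun s _ => (dE_int μ l _ c).const_mul _]
  simp_rw [integral_const_mul, sub_eq_add_neg]
  rw [Finset.prod_add, map_sum, Finset.powerset_univ]
  refine Finset.sum_congr rfl fun s _ => ?_
  have e1 : (∏ i ∈ s, (X i : MvPolynomial (Fin n) ℂ)) =
      monomial (∑ i ∈ s, Finsupp.single i 1) 1 := by
    simp_rw [X]
    rw [monomial_sum_one]
  have e2 : (∏ i ∈ Finset.univ \ s, (-C z : MvPolynomial (Fin n) ℂ)) = C (∏ i ∈ sᶜ, (-z)) := by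
    rw [map_prod, ← Finset.compl_eq_univ_sdiff]
    simp
  rw [e1, e2, mul_comm, C_mul_monomial, mul_one, Lam_monomial]
  congr 2
  funext i
  simp [Finsupp.finsetSum_apply, Finsupp.single_apply]

theorem update_inj_eventually {n : ℕ} (c : Fin n → ℂ) (hc : Function.Injective c) (i : Fin n) :
    ∀ᶠ t in nhds (c i), Function.Injective (Function.update c i t) := by
  have h : ∀ᶠ t in nhds (c i), ∀ j, j ≠ i → t ≠ c j := by
    rw [Filter.eventually_all]
    intro j
    by_cases hj : j = i
    · simp [hj]
    · have : c i ≠ c j := fun h => hj (hc h).symm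
      filter_upwards [isOpen_ne.mem_nhds this] with t ht _
      exact ht
  filter_upwards [h] with t ht a b hab
  by_cases ha : a = i
  · subst ha
    by_cases hb : b = a
    · exact hb.symm
    · rw [Function.update_self, Function.update_of_ne hb] at hab
      exact absurd hab (ht b hb)
  · by_cases hb : b = i
    · subst hb
      rw [Function.update_self, Function.update_of_ne ha] at hab
      exact absurd hab.symm (ht a ha)
    · rw [Function.update_of_ne ha, Function.update_of_ne hb] at hab
      exact hc hab

open MvPolynomial in
theorem R1 {n : ℕ} (μ : Measure (UG n)) [μ.IsHaarMeasure] [IsProbabilityMeasure μ]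
    (l : Fin n → ℂ) (Q : MvPolynomial (Fin n) ℂ)
    (hQ : ∀ c, Function.Injective c → Lam μ l c Q = 0) (p : MvPolynomial (Fin n) ℂ) :
    ∀ c, Function.Injective c → Lam μ l c (Q * p) = 0 := by
  induction p using MvPolynomial.induction_on with
  | C a =>
    intro c hc
    rw [mul_comm, ← smul_eq_C_mul, map_smul, hQ c hc, smul_zero]
  | add p q hp hq =>
    intro c hc
    rw [mul_add, map_add, hp c hc, hq c hc, add_zero]
  | mul_X p i hp =>
    intro c hc
    have h := Lam_deriv μ l c i (Q * p) (c i)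
    rw [Function.update_eq_self] at h
    have h0 : (fun s => Lam μ l (Function.update c i s) (Q * p)) =ᶠ[nhds (c i)] fun _ => 0 := by
      filter_upwards [update_inj_eventually c hc i] with t ht
      exact hp _ ht
    have h1 := h.unique ((hasDerivAt_const (c i) (0:ℂ)).congr_of_eventuallyEq h0)
    rw [← h1]
    congr 1
    ring

theorem R2 {n : ℕ} (μ : Measure (UG n)) [IsProbabilityMeasure μ]
    (l : Fin n → ℂ) (p : MvPolynomial (Fin n) ℂ)
    (hp : ∀ c, Function.Injective c → Lam μ l c p = 0) (c : Fin n → ℂ) : Lam μ l c p = 0 := by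
  let γ : ℂ → Fin n → ℂ := fun t i => c i + t * ((i : ℕ) : ℂ)
  have hγ : Continuous γ := by fun_prop
  have h0 : γ 0 = c := by funext i; simp [γ]
  have h1 : ∀ᶠ t in nhdsWithin (0 : ℂ) {0}ᶜ, Function.Injective (γ t) := by
    have : ∀ᶠ t in nhdsWithin (0 : ℂ) {0}ᶜ, ∀ i j, i ≠ j → γ t i ≠ γ t j := by
      rw [Filter.eventually_all]; intro i
      rw [Filter.eventually_all]; intro j
      by_cases hij : i = j
      · simp [hij]
      by_cases hcc : c i = c j
      · filter_upwards [self_mem_nhdsWithin] with t ht _ he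
        have ht' : t ≠ 0 := ht
        simp only [γ, hcc, add_right_inj] at he
        have := mul_left_cancel₀ ht' he
        exact hij (Fin.ext (by exact_mod_cast this))
      · have hcont : Continuous fun t => γ t i - γ t j := by fun_prop
        have hne : (fun t => γ t i - γ t j) 0 ≠ 0 := by simpa [γ, sub_eq_zero] using hcc
        have := (hcont.continuousAt (x := 0)).eventually_ne hne
        filter_upwards [nhdsWithin_le_nhds this] with t ht _ he
        exact ht (sub_eq_zero.2 he)
    filter_upwards [this] with t ht a b hab
    by_contra hne
    exact ht a b hne hab
  have hc2 : Filter.Tendsto (fun t => Lam μ l (γ t) p) (nhdsWithin (0 : ℂ) {0}ᶜ)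
      (nhds (Lam μ l c p)) := by
    have := ((Lam_cont μ l p).comp hγ).continuousAt (x := (0:ℂ))
    have h2 : Filter.Tendsto (fun t => Lam μ l (γ t) p) (nhds 0) (nhds (Lam μ l (γ 0) p)) := this
    rw [h0] at h2
    exact h2.mono_left nhdsWithin_le_nhds
  refine tendsto_nhds_unique hc2 ?_
  refine Filter.Tendsto.congr' ?_ tendsto_const_nhds
  filter_upwards [h1] with t ht
  exact (hp _ ht).symm

open MvPolynomial in
theorem R3 {n : ℕ} (μ : Measure (UG n)) [μ.IsHaarMeasure] [IsProbabilityMeasure μ]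
    (l c : Fin n → ℂ) (i : Fin n) (p : MvPolynomial (Fin n) ℂ) :
    Lam μ l c ((∏ j, (C (l j) - X i)) * p) = 0 := by
  let Q : Polynomial (MvPolynomial (Fin n) ℂ) :=
    ∏ k, (Polynomial.C (X k) - Polynomial.X) - ∏ j, (Polynomial.C (C (l j)) - Polynomial.X)
  have hev : ∀ y, Q.eval y = ∏ k, (X k - y) - ∏ j, (C (l j) - y) := by
    intro y
    simp [Q, Polynomial.eval_prod]
  have h1 : ∀ z p, Lam μ l c (Q.eval (C z) * p) = 0 := by
    intro z p
    refine R2 μ l _ ?_ c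
    refine R1 μ l _ ?_ p
    intro c hc
    rw [hev, map_sub, R0 μ l c hc z, sub_self]
  have h2 : ∀ m p, Lam μ l c (Q.coeff m * p) = 0 := by
    intro m p
    by_cases hm : m < Q.natDegree + 1
    · let q : Polynomial ℂ := ∑ k ∈ Finset.range (Q.natDegree + 1),
        Polynomial.monomial k (Lam μ l c (Q.coeff k * p))
      have hq : q = 0 := by
        apply Polynomial.funext
        intro z
        rw [Polynomial.eval_zero, ← h1 z p, Polynomial.eval_eq_sum_range (p := Q), Finset.sum_mul, map_sum,
          Polynomial.eval_finset_sum]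
        refine Finset.sum_congr rfl fun k _ => ?_
        rw [Polynomial.eval_monomial, mul_comm, ← smul_eq_mul, ← map_smul, smul_eq_C_mul]
        congr 1
        rw [map_pow]; ring
      have := congrArg (fun r => Polynomial.coeff r m) hq
      simp only [q, Polynomial.finset_sum_coeff, Polynomial.coeff_monomial, Polynomial.coeff_zero] at this
      rw [Finset.sum_ite_eq' , if_pos (Finset.mem_range.2 hm)] at this
      exact this
    · rw [Polynomial.coeff_eq_zero_of_natDegree_lt (by omega), zero_mul, map_zero]
  have h3 : Lam μ l c (Q.eval (X i) * p) = 0 := by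
    rw [Polynomial.eval_eq_sum_range, Finset.sum_mul, map_sum]
    refine Finset.sum_eq_zero fun k _ => ?_
    rw [mul_assoc]
    exact h2 k _
  have h4 : ∏ k, ((X k : MvPolynomial (Fin n) ℂ) - X i) = 0 :=
    Finset.prod_eq_zero (Finset.mem_univ i) (sub_self _)
  rw [hev, h4, zero_sub, neg_mul, map_neg, neg_eq_zero] at h3
  exact h3

/-- The determinantal functional. -/
noncomputable def Ldet {n : ℕ} (l c : Fin n → ℂ) : MvPolynomial (Fin n) ℂ →ₗ[ℂ] ℂ :=
  ∑ σ : Equiv.Perm (Fin n), ((Equiv.Perm.sign σ : ℤ) * Complex.exp (∑ i, c i * l (σ i)) : ℂ) •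
    (MvPolynomial.aeval (fun i => l (σ i))).toLinearMap

theorem Ldet_apply {n : ℕ} (l c : Fin n → ℂ) (p : MvPolynomial (Fin n) ℂ) :
    Ldet l c p = ∑ σ : Equiv.Perm (Fin n),
      ((Equiv.Perm.sign σ : ℤ) * Complex.exp (∑ i, c i * l (σ i)) : ℂ) *
        MvPolynomial.aeval (fun i => l (σ i)) p := by
  simp [Ldet]

theorem Ldet_deriv {n : ℕ} (l : Fin n → ℂ)
    (c : Fin n → ℂ) (k : Fin n) (p : MvPolynomial (Fin n) ℂ) (t : ℂ) :
    HasDerivAt (fun s => Ldet l (Function.update c k s) p)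
      (Ldet l (Function.update c k t) (MvPolynomial.X k * p)) t := by
  simp_rw [Ldet_apply]
  refine HasDerivAt.fun_sum fun σ _ => ?_
  have h : ∀ s, ∑ i, Function.update c k s i * l (σ i) =
      s * l (σ k) + ∑ i ∈ Finset.univ.erase k, c i * l (σ i) := by
    intro s
    rw [← Finset.add_sum_erase _ _ (Finset.mem_univ k), Function.update_self]
    congr 1
    exact Finset.sum_congr rfl fun i hi => by
      rw [Function.update_of_ne (Finset.ne_of_mem_erase hi)]
  simp_rw [h]
  have h1 := ((((hasDerivAt_id t).mul_const (l (σ k))).add_const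
    (∑ i ∈ Finset.univ.erase k, c i * l (σ i))).cexp.const_mul
      ((Equiv.Perm.sign σ : ℤ) : ℂ)).mul_const (MvPolynomial.aeval (fun i => l (σ i)) p)
  refine HasDerivAt.congr_deriv h1 ?_
  simp
  ring

open MvPolynomial in
theorem Ldet_rel {n : ℕ} (l c : Fin n → ℂ) (i : Fin n) (p : MvPolynomial (Fin n) ℂ) :
    Ldet l c ((∏ j, (C (l j) - X i)) * p) = 0 := by
  rw [Ldet_apply]
  refine Finset.sum_eq_zero fun σ _ => ?_
  have : (MvPolynomial.aeval (fun i => l (σ i))) (∏ j, (C (l j) - X i) : MvPolynomial (Fin n) ℂ)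
      = 0 := by
    rw [map_prod]
    refine Finset.prod_eq_zero (Finset.mem_univ (σ i)) ?_
    simp
  rw [map_mul, this, zero_mul, mul_zero]

theorem ode_zero (g : ℂ → ℂ) (a t₀ : ℂ) (hg : ∀ t, HasDerivAt g (a * g t) t) (h0 : g t₀ = 0) :
    ∀ t, g t = 0 := by
  intro t
  have hk : ∀ t, HasDerivAt (fun t => Complex.exp (-a * t) * g t) 0 t := by
    intro t
    have h1 := (((hasDerivAt_id t).const_mul (-a)).cexp).mul (hg t)
    refine HasDerivAt.congr_deriv h1 ?_
    simp; ring
  have := is_const_of_deriv_eq_zero (fun t => (hk t).differentiableAt) (fun t => (hk t).deriv) t t₀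
  simp only [h0, mul_zero] at this
  exact (mul_eq_zero.1 this).resolve_left (Complex.exp_ne_zero _)

open MvPolynomial in
theorem uniq_coord {n : ℕ} (l : Fin n → ℂ) (Θ : (Fin n → ℂ) → MvPolynomial (Fin n) ℂ →ₗ[ℂ] ℂ)
    (hD : ∀ c k p t, HasDerivAt (fun s => Θ (Function.update c k s) p)
      (Θ (Function.update c k t) (X k * p)) t)
    (hR : ∀ c i p, Θ c ((∏ j, (C (l j) - X i)) * p) = 0)
    (c : Fin n → ℂ) (i : Fin n) (hc : ∀ p, Θ c p = 0) (t : ℂ) (p : MvPolynomial (Fin n) ℂ) :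
    Θ (Function.update c i t) p = 0 := by
  have key : ∀ s : Finset (Fin n),
      (∀ p t, Θ (Function.update c i t) ((∏ j ∈ s, (C (l j) - X i)) * p) = 0) →
      ∀ p t, Θ (Function.update c i t) p = 0 := by
    intro s
    induction s using Finset.induction_on with
    | empty => intro h p t; simpa using h p t
    | insert a s ha ih =>
      intro h
      apply ih
      intro p
      apply ode_zero (fun t => Θ (Function.update c i t) ((∏ j ∈ s, (C (l j) - X i)) * p))
        (l a) (c i)
      · intro t
        have h1 := hD c i ((∏ j ∈ s, (C (l j) - X i)) * p) t
        refine HasDerivAt.congr_deriv h1 ?_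
        have h2 := h p t
        rw [Finset.prod_insert ha] at h2
        have e : ((C (l a) - X i) * ∏ j ∈ s, (C (l j) - X i)) * p =
          l a • ((∏ j ∈ s, (C (l j) - X i)) * p) - X i * ((∏ j ∈ s, (C (l j) - X i)) * p) := by
          rw [smul_eq_C_mul]; ring
        rw [e, map_sub, map_smul, sub_eq_zero] at h2
        rw [← h2, smul_eq_mul]
      · rw [Function.update_eq_self]; exact hc _
  exact key Finset.univ (fun p t => hR _ i p) p t

open MvPolynomial in
theorem uniq {n : ℕ} (l : Fin n → ℂ) (Θ : (Fin n → ℂ) → MvPolynomial (Fin n) ℂ →ₗ[ℂ] ℂ)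
    (hD : ∀ c k p t, HasDerivAt (fun s => Θ (Function.update c k s) p)
      (Θ (Function.update c k t) (X k * p)) t)
    (hR : ∀ c i p, Θ c ((∏ j, (C (l j) - X i)) * p) = 0)
    (h0 : ∀ p, Θ 0 p = 0) (c : Fin n → ℂ) (p : MvPolynomial (Fin n) ℂ) : Θ c p = 0 := by
  have key : ∀ s : Finset (Fin n), ∀ p, Θ (s.piecewise c 0) p = 0 := by
    intro s
    induction s using Finset.induction_on with
    | empty => intro p; simpa using h0 p
    | insert a s ha ih =>
      intro p
      rw [Finset.piecewise_insert]
      exact uniq_coord l Θ hD hR _ a ih _ p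
  have := key Finset.univ p
  rwa [Finset.piecewise_univ] at this

open MvPolynomial in
theorem zero_of_small {n : ℕ} (l : Fin n → ℂ) (L : MvPolynomial (Fin n) ℂ →ₗ[ℂ] ℂ)
    (hR : ∀ i p, L ((∏ j, (C (l j) - X i)) * p) = 0)
    (hα : ∀ α : Fin n →₀ ℕ, (∀ i, α i < n) → L (monomial α 1) = 0)
    (p : MvPolynomial (Fin n) ℂ) : L p = 0 := by
  have key : ∀ N, ∀ α : Fin n →₀ ℕ, α.degree = N → L (monomial α 1) = 0 := by
    intro N
    induction N using Nat.strong_induction_on with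
    | _ N ih =>
    intro α hN
    by_cases h : ∀ i, α i < n
    · exact hα α h
    · push Not at h
      obtain ⟨i, hi⟩ := h
      let β : Fin n →₀ ℕ := α - Finsupp.single i n
      have hβ : α = Finsupp.single i n + β := by
        ext j
        by_cases hj : j = i
        · subst hj; simp [β]; omega
        · simp [β, Finsupp.single_apply, Ne.symm hj]
      let P : Polynomial ℂ := ∏ j, (Polynomial.X - Polynomial.C (l j))
      have hPm : P.Monic := Polynomial.monic_prod_of_monic _ _ fun j _ => Polynomial.monic_X_sub_C _
      have hPd : P.natDegree = n := by
        simp only [P]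
        rw [Polynomial.natDegree_prod_of_monic _ _ fun j _ => Polynomial.monic_X_sub_C _]
        simp
      have hP : Polynomial.aeval (X i : MvPolynomial (Fin n) ℂ) P =
          C ((-1) ^ n) * ∏ j, (C (l j) - X i) := by
        simp only [P, map_prod, map_sub, Polynomial.aeval_X, Polynomial.aeval_C]
        have : ∀ j, (X i : MvPolynomial (Fin n) ℂ) - algebraMap ℂ _ (l j) =
            (-1) * (C (l j) - X i) := by
          intro j; rw [← algebraMap_eq]; ring
        simp_rw [this]
        rw [Finset.prod_mul_distrib]
        simp
      have h1 : L (Polynomial.aeval (X i : MvPolynomial (Fin n) ℂ) P * monomial β 1) = 0 := by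
        rw [hP, mul_assoc, ← smul_eq_C_mul, map_smul, hR, smul_zero]
      rw [Polynomial.aeval_eq_sum_range, hPd, Finset.sum_range_succ, add_mul, map_add,
        Finset.sum_mul, map_sum] at h1
      have h2 : ∀ k, (P.coeff k • (X i : MvPolynomial (Fin n) ℂ) ^ k) * monomial β 1 =
          P.coeff k • monomial (Finsupp.single i k + β) 1 := by
        intro k
        rw [smul_mul_assoc, X_pow_eq_monomial, monomial_mul, one_mul]
      simp_rw [h2, map_smul] at h1
      rw [Finset.sum_eq_zero, zero_add, ← hβ] at h1
      · have : P.coeff n = 1 := by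
          have := hPm.coeff_natDegree
          rwa [hPd] at this
        rwa [this, one_smul] at h1
      · intro k hk
        have hk := Finset.mem_range.1 hk
        rw [ih (Finsupp.single i k + β).degree ?_ _ rfl, smul_zero]
        rw [← hN]
        conv_rhs => rw [hβ]
        simp only [map_add, Finsupp.degree_single]
        omega
  induction p using MvPolynomial.induction_on' with
  | monomial α r =>
    have h : monomial α r = r • monomial α (1 : ℂ) := by
      rw [smul_monomial, smul_eq_mul, mul_one]
    rw [h, map_smul, key _ α rfl, smul_zero]
  | add p q hp hq => rw [map_add, hp, hq, add_zero]

theorem perm_inv {n : ℕ} (μ : Measure (UG n)) [μ.IsHaarMeasure] [IsProbabilityMeasure μ]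
    (l : Fin n → ℂ) (τ : Equiv.Perm (Fin n)) (φ : (Fin n → ℂ) → ℂ) :
    ∫ u, φ (fun i => dg l u (τ i)) ∂μ = ∫ u, φ (dg l u) ∂μ := by
  let P : MM n := (1 : MM n).submatrix τ id
  have hP : P ∈ Matrix.unitaryGroup (Fin n) ℂ := by
    rw [Matrix.mem_unitaryGroup_iff]
    ext i j
    simp [P, Matrix.mul_apply, Matrix.star_apply, Matrix.one_apply]
    try simp [eq_comm]
  let g : UG n := ⟨P, hP⟩
  have hg : ∀ u, (fun i => dg l u (τ i)) = dg l (g * u) := by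
    intro u
    funext i
    unfold dg
    rw [XX_mul]
    simp [g, P, Matrix.mul_apply, Matrix.star_apply, Matrix.one_apply]
  simp_rw [hg]
  exact integral_mul_left_eq_self (fun u => φ (dg l u)) g

theorem JJ_antisymm {n : ℕ} (μ : Measure (UG n)) [μ.IsHaarMeasure] [IsProbabilityMeasure μ]
    (l : Fin n → ℂ) (τ : Equiv.Perm (Fin n)) (α : Fin n → ℕ) :
    JJ μ l (fun i => α (τ i)) 0 = (Equiv.Perm.sign τ : ℤ) * JJ μ l α 0 := by
  unfold JJ
  rw [← perm_inv μ l τ, ← integral_const_mul]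
  congr 1
  funext u
  unfold dE
  rw [← Matrix.det_permute]
  rfl

theorem Ldet_monomial {n : ℕ} (l : Fin n → ℂ) (α : Fin n →₀ ℕ) :
    Ldet l 0 (MvPolynomial.monomial α 1) = (Matrix.of fun i j => l i ^ α j).det := by
  rw [Ldet_apply, Matrix.det_apply']
  refine Finset.sum_congr rfl fun σ _ => ?_
  simp [MvPolynomial.aeval_monomial, Finsupp.prod_fintype]

theorem Ldet_one {n : ℕ} (l c : Fin n → ℂ) :
    Ldet l c 1 = (Matrix.of fun i j => Complex.exp (l i * c j)).det := by
  rw [Ldet_apply, Matrix.det_apply']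
  refine Finset.sum_congr rfl fun σ _ => ?_
  simp [← Complex.exp_sum, mul_comm]

theorem JJ_delta {n : ℕ} (μ : Measure (UG n)) [IsProbabilityMeasure μ]
    (l : Fin n → ℂ) : JJ μ l (fun i => (i : ℕ)) 0 = ∏ i : Fin n, ((i : ℕ).factorial : ℂ) := by
  have : ∀ x : Fin n → ℂ, dE (fun i => (i : ℕ)) 0 x = ∏ i : Fin n, ((i : ℕ).factorial : ℂ) := by
    intro x
    unfold dE
    rw [Matrix.det_of_lowerTriangular]
    · refine Finset.prod_congr rfl fun i _ => ?_
      simp [EE_at_zero_eq]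
    · intro i j hij
      have : i < j := hij
      simp only [Matrix.of_apply, Pi.zero_apply]
      exact EE_at_zero_lt _ _ _ this
  unfold JJ
  simp [this]

/-- The difference functional. -/
noncomputable def Theta {n : ℕ} (μ : Measure (UG n)) (l c : Fin n → ℂ) :
    MvPolynomial (Fin n) ℂ →ₗ[ℂ] ℂ :=
  (Matrix.vandermonde l).det • Lam μ l c - (∏ i : Fin n, ((i : ℕ).factorial : ℂ)) • Ldet l c

theorem Theta_small {n : ℕ} (μ : Measure (UG n)) [μ.IsHaarMeasure] [IsProbabilityMeasure μ]
    (l : Fin n → ℂ) (α : Fin n →₀ ℕ) (hα : ∀ i, α i < n) :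
    Theta μ l 0 (MvPolynomial.monomial α 1) = 0 := by
  simp only [Theta, LinearMap.sub_apply, LinearMap.smul_apply, smul_eq_mul, Lam_monomial,
    Ldet_monomial, one_mul]
  by_cases hinj : Function.Injective α
  · let f : Fin n → Fin n := fun i => ⟨α i, hα i⟩
    have hf : Function.Injective f := fun a b h => hinj (by simpa [f] using h)
    let τ : Equiv.Perm (Fin n) := Equiv.ofBijective f (Finite.injective_iff_bijective.1 hf)
    have hτ : (α : Fin n → ℕ) = fun i => ((τ i : Fin n) : ℕ) := by
      funext i; simp [τ, f]
    have h1 : JJ μ l α 0 = (Equiv.Perm.sign τ : ℤ) * ∏ i : Fin n, ((i : ℕ).factorial : ℂ) := by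
      rw [hτ, ← JJ_delta μ l]
      exact JJ_antisymm μ l τ (fun i => (i : ℕ))
    have h2 : (Matrix.of fun i j => l i ^ α j).det =
        (Equiv.Perm.sign τ : ℤ) * (Matrix.vandermonde l).det := by
      rw [← Matrix.det_permute']
      congr 1
    rw [h1, h2]; ring
  · have h' : ∃ a b, α a = α b ∧ a ≠ b := by
      simpa [Function.Injective] using hinj
    obtain ⟨a, b, hab, hne⟩ := h'
    have h1 : JJ μ l α 0 = 0 := by
      have h := JJ_antisymm μ l (Equiv.swap a b) α
      have e : (fun i => α (Equiv.swap a b i)) = α := by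
        funext i
        by_cases ha : i = a
        · subst ha; simp [hab]
        · by_cases hb : i = b
          · subst hb; simp [hab]
          · rw [Equiv.swap_apply_of_ne_of_ne ha hb]
      rw [e, Equiv.Perm.sign_swap hne] at h
      simp at h
      exact self_eq_neg.1 h
    have h2 : (Matrix.of fun i j => l i ^ α j).det = 0 := by
      refine Matrix.det_zero_of_column_eq hne fun i => ?_
      simp [hab]
    rw [h1, h2]; ring

theorem Theta_zero {n : ℕ} (μ : Measure (UG n)) [μ.IsHaarMeasure] [IsProbabilityMeasure μ]
    (l c : Fin n → ℂ) (p : MvPolynomial (Fin n) ℂ) : Theta μ l c p = 0 := by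
  have hR : ∀ c i p, Theta μ l c ((∏ j, (MvPolynomial.C (l j) - MvPolynomial.X i)) * p) = 0 := by
    intro c i p
    simp only [Theta, LinearMap.sub_apply, LinearMap.smul_apply, R3, Ldet_rel, smul_zero, sub_zero]
  refine uniq l (Theta μ l) ?_ hR ?_ c p
  · intro c k p t
    simp only [Theta, LinearMap.sub_apply, LinearMap.smul_apply, smul_eq_mul]
    exact ((Lam_deriv μ l c k p t).const_mul _).sub ((Ldet_deriv l c k p t).const_mul _)
  · exact zero_of_small l _ (hR 0) (Theta_small μ l)

theorem main_identity {n : ℕ} (μ : Measure (UG n)) [μ.IsHaarMeasure] [IsProbabilityMeasure μ]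
    (l c : Fin n → ℂ) :
    (Matrix.vandermonde l).det * ((Matrix.vandermonde c).det * ∫ u, wt c (XX l u) ∂μ) =
      (∏ i : Fin n, ((i : ℕ).factorial : ℂ)) *
        (Matrix.of fun i j => Complex.exp (l i * c j)).det := by
  have h := Theta_zero μ l c 1
  have h1 : Lam μ l c 1 = JJ μ l 0 c := by
    have := Lam_monomial μ l c 0 1
    rw [one_mul] at this
    exact this
  simp only [Theta, LinearMap.sub_apply, LinearMap.smul_apply, smul_eq_mul, h1, Ldet_one, JJ_zero,
    sub_eq_zero] at h
  exact h

theorem trace_eq {n : ℕ} (l c : Fin n → ℂ) (u : UG n) :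
    ((u : MM n) * Matrix.diagonal l * ((u⁻¹ : UG n) : MM n) * Matrix.diagonal c).trace =
      ∑ j, c j * XX l u j j := by
  have h : ((u⁻¹ : UG n) : MM n) = star (u : MM n) := rfl
  rw [h, Matrix.trace]
  refine Finset.sum_congr rfl fun j _ => ?_
  rw [Matrix.diag_apply, Matrix.mul_diagonal, mul_comm]
  rfl

theorem vand_ne {n : ℕ} (a : Fin n → ℝ) (ha : StrictMono a) :
    (∏ i : Fin n, ∏ j ∈ Finset.Ioi i, ((a j : ℂ) - (a i : ℂ))) ≠ 0 := by
  refine Finset.prod_ne_zero_iff.2 fun i _ => Finset.prod_ne_zero_iff.2 fun j hj => ?_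
  rw [sub_ne_zero]
  intro h
  exact (ha (Finset.mem_Ioi.1 hj)).ne' (by exact_mod_cast h)

theorem fact_prod (n : ℕ) : (∏ p ∈ Finset.Ico 1 n, (Nat.factorial p : ℂ)) =
    ∏ i : Fin n, ((i : ℕ).factorial : ℂ) := by
  rw [← Finset.prod_range (fun i => (Nat.factorial i : ℂ))]
  cases n with
  | zero => simp
  | succ n =>
    rw [Finset.range_eq_Ico, Finset.prod_eq_prod_Ico_succ_bot (Nat.succ_pos n)]
    simp

end HCIZ

/-- The Harish-Chandra–Itzykson–Zuber integral formula: for real diagonal matrices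
`A = diag(a)`, `B = diag(b)` with strictly increasing entries,
`∫_{U(n)} e^{Tr(uAu⁻¹B)} du = (∏_{p=1}^{n-1} p!) det[e^{aᵢbⱼ}] / (Δ(A)Δ(B))`,
where `du` is the normalized Haar measure on the unitary group. -/
theorem HCIZ_formula (n : ℕ) (μ : Measure (Matrix.unitaryGroup (Fin n) ℂ))
    [μ.IsHaarMeasure] [IsProbabilityMeasure μ]
    (a b : Fin n → ℝ) (ha : StrictMono a) (hb : StrictMono b) :
    ∫ u : Matrix.unitaryGroup (Fin n) ℂ,
        Complex.exp
          (((↑u : Matrix (Fin n) (Fin n) ℂ) * Matrix.diagonal (fun i => (a i : ℂ)) *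
              (↑(u⁻¹) : Matrix (Fin n) (Fin n) ℂ) *
              Matrix.diagonal (fun i => (b i : ℂ))).trace) ∂μ =
      (∏ p ∈ Finset.Ico 1 n, (Nat.factorial p : ℂ)) *
        (Matrix.of fun i j : Fin n => Complex.exp ((a i : ℂ) * (b j : ℂ))).det /
          ((∏ i : Fin n, ∏ j ∈ Finset.Ioi i, ((a j : ℂ) - (a i : ℂ))) *
            (∏ i : Fin n, ∏ j ∈ Finset.Ioi i, ((b j : ℂ) - (b i : ℂ)))) := by
  have h := HCIZ.main_identity μ (fun i => (a i : ℂ)) (fun i => (b i : ℂ))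
  rw [Matrix.det_vandermonde, Matrix.det_vandermonde] at h
  rw [eq_div_iff (mul_ne_zero (HCIZ.vand_ne a ha) (HCIZ.vand_ne b hb)), HCIZ.fact_prod, ← h]
  simp_rw [HCIZ.trace_eq]
  unfold HCIZ.wt
  ring
end

section
/- Character expansion of the HCIZ kernel: for all n×n complex matrices x, y, ∫_{U(n)} e^{Tr(u⁻¹ x u y*)} du = Σ_λ (δ!/(λ+δ)!) χ_λ(x) conj(χ_λ(y)), where the sum runs over partitions λ with at most n parts and converges absolutely and uniformly on compact subsets of M_n(ℂ) × M_n(ℂ). -/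
open MvPolynomial MeasureTheory

/-- The Vandermonde polynomial `∏_{i<j} (z_i - z_j) = a_δ`. -/
noncomputable def vand (n : ℕ) : MvPolynomial (Fin n) ℂ :=
  ∏ i : Fin n, ∏ j ∈ Finset.Ioi i, (X i - X j)

/-- `a_ν(z) = det [zᵢ^(ν_j)]`. -/
noncomputable def aDet (n : ℕ) (ν : Fin n → ℕ) : MvPolynomial (Fin n) ℂ :=
  (Matrix.of fun i j : Fin n => (X i : MvPolynomial (Fin n) ℂ) ^ (ν j)).det

/-- `λ + δ` where `δ = (n-1, n-2, …, 0)`. -/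
def shiftedExp (n : ℕ) (lam : Fin n → ℕ) : Fin n → ℕ := fun j => lam j + (n - 1 - (j : ℕ))

/-- The eigenvalues of a complex matrix, listed (with multiplicity) as the roots of its
characteristic polynomial. -/
noncomputable def eigs {n : ℕ} (x : Matrix (Fin n) (Fin n) ℂ) : Fin n → ℂ :=
  fun i => (Matrix.charpoly x).roots.toList.getD i 0

/-- Partitions with at most `n` parts. -/
def Partn (n : ℕ) := {lam : Fin n → ℕ // Antitone lam}


set_option linter.unusedSectionVars false

section Diff
variable {σ : Type*} [Fintype σ] [DecidableEq σ]

/-- Partial derivative as a linear endomorphism. -/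
noncomputable def pd (i : σ) : Module.End ℂ (MvPolynomial σ ℂ) := (pderiv i).toLinearMap

lemma pd_apply (i : σ) (f : MvPolynomial σ ℂ) : pd i f = pderiv i f := rfl

lemma pd_comm (i j : σ) : pd i * pd j = pd j * pd i := by
  have h : ⁅(pderiv i : Derivation ℂ (MvPolynomial σ ℂ) (MvPolynomial σ ℂ)),
      (pderiv j : Derivation ℂ (MvPolynomial σ ℂ) (MvPolynomial σ ℂ))⁆ = 0 := by
    apply MvPolynomial.derivation_ext
    intro k
    simp only [Derivation.commutator_apply, pderiv_X, Pi.single_apply]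
    split_ifs <;> simp
  apply LinearMap.ext
  intro f
  have := congrArg (fun d => d f) h
  simp only [Derivation.commutator_apply, Derivation.zero_apply] at this
  exact sub_eq_zero.mp this

/-- Multiplication operator. -/
noncomputable def mulOp (P : MvPolynomial σ ℂ) : Module.End ℂ (MvPolynomial σ ℂ) :=
  LinearMap.mulLeft ℂ P

lemma mulOp_apply (P f : MvPolynomial σ ℂ) : mulOp P f = P * f := rfl

lemma mulOp_mul (P Q : MvPolynomial σ ℂ) : mulOp (P * Q) = mulOp P * mulOp Q := by
  apply LinearMap.ext; intro f; simp [mulOp_apply, mul_assoc]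

lemma pd_mulOp_X (i j : σ) :
    pd i * mulOp (X j) - mulOp (X j) * pd i = if i = j then 1 else 0 := by
  apply LinearMap.ext
  intro f
  simp only [LinearMap.sub_apply, Module.End.mul_apply, pd_apply, mulOp_apply, Derivation.leibniz,
    pderiv_X, Pi.single_apply, smul_eq_mul]
  by_cases h : i = j
  · subst h; simp
  · simp [h, Ne.symm h]

theorem dop_exists (τ : σ → σ) :
    ∃ φ : MvPolynomial σ ℂ →ₐ[ℂ] Module.End ℂ (MvPolynomial σ ℂ), ∀ i, φ (X i) = pd (τ i) := by
  let s : Set (Module.End ℂ (MvPolynomial σ ℂ)) := Set.range pd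
  have hc : ∀ a ∈ s, ∀ b ∈ s, a * b = b * a := by
    rintro _ ⟨i, rfl⟩ _ ⟨j, rfl⟩
    exact pd_comm i j
  have hcm := Algebra.isMulCommutative_adjoin ℂ hc
  let inst : CommRing (Algebra.adjoin ℂ s) :=
    { (Algebra.adjoin ℂ s).toRing with mul_comm := fun a b => hcm.is_comm.comm a b }
  refine ⟨(Algebra.adjoin ℂ s).val.comp
    (aeval fun i => ⟨pd (τ i), Algebra.subset_adjoin ⟨τ i, rfl⟩⟩), fun i => ?_⟩
  simp

/-- `P ↦ P(∂)`, with the variable `X i` acting as `∂_{τ i}`. -/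
noncomputable def dop (τ : σ → σ) :
    MvPolynomial σ ℂ →ₐ[ℂ] Module.End ℂ (MvPolynomial σ ℂ) := (dop_exists τ).choose

lemma dop_X (τ : σ → σ) (i : σ) : dop τ (X i) = pd (τ i) := (dop_exists τ).choose_spec i

/-- The Laplacian attached to `τ`. -/
noncomputable def Lap (τ : σ → σ) : Module.End ℂ (MvPolynomial σ ℂ) := ∑ i, pd i * pd (τ i)

/-- The commutator. -/
noncomputable def adL {A : Type*} [Ring A] [Algebra ℂ A] (D : A) : Module.End ℂ A :=
  LinearMap.mulLeft ℂ D - LinearMap.mulRight ℂ D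

lemma adL_apply {A : Type*} [Ring A] [Algebra ℂ A] (D a : A) : adL D a = D * a - a * D := rfl

lemma adL_mul {A : Type*} [Ring A] [Algebra ℂ A] (D a b : A) :
    adL D (a * b) = adL D a * b + a * adL D b := by
  simp only [adL_apply]; noncomm_ring

lemma adL_pow_mul {A : Type*} [Ring A] [Algebra ℂ A] (D a b : A) (ha : adL D (adL D a) = 0)
    (k : ℕ) : (adL D ^ (k + 1)) (a * b) =
      a * (adL D ^ (k + 1)) b + ((k + 1 : ℕ) : ℂ) • (adL D a * (adL D ^ k) b) := by
  induction k with
  | zero => simp [adL_mul, add_comm]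
  | succ k ih =>
    rw [pow_succ', Module.End.mul_apply, ih, map_add, map_smul, adL_mul, adL_mul, ha,
      ← Module.End.mul_apply (adL D) (adL D ^ (k+1)), ← pow_succ',
      ← Module.End.mul_apply (adL D) (adL D ^ (k)), ← pow_succ']
    rw [zero_mul, zero_add]
    push_cast
    module

lemma Lap_pd (τ : σ → σ) (i : σ) : Lap τ * pd i = pd i * Lap τ := by
  unfold Lap
  rw [Finset.sum_mul, Finset.mul_sum]
  refine Finset.sum_congr rfl fun j _ => ?_
  rw [mul_assoc, pd_comm (τ j) i, ← mul_assoc, pd_comm j i, mul_assoc]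

lemma adL_Lap_X (τ : σ → σ) (hτ : Function.Involutive τ) (i : σ) :
    adL (Lap τ) (mulOp (X i)) = (2 : ℂ) • pd (τ i) := by
  have h : ∀ j, (pd j * pd (τ j)) * mulOp (X i) - mulOp (X i) * (pd j * pd (τ j)) =
      (if j = τ i then pd (τ i) else 0) + (if j = i then pd (τ i) else 0) := by
    intro j
    have e : (pd j * pd (τ j)) * mulOp (X i) - mulOp (X i) * (pd j * pd (τ j)) =
      pd j * (pd (τ j) * mulOp (X i) - mulOp (X i) * pd (τ j)) +
      (pd j * mulOp (X i) - mulOp (X i) * pd j) * pd (τ j) := by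
      rw [mul_sub, sub_mul]; simp only [mul_assoc]; abel
    rw [e, pd_mulOp_X, pd_mulOp_X]
    have h1 : τ j = i ↔ j = τ i := ⟨fun h => by rw [← h, hτ], fun h => by rw [h, hτ]⟩
    simp only [h1]
    congr 1
    · split_ifs with h
      · rw [h, mul_one]
      · simp
    · split_ifs with h
      · rw [h, one_mul]
      · simp
  rw [adL_apply, Lap, Finset.sum_mul, Finset.mul_sum, ← Finset.sum_sub_distrib,
    Finset.sum_congr rfl fun j _ => h j, Finset.sum_add_distrib]
  simp [two_smul]

lemma dop_comm_Lap (τ : σ → σ) (P : MvPolynomial σ ℂ) : adL (Lap τ) (dop τ P) = 0 := by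
  induction P using MvPolynomial.induction_on with
  | C a =>
    rw [← MvPolynomial.algebraMap_eq, AlgHom.commutes, adL_apply, Algebra.commutes, sub_self]
  | add p q hp hq => rw [map_add, map_add, hp, hq, add_zero]
  | mul_X p i hp =>
    rw [map_mul, adL_mul, hp, dop_X, adL_apply, Lap_pd]; simp

lemma adL_monomial (τ : σ → σ) (hτ : Function.Involutive τ) (k : ℕ) :
    ∀ m : σ →₀ ℕ, m.degree = k →
      (adL (Lap τ) ^ k) (mulOp (monomial m 1)) =
        ((2 : ℂ) ^ k * (k.factorial : ℂ)) • dop τ (monomial m 1) := by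
  induction k with
  | zero =>
    intro m hm
    have : m = 0 := (Finsupp.degree_eq_zero_iff m).mp hm
    subst this
    have h1 : (monomial (0 : σ →₀ ℕ) (1 : ℂ)) = 1 := rfl
    rw [h1, map_one]
    simp only [pow_zero, Module.End.one_apply, Nat.factorial_zero, Nat.cast_one, mul_one, one_smul]
    apply LinearMap.ext; intro f; simp [mulOp_apply]
  | succ k ih =>
    intro m hm
    obtain ⟨i, hi⟩ : ∃ i, m i ≠ 0 := by
      by_contra! h
      have : m = 0 := Finsupp.ext h
      simp [this] at hm
    set m' := m - Finsupp.single i 1 with hm'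
    have hmm : m = Finsupp.single i 1 + m' := by
      rw [hm', add_tsub_cancel_of_le]
      simpa using Nat.one_le_iff_ne_zero.mpr hi
    have hd : m'.degree = k := by
      rw [hmm, map_add] at hm
      simp at hm; omega
    have hmon : (monomial m (1 : ℂ)) = X i * monomial m' 1 := by
      rw [hmm, X, monomial_mul, one_mul]
    rw [hmon, mulOp_mul, adL_pow_mul, adL_Lap_X τ hτ, pow_succ', Module.End.mul_apply, ih m' hd]
    · rw [map_smul, dop_comm_Lap, smul_zero, mul_zero, zero_add, map_mul, dop_X, smul_mul_smul_comm,
        smul_smul]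
      congr 1
      push_cast [Nat.factorial_succ]
      ring
    · rw [adL_Lap_X τ hτ, map_smul, adL_apply, Lap_pd]; simp

lemma adL_homog (τ : σ → σ) (hτ : Function.Involutive τ) (k : ℕ) (P : MvPolynomial σ ℂ)
    (hP : P.IsHomogeneous k) :
    (adL (Lap τ) ^ k) (mulOp P) = ((2 : ℂ) ^ k * (k.factorial : ℂ)) • dop τ P := by
  have hlin : ∀ (m : σ →₀ ℕ) (c : ℂ), mulOp (monomial m c) = c • mulOp (monomial m 1) := by
    intro m c
    apply LinearMap.ext; intro f
    rw [LinearMap.smul_apply, mulOp_apply, mulOp_apply, ← smul_mul_assoc, smul_monomial]; simp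
  have hlin2 : ∀ (m : σ →₀ ℕ) (c : ℂ), dop τ (monomial m c) = c • dop τ (monomial m 1) := by
    intro m c
    rw [← map_smul, smul_monomial]; simp
  have hsum : mulOp P = ∑ m ∈ P.support, mulOp (monomial m (coeff m P)) := by
    apply LinearMap.ext; intro f
    rw [LinearMap.sum_apply]
    simp only [mulOp_apply]
    rw [← Finset.sum_mul, ← P.as_sum]
  rw [hsum]
  conv_rhs => rw [P.as_sum]
  rw [map_sum, map_sum, Finset.smul_sum]
  refine Finset.sum_congr rfl fun m hm => ?_
  have hd : m.degree = k := by
    have := hP (mem_support_iff.mp hm)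
    rw [Finsupp.degree_eq_weight_one]; exact this
  rw [hlin, hlin2, map_smul, adL_monomial τ hτ k m hd, smul_comm]

lemma dop_monomial_pow (τ : σ → σ) (w : σ → ℂ) (l : MvPolynomial σ ℂ)
    (hl : ∀ i, pderiv (τ i) l = C (w i)) (k : ℕ) (m : σ →₀ ℕ) :
    ∀ d : ℕ, m.degree = d → dop τ (monomial m 1) (l ^ k) =
      ((k.descFactorial d : ℂ) * eval w (monomial m 1)) • l ^ (k - d) := by
  intro d
  induction d generalizing m with
  | zero =>
    intro hm
    have : m = 0 := (Finsupp.degree_eq_zero_iff m).mp hm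
    subst this
    have h1 : (monomial (0 : σ →₀ ℕ) (1 : ℂ)) = 1 := rfl
    rw [h1, map_one]
    simp
  | succ d ih =>
    intro hm
    obtain ⟨i, hi⟩ : ∃ i, m i ≠ 0 := by
      by_contra! h
      have : m = 0 := Finsupp.ext h
      simp [this] at hm
    set m' := m - Finsupp.single i 1 with hm'
    have hmm : m = Finsupp.single i 1 + m' := by
      rw [hm', add_tsub_cancel_of_le]
      simpa using Nat.one_le_iff_ne_zero.mpr hi
    have hd : m'.degree = d := by
      rw [hmm, map_add] at hm
      simp at hm; omega
    have hmon : (monomial m (1 : ℂ)) = X i * monomial m' 1 := by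
      rw [hmm, X, monomial_mul, one_mul]
    rw [hmon, map_mul, Module.End.mul_apply, ih m' hd, map_smul, dop_X, pd_apply,
      Derivation.leibniz_pow, hl, map_mul, eval_X, Nat.descFactorial_succ, Nat.sub_sub]
    simp only [smul_eq_C_mul, smul_eq_mul, nsmul_eq_mul, map_mul, map_natCast, Nat.cast_mul]
    ring

lemma eval_zero_dop_pow (τ : σ → σ) (w : σ → ℂ) (l : MvPolynomial σ ℂ)
    (hl : ∀ i, pderiv (τ i) l = C (w i)) (hl0 : eval 0 l = 0) (k : ℕ) (P : MvPolynomial σ ℂ) :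
    eval 0 (dop τ P (l ^ k)) = (k.factorial : ℂ) * eval w (homogeneousComponent k P) := by
  induction P using MvPolynomial.induction_on' with
  | monomial m c =>
    have e : monomial m c = c • monomial m (1 : ℂ) := by rw [smul_monomial]; simp
    rw [e, map_smul, LinearMap.smul_apply, dop_monomial_pow τ w l hl k m _ rfl, smul_eval,
      (homogeneousComponent k).map_smul,
      homogeneousComponent_of_mem (isHomogeneous_monomial (1 : ℂ) rfl)]
    simp only [smul_eval, map_pow, hl0]
    split_ifs with h
    · subst h
      simp [Nat.descFactorial_self]; ring
    · rcases lt_or_gt_of_ne h with h | h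
      · rw [Nat.descFactorial_eq_zero_iff_lt.mpr h]; simp
      · rw [zero_pow (by omega)]; simp
  | add p q hp hq =>
    rw [map_add, LinearMap.add_apply, map_add, hp, hq, map_add, map_add, mul_add]

end Diff

set_option linter.unusedSectionVars false

section Anti
variable {n : ℕ}

lemma eval_zero_coeff {σ : Type*} (f : MvPolynomial σ ℂ) : eval 0 f = coeff 0 f := by
  rw [eval_zero, constantCoeff_eq]

lemma coeff_pd {σ : Type*} [DecidableEq σ] (i : σ) (m : σ →₀ ℕ) (f : MvPolynomial σ ℂ) :
    coeff m (pderiv i f) = coeff (m + Finsupp.single i 1) f * ((m i : ℂ) + 1) := by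
  induction f using MvPolynomial.induction_on' with
  | monomial u a =>
    rw [pderiv_monomial, coeff_monomial, coeff_monomial]
    by_cases h : u = m + Finsupp.single i 1
    · subst h
      simp
    · rw [if_neg h]
      by_cases h0 : u i = 0
      · simp [h0]
      · rw [if_neg, zero_mul]
        intro h2
        apply h
        rw [← h2, tsub_add_cancel_of_le]
        simpa using Nat.one_le_iff_ne_zero.mpr h0
  | add p q hp hq => simp only [map_add, coeff_add, hp, hq, add_mul]

lemma fis_monomial (k : ℕ) : ∀ (m : Fin n →₀ ℕ) (G : MvPolynomial (Fin n) ℂ), m.degree = k →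
    eval 0 (dop id (monomial m 1) G) = (∏ i, ((m i).factorial : ℂ)) * coeff m G := by
  induction k with
  | zero =>
    intro m G hm
    have : m = 0 := (Finsupp.degree_eq_zero_iff m).mp hm
    subst this
    have h1 : (monomial (0 : Fin n →₀ ℕ) (1 : ℂ)) = 1 := rfl
    rw [h1, map_one]
    simp [constantCoeff_eq]
  | succ d ih =>
    intro m G hm
    obtain ⟨i, hi⟩ : ∃ i, m i ≠ 0 := by
      by_contra! h
      have : m = 0 := Finsupp.ext h
      simp [this] at hm
    set m' := m - Finsupp.single i 1 with hm'
    have hmm : m = m' + Finsupp.single i 1 := by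
      rw [hm', tsub_add_cancel_of_le]
      simpa using Nat.one_le_iff_ne_zero.mpr hi
    have hd : m'.degree = d := by
      rw [hmm, map_add] at hm
      simp at hm; omega
    have hmon : (monomial m (1 : ℂ)) = monomial m' 1 * X i := by
      rw [hmm, X, monomial_mul, one_mul]
    rw [hmon, map_mul, Module.End.mul_apply, dop_X, pd_apply, id, ih _ _ hd, coeff_pd, ← hmm]
    have : (∏ j, ((m j).factorial : ℂ)) = (∏ j, ((m' j).factorial : ℂ)) * ((m' i : ℂ) + 1) := by
      rw [← Finset.mul_prod_erase _ _ (Finset.mem_univ i),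
        ← Finset.mul_prod_erase _ (fun j => ((m' j).factorial : ℂ)) (Finset.mem_univ i)]
      have h1 : m i = m' i + 1 := by rw [hmm]; simp
      rw [h1, Nat.factorial_succ, Finset.prod_congr rfl (g := fun j => ((m' j).factorial : ℂ))]
      · push_cast; ring
      · intro j hj
        rw [hmm]
        simp [(Finset.ne_of_mem_erase hj).symm]
    rw [this]; ring

/-- Exponent vector as a finsupp. -/
noncomputable def ex (ν : Fin n → ℕ) : Fin n →₀ ℕ := Finsupp.equivFunOnFinite.symm ν

@[simp] lemma ex_apply (ν : Fin n → ℕ) (i : Fin n) : ex ν i = ν i := rfl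

lemma mapDomain_ex (ν : Fin n → ℕ) (π : Equiv.Perm (Fin n)) :
    (ex ν).mapDomain π = ex (ν ∘ π.symm) := by
  ext i
  conv_lhs => rw [← π.apply_symm_apply i]
  rw [Finsupp.mapDomain_apply π.injective]
  rfl

lemma ex_degree (ν : Fin n → ℕ) : (ex ν).degree = ∑ i, ν i := by
  rw [Finsupp.degree_eq_sum]; rfl

/-- The sign as a complex number. -/
noncomputable def sg (π : Equiv.Perm (Fin n)) : ℂ := ((Equiv.Perm.sign π : ℤ) : ℂ)

lemma sg_mul_self (π : Equiv.Perm (Fin n)) : sg π * sg π = 1 := by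
  unfold sg
  rw [← Int.cast_mul, ← Units.val_mul, Int.units_mul_self]; simp

/-- Antisymmetric polynomials. -/
def Anti (G : MvPolynomial (Fin n) ℂ) : Prop :=
  ∀ π : Equiv.Perm (Fin n), rename π G = C (sg π) * G

lemma aDet_eq (ν : Fin n → ℕ) :
    aDet n ν = ∑ π : Equiv.Perm (Fin n), C (sg π) * monomial (ex (ν ∘ π.symm)) 1 := by
  rw [aDet, Matrix.det_apply]
  refine Finset.sum_congr rfl fun π _ => ?_
  rw [Units.smul_def, zsmul_eq_mul, sg, map_intCast]
  congr 1
  rw [← mapDomain_ex, ← rename_monomial]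
  have : (monomial (ex ν) (1 : ℂ)) = ∏ i, X i ^ ν i := by
    rw [monomial_eq]
    simp [Finsupp.prod_fintype]
  rw [this, map_prod]
  simp

lemma aDet_anti (ν : Fin n → ℕ) : Anti (aDet n ν) := by
  intro π
  have h1 : rename π (aDet n ν) = ((Matrix.of fun i j : Fin n =>
      (X i : MvPolynomial (Fin n) ℂ) ^ (ν j)).submatrix π id).det := by
    rw [aDet, AlgHom.map_det]
    congr 1
    ext i j
    simp
  rw [h1, Matrix.det_permute, sg, map_intCast]
  rfl

lemma aDet_homog (ν : Fin n → ℕ) : (aDet n ν).IsHomogeneous (∑ i, ν i) := by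
  rw [aDet_eq]
  refine IsHomogeneous.sum _ _ _ fun π _ => ?_
  rw [← zero_add (∑ i, ν i)]
  refine (isHomogeneous_C _ _).mul (isHomogeneous_monomial _ ?_)
  rw [ex_degree]
  exact Equiv.sum_comp π.symm ν

lemma vand_eq : vand n = aDet n (shiftedExp n 0) := by
  have h := Matrix.det_projVandermonde (n := n) (fun _ => (1 : MvPolynomial (Fin n) ℂ)) X
  rw [aDet, vand]
  have h2 : (Matrix.of fun i j : Fin n => (X i : MvPolynomial (Fin n) ℂ) ^ (shiftedExp n 0 j)) =
      Matrix.projVandermonde (fun _ => (1 : MvPolynomial (Fin n) ℂ)) X := by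
    ext1 i j
    rw [Matrix.projVandermonde_apply]
    simp only [Matrix.of_apply, shiftedExp, Pi.zero_apply, zero_add, one_pow, one_mul, Fin.val_rev]
    congr 1; omega
  rw [h2, h]
  simp

lemma coeff_anti {G : MvPolynomial (Fin n) ℂ} (hG : Anti G) (ν : Fin n → ℕ)
    (π : Equiv.Perm (Fin n)) : coeff (ex (ν ∘ π.symm)) G = sg π * coeff (ex ν) G := by
  have h := coeff_rename_mapDomain π π.injective G (ex ν)
  rw [hG π, coeff_C_mul, mapDomain_ex] at h
  rw [← h, ← mul_assoc, sg_mul_self, one_mul]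

lemma fis_aDet (ν : Fin n → ℕ) (G : MvPolynomial (Fin n) ℂ) :
    eval 0 (dop id (aDet n ν) G) = (∏ i, ((ν i).factorial : ℂ)) *
      ∑ π : Equiv.Perm (Fin n), sg π * coeff (ex (ν ∘ π.symm)) G := by
  rw [aDet_eq, map_sum, LinearMap.sum_apply, map_sum, Finset.mul_sum]
  refine Finset.sum_congr rfl fun π _ => ?_
  rw [← smul_eq_C_mul, map_smul, LinearMap.smul_apply, smul_eval, fis_monomial _ _ _ rfl]
  have : (∏ i, ((ex (ν ∘ π.symm) i).factorial : ℂ)) = ∏ i, ((ν i).factorial : ℂ) :=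
    Equiv.prod_comp π.symm (fun i => ((ν i).factorial : ℂ))
  rw [this]; ring

lemma fis_aDet_anti (ν : Fin n → ℕ) {G : MvPolynomial (Fin n) ℂ} (hG : Anti G) :
    eval 0 (dop id (aDet n ν) G) =
      (n.factorial : ℂ) * (∏ i, ((ν i).factorial : ℂ)) * coeff (ex ν) G := by
  rw [fis_aDet]
  have : ∀ π : Equiv.Perm (Fin n), sg π * coeff (ex (ν ∘ π.symm)) G = coeff (ex ν) G := by
    intro π
    rw [coeff_anti hG, ← mul_assoc, sg_mul_self, one_mul]
  simp only [this, Finset.sum_const, Finset.card_univ, Fintype.card_perm, Fintype.card_fin,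
    nsmul_eq_mul]
  ring

lemma coeff_homog_mul {D : MvPolynomial (Fin n) ℂ} {N : ℕ} (hD : D.IsHomogeneous N)
    (g : MvPolynomial (Fin n) ℂ) (m : Fin n →₀ ℕ) (hm : m.degree = N) :
    coeff m (D * g) = coeff m D * eval 0 g := by
  rw [coeff_mul, Finset.sum_eq_single (m, 0)]
  · simp [constantCoeff_eq]
  · rintro ⟨a, b⟩ hab hne
    rw [Finset.HasAntidiagonal.mem_antidiagonal] at hab
    simp only at hab ⊢
    by_cases ha : coeff a D = 0
    · rw [ha, zero_mul]
    · exfalso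
      have h1 : a.degree = N := by
        rw [Finsupp.degree_eq_weight_one]; exact hD ha
      have h2 : b.degree = 0 := by
        rw [← hab, map_add] at hm; omega
      rw [Finsupp.degree_eq_zero_iff] at h2
      subst h2
      apply hne
      simpa using hab
  · intro h
    simp at h

lemma strictAnti_perm {ν m : Fin n → ℕ} (hν : StrictAnti ν) (hm : StrictAnti m)
    (π : Equiv.Perm (Fin n)) (h : ν ∘ π = m) : π = 1 := by
  have hs : StrictMono π := by
    intro i j hij
    have := hm hij
    rw [← h] at this
    exact hν.lt_iff_gt.mp this
  ext i
  have := congrFun ((hs.range_inj strictMono_id).mp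
    (by rw [Set.range_id, π.surjective.range_eq])) i
  simp [this]

lemma coeff_aDet {ν m : Fin n → ℕ} (hν : StrictAnti ν) (hm : StrictAnti m) :
    coeff (ex m) (aDet n ν) = if m = ν then 1 else 0 := by
  rw [aDet_eq, coeff_sum]
  simp only [coeff_C_mul, coeff_monomial]
  split_ifs with h
  · subst h
    rw [Finset.sum_eq_single 1]
    · simp [sg]
      rfl
    · intro π _ hπ
      rw [if_neg, mul_zero]
      intro h
      apply hπ
      have := strictAnti_perm hν hm π.symm (Finsupp.equivFunOnFinite.symm.injective h)
      rw [← π.symm_symm, this]; rfl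
    · simp
  · apply Finset.sum_eq_zero
    intro π _
    rw [if_neg, mul_zero]
    intro h2
    have h3 := Finsupp.equivFunOnFinite.symm.injective h2
    have := strictAnti_perm hν hm π.symm h3
    rw [this] at h3
    exact h h3.symm

lemma anti_eq_zero {G : MvPolynomial (Fin n) ℂ} (hG : Anti G)
    (h : ∀ m : Fin n → ℕ, StrictAnti m → coeff (ex m) G = 0) : G = 0 := by
  ext m'
  obtain ⟨m, rfl⟩ : ∃ m, m' = ex m := ⟨m', by ext; simp⟩
  rw [coeff_zero]
  by_cases hinj : Function.Injective m
  · let e := Tuple.sort m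
    have h1 : Monotone (m ∘ e) := Tuple.monotone_sort m
    have h2 : StrictMono (m ∘ e) := h1.strictMono_of_injective (hinj.comp e.injective)
    let π : Equiv.Perm (Fin n) := (Fin.revPerm.trans e).symm
    have h3 : StrictAnti (m ∘ π.symm) := by
      intro i j hij
      exact h2 (Fin.rev_lt_rev.mpr hij)
    have h4 := coeff_anti hG m π
    rw [h _ h3] at h4
    have : sg π ≠ 0 := fun h0 => by have := sg_mul_self π; rw [h0] at this; simp at this
    exact (mul_eq_zero.mp h4.symm).resolve_left this
  · simp only [Function.Injective, not_forall] at hinj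
    obtain ⟨i, j, hij, hne⟩ := hinj
    have h4 := coeff_anti hG m (Equiv.swap i j)
    have h5 : m ∘ (Equiv.swap i j).symm = m := by
      funext k
      simp only [Equiv.symm_swap, Function.comp]
      rcases eq_or_ne k i with rfl | hk
      · simp [hij]
      · rcases eq_or_ne k j with rfl | hk'
        · simp [hij]
        · rw [Equiv.swap_apply_of_ne_of_ne hk hk']
    have h6 : sg (Equiv.swap i j) = -1 := by simp [sg, Equiv.Perm.sign_swap hne]
    rw [h5, h6] at h4
    have : (2 : ℂ) * coeff (ex m) G = 0 := by linear_combination h4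
    simpa using this

lemma Lap_apply {σ : Type*} [Fintype σ] [DecidableEq σ] (τ : σ → σ) (f : MvPolynomial σ ℂ) :
    Lap τ f = ∑ i, pderiv i (pderiv (τ i) f) := by
  simp [Lap, LinearMap.sum_apply, pd_apply]

lemma strictAnti_ge {m : Fin n → ℕ} (hm : StrictAnti m) (i : Fin n) : n - 1 - (i : ℕ) ≤ m i := by
  have key : ∀ d : ℕ, ∀ i : Fin n, n - 1 - (i : ℕ) = d → d ≤ m i := by
    intro d
    induction d with
    | zero => intro i _; exact Nat.zero_le _
    | succ d ih =>
      intro i hi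
      have hlt : (i : ℕ) + 1 < n := by omega
      have := ih ⟨i + 1, hlt⟩ (by simp only; omega)
      have h2 : m ⟨i + 1, hlt⟩ < m i := hm (by rw [Fin.lt_def]; simp)
      omega
  exact key _ i rfl

lemma Lap_vand : Lap id (vand n) = 0 := by
  apply anti_eq_zero
  · intro π
    have h := aDet_anti (shiftedExp n 0) π
    rw [← vand_eq] at h
    rw [← smul_eq_C_mul, ← map_smul, smul_eq_C_mul, ← h, Lap_apply, Lap_apply, map_sum]
    conv_rhs => rw [← Equiv.sum_comp π]
    refine Finset.sum_congr rfl fun i _ => ?_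
    simp only [id]
    rw [pderiv_rename π.injective, pderiv_rename π.injective]
  · intro m hm
    rw [Lap_apply, coeff_sum]
    refine Finset.sum_eq_zero fun i _ => ?_
    simp only [id]
    rw [coeff_pd, coeff_pd]
    have hz : coeff (ex m + Finsupp.single i 1 + Finsupp.single i 1) (vand n) = 0 := by
      by_contra hne
      rw [vand_eq] at hne
      have h1 := aDet_homog _ hne
      rw [Pi.one_def, ← Finsupp.degree_eq_weight_one, map_add, map_add, ex_degree] at h1
      have h2 : ∑ i, shiftedExp n 0 i ≤ ∑ i, m i := by
        refine Finset.sum_le_sum fun i _ => ?_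
        have := strictAnti_ge hm i
        simpa [shiftedExp] using this
      simp at h1
      omega
    rw [hz]; simp

lemma vand_ne_zero : vand n ≠ 0 := by
  unfold vand
  refine Finset.prod_ne_zero_iff.mpr fun i _ => Finset.prod_ne_zero_iff.mpr fun j hj => ?_
  rw [Finset.mem_Ioi] at hj
  rw [sub_ne_zero]
  intro h
  exact hj.ne (X_injective h)

lemma shiftedExp_strictAnti {lam : Fin n → ℕ} (h : Antitone lam) :
    StrictAnti (shiftedExp n lam) := by
  intro i j hij
  have := h hij.le
  simp only [shiftedExp]
  have h1 := i.2
  have h2 := j.2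
  rw [Fin.lt_def] at hij
  omega

lemma fis_vand_mul (g : MvPolynomial (Fin n) ℂ) :
    eval 0 (dop id (vand n) (vand n * g)) =
      (n.factorial : ℂ) * (∏ i : Fin n, ((n - 1 - (i : ℕ)).factorial : ℂ)) * eval 0 g := by
  have h1 : eval 0 (dop id (vand n) (vand n * g)) =
      eval 0 (dop id (vand n) (vand n)) * eval 0 g := by
    rw [vand_eq, fis_aDet, fis_aDet, mul_assoc, Finset.sum_mul]
    congr 1
    refine Finset.sum_congr rfl fun π _ => ?_
    rw [coeff_homog_mul (aDet_homog _), mul_assoc]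
    rw [ex_degree]
    exact Equiv.sum_comp π.symm _
  rw [h1]
  congr 1
  rw [vand_eq, fis_aDet_anti _ (aDet_anti _), coeff_aDet, if_pos rfl, mul_one]
  · simp [shiftedExp]
  · exact shiftedExp_strictAnti (fun _ _ _ => le_rfl)
  · exact shiftedExp_strictAnti (fun _ _ _ => le_rfl)

end Anti

set_option linter.unusedSectionVars false

section Radial
variable {n : ℕ}

lemma der_sum_apply {A ι : Type*} [CommRing A] [Algebra ℂ A]
    (s : Finset ι) (D : ι → Derivation ℂ A A) (f : A) :
    (∑ i ∈ s, D i) f = ∑ i ∈ s, D i f := by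
  classical
  induction s using Finset.induction_on with
  | empty => simp
  | insert a s ha ih => rw [Finset.sum_insert ha, Finset.sum_insert ha, Derivation.add_apply, ih]

/-- Restriction to diagonal matrices. -/
noncomputable def res : MvPolynomial (Fin n × Fin n) ℂ →ₐ[ℂ] MvPolynomial (Fin n) ℂ :=
  aeval fun p => if p.1 = p.2 then X p.1 else 0

lemma res_X (p : Fin n × Fin n) :
    (res (X p) : MvPolynomial (Fin n) ℂ) = if p.1 = p.2 then X p.1 else 0 := by
  simp [res]

/-- The vector field of infinitesimal conjugation by `E_ij`. -/
noncomputable def xi (i j : Fin n) :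
    Derivation ℂ (MvPolynomial (Fin n × Fin n) ℂ) (MvPolynomial (Fin n × Fin n) ℂ) :=
  ∑ l, (X (j, l) : MvPolynomial (Fin n × Fin n) ℂ) • pderiv (i, l) -
    ∑ k, (X (k, i) : MvPolynomial (Fin n × Fin n) ℂ) • pderiv (k, j)

lemma xi_apply (i j : Fin n) (f : MvPolynomial (Fin n × Fin n) ℂ) :
    xi i j f = ∑ l, X (j, l) * pderiv (i, l) f - ∑ k, X (k, i) * pderiv (k, j) f := by
  simp [xi, der_sum_apply]

/-- Infinitesimal conjugation invariance. -/
def IInv (f : MvPolynomial (Fin n × Fin n) ℂ) : Prop := ∀ i j, xi i j f = 0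

lemma IInv.mul {f g : MvPolynomial (Fin n × Fin n) ℂ} (hf : IInv f) (hg : IInv g) :
    IInv (f * g) := by
  intro i j
  rw [Derivation.leibniz, hf, hg]; simp

lemma IInv.sub {f g : MvPolynomial (Fin n × Fin n) ℂ} (hf : IInv f) (hg : IInv g) :
    IInv (f - g) := by
  intro i j
  rw [map_sub, hf, hg]; simp

lemma IInv.smul {f : MvPolynomial (Fin n × Fin n) ℂ} (c : ℂ) (hf : IInv f) :
    IInv (c • f) := by
  intro i j
  rw [Derivation.map_smul, hf]; simp

lemma IInv.lap {f : MvPolynomial (Fin n × Fin n) ℂ} (hf : IInv f) :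
    IInv (Lap Prod.swap f) := by
  intro i j
  have hop : adL (Lap Prod.swap) (∑ l, mulOp (X (j, l)) * pd (i, l) -
      ∑ k, mulOp (X (k, i)) * pd (k, j) :
        Module.End ℂ (MvPolynomial (Fin n × Fin n) ℂ)) = 0 := by
    have hpd : ∀ p : Fin n × Fin n, adL (Lap Prod.swap) (pd p) = 0 := by
      intro p; rw [adL_apply, Lap_pd, sub_self]
    rw [map_sub, map_sum, map_sum]
    simp only [adL_mul, hpd, mul_zero, add_zero, adL_Lap_X _ Prod.swap_swap, Prod.swap_prod_mk,
      smul_mul_assoc]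
    rw [sub_eq_zero]
    refine Finset.sum_congr rfl fun l _ => ?_
    rw [pd_comm]
  have h2 := congrArg (fun A => A f) hop
  simp only [adL_apply, LinearMap.sub_apply, Module.End.mul_apply, LinearMap.sum_apply,
    mulOp_apply, pd_apply, LinearMap.zero_apply] at h2
  rw [← xi_apply, ← xi_apply, hf, map_zero, zero_sub, neg_eq_zero] at h2
  exact h2

lemma pderiv_res (i : Fin n) (f : MvPolynomial (Fin n × Fin n) ℂ) :
    pderiv i (res f) = res (pderiv (i, i) f) := by
  induction f using MvPolynomial.induction_on with
  | C a => simp [res]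
  | add p q hp hq => simp only [map_add, hp, hq]
  | mul_X p q hp =>
    rw [map_mul, Derivation.leibniz, Derivation.leibniz, hp, map_add, smul_eq_mul, smul_eq_mul,
      smul_eq_mul, smul_eq_mul, map_mul, map_mul, res_X]
    congr 2
    rcases q with ⟨a, b⟩
    by_cases h : a = b
    · subst h
      by_cases hi : i = a
      · subst hi; simp
      · simp [Pi.single_apply, pderiv_X, Ne.symm hi]
    · have : ¬ ((a, b) = (i, i)) := by
        intro h2; rw [Prod.mk.injEq] at h2; exact h (h2.1.trans h2.2.symm)
      simp [h, pderiv_X, Pi.single_apply, Ne.symm this, this]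

lemma radial_rel {f : MvPolynomial (Fin n × Fin n) ℂ} (hf : IInv f) {i j : Fin n} (hij : i ≠ j) :
    pderiv i (res f) - pderiv j (res f) =
      (X i - X j) * res (pderiv (i, j) (pderiv (j, i) f)) := by
  have h := congrArg (fun g => res (pderiv (j, i) g)) (hf i j)
  simp only [map_zero, xi_apply, map_sub, map_sum, Derivation.leibniz, smul_eq_mul, map_add,
    map_mul, res_X, pderiv_X, Pi.single_apply] at h
  have e1 : ∑ l, ((if j = l then X j else 0) * res (pderiv (j, i) (pderiv (i, l) f)) +
      res (pderiv (i, l) f) * res (if (j, l) = (j, i) then 1 else 0)) =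
      (X j * res (pderiv (j, i) (pderiv (i, j) f)) + res (pderiv (i, i) f) :
        MvPolynomial (Fin n) ℂ) := by
    rw [Finset.sum_add_distrib]
    congr 1
    · simp
    · rw [Finset.sum_eq_single i]
      · simp
      · intro b _ hb; simp [hb]
      · simp
  have e2 : ∑ k, ((if k = i then X k else 0) * res (pderiv (j, i) (pderiv (k, j) f)) +
      res (pderiv (k, j) f) * res (if (k, i) = (j, i) then 1 else 0)) =
      (X i * res (pderiv (j, i) (pderiv (i, j) f)) + res (pderiv (j, j) f) :
        MvPolynomial (Fin n) ℂ) := by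
    rw [Finset.sum_add_distrib]
    congr 1
    · simp
    · rw [Finset.sum_eq_single j]
      · simp
      · intro b _ hb; simp [hb]
      · simp
  have h' : (X j * res (pderiv (j, i) (pderiv (i, j) f)) + res (pderiv (i, i) f) :
        MvPolynomial (Fin n) ℂ) - (X i * res (pderiv (j, i) (pderiv (i, j) f)) +
          res (pderiv (j, j) f)) = 0 := by
    rw [← e1, ← e2]; exact h
  rw [pderiv_res, pderiv_res]
  have hc : pderiv (j, i) (pderiv (i, j) f) = pderiv (i, j) (pderiv (j, i) f) :=
    congrArg (fun A => A f) (pd_comm (j, i) (i, j))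
  rw [hc] at h'
  linear_combination h'

lemma deriv_prod_log {A ι : Type*} [CommRing A] [Algebra ℂ A] [DecidableEq ι]
    (V : Derivation ℂ A A) (s : Finset ι)
    (F h : ι → A) (hF : ∀ i ∈ s, V (F i) = F i * h i) :
    V (∏ i ∈ s, F i) = (∏ i ∈ s, F i) * ∑ i ∈ s, h i := by
  induction s using Finset.induction_on with
  | empty => simp
  | insert a s ha ih =>
    rw [Finset.prod_insert ha, Finset.sum_insert ha, Derivation.leibniz,
      ih fun i hi => hF i (Finset.mem_insert_of_mem hi), hF a (Finset.mem_insert_self _ _)]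
    simp only [smul_eq_mul]
    ring

lemma sum_offdiag {A : Type*} [AddCommGroup A] (h : Fin n → Fin n → A)
    (hs : ∀ i j, h i j = h j i) :
    ∑ i, ∑ j, h i j = ∑ i, h i i + 2 • ∑ i, ∑ j ∈ Finset.Ioi i, h i j := by
  have h1 : ∀ i : Fin n, ∑ j, h i j = h i i + ∑ j ∈ Finset.Ioi i, h i j +
      ∑ j ∈ Finset.Iio i, h i j := by
    intro i
    have hu : (Finset.univ : Finset (Fin n)) =
        insert i (Finset.Ioi i ∪ Finset.Iio i) := by
      ext k
      simp only [Finset.mem_univ, Finset.mem_insert, Finset.mem_union, Finset.mem_Ioi,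
        Finset.mem_Iio, true_iff]
      rcases lt_trichotomy k i with h | h | h <;> simp [h]
    rw [hu, Finset.sum_insert (by simp), Finset.sum_union, add_assoc]
    rw [Finset.disjoint_left]
    intro a ha hb
    simp only [Finset.mem_Ioi, Finset.mem_Iio] at ha hb
    exact absurd (ha.trans hb) (lt_irrefl _)
  have h2 : ∑ i, ∑ j ∈ Finset.Iio i, h i j = ∑ i, ∑ j ∈ Finset.Ioi i, h i j := by
    rw [Finset.sum_comm' (t' := Finset.univ) (s' := fun j => Finset.Ioi j) (by simp)]
    exact Finset.sum_congr rfl fun i _ => Finset.sum_congr rfl fun j _ => hs _ _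
  rw [Finset.sum_congr rfl fun i _ => h1 i, Finset.sum_add_distrib, Finset.sum_add_distrib, h2,
    two_smul, add_assoc]

/-- Restriction to the diagonal multiplied by the Vandermonde. -/
noncomputable def rho (f : MvPolynomial (Fin n × Fin n) ℂ) : MvPolynomial (Fin n) ℂ :=
  vand n * res f

lemma rho_lap {f : MvPolynomial (Fin n × Fin n) ℂ} (hf : IInv f) :
    rho (Lap Prod.swap f) = Lap id (rho f) := by
  set g := res f with hg
  set h : Fin n → Fin n → MvPolynomial (Fin n) ℂ :=
    fun i j => res (pderiv (i, j) (pderiv (j, i) f)) with hh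
  have hsym : ∀ i j, h i j = h j i := by
    intro i j
    have hc : pderiv (j, i) (pderiv (i, j) f) = pderiv (i, j) (pderiv (j, i) f) :=
      congrArg (fun A => A f) (pd_comm (j, i) (i, j))
    simp only [hh, hc]
  have hV : ∑ i, pderiv i g * pderiv i (vand n) =
      vand n * ∑ i, ∑ j ∈ Finset.Ioi i, h i j := by
    let V : Derivation ℂ (MvPolynomial (Fin n) ℂ) (MvPolynomial (Fin n) ℂ) :=
      ∑ i, pderiv i g • pderiv i
    have hVa : ∀ q, V q = ∑ i, pderiv i g * pderiv i q := by intro q; simp [V, der_sum_apply]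
    rw [← hVa]
    have hVX : ∀ p, V (X p) = pderiv p g := by
      intro p
      rw [hVa, Finset.sum_eq_single p]
      · simp
      · intro b _ hb; simp [pderiv_X, Pi.single_apply, hb.symm]
      · simp
    rw [vand]
    apply deriv_prod_log
    intro i _
    apply deriv_prod_log
    intro j hj
    rw [Finset.mem_Ioi] at hj
    rw [map_sub, hVX, hVX, radial_rel hf hj.ne]
  have hL : res (Lap Prod.swap f) = Lap id g + 2 • ∑ i, ∑ j ∈ Finset.Ioi i, h i j := by
    rw [Lap_apply, Lap_apply, map_sum, Fintype.sum_prod_type]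
    have := sum_offdiag h hsym
    simp only [Prod.swap_prod_mk, id]
    rw [this]
    congr 1
    refine Finset.sum_congr rfl fun i _ => ?_
    rw [hg, pderiv_res, pderiv_res]
  have hD : Lap id (vand n * g) = Lap id (vand n) * g +
      2 • ∑ i, pderiv i g * pderiv i (vand n) + vand n * Lap id g := by
    simp only [Lap_apply, id, Finset.sum_mul, Finset.mul_sum, Finset.smul_sum,
      ← Finset.sum_add_distrib]
    refine Finset.sum_congr rfl fun i _ => ?_
    simp only [Derivation.leibniz, map_add, smul_eq_mul, nsmul_eq_mul]
    push_cast
    ring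
  rw [rho, rho, hL, ← hg, hD, Lap_vand, hV]
  simp only [nsmul_eq_mul]
  ring

/-- Operators on matrices and on diagonals that match under `rho`. -/
def Intw (A : Module.End ℂ (MvPolynomial (Fin n × Fin n) ℂ))
    (B : Module.End ℂ (MvPolynomial (Fin n) ℂ)) : Prop :=
  ∀ f, IInv f → IInv (A f) ∧ rho (A f) = B (rho f)

lemma rho_sub (f g : MvPolynomial (Fin n × Fin n) ℂ) : rho (f - g) = rho f - rho g := by
  simp [rho, mul_sub]

lemma rho_add (f g : MvPolynomial (Fin n × Fin n) ℂ) : rho (f + g) = rho f + rho g := by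
  simp [rho, mul_add]

lemma rho_smul (c : ℂ) (f : MvPolynomial (Fin n × Fin n) ℂ) : rho (c • f) = c • rho f := by
  simp [rho]

lemma Intw.mul {A A' : Module.End ℂ (MvPolynomial (Fin n × Fin n) ℂ)}
    {B B' : Module.End ℂ (MvPolynomial (Fin n) ℂ)} (h : Intw A B) (h' : Intw A' B') :
    Intw (A * A') (B * B') := by
  intro f hf
  obtain ⟨h1, h2⟩ := h' f hf
  obtain ⟨h3, h4⟩ := h _ h1
  exact ⟨h3, by rw [Module.End.mul_apply, h4, h2]; rfl⟩

lemma Intw.sub {A A' : Module.End ℂ (MvPolynomial (Fin n × Fin n) ℂ)}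
    {B B' : Module.End ℂ (MvPolynomial (Fin n) ℂ)} (h : Intw A B) (h' : Intw A' B') :
    Intw (A - A') (B - B') := by
  intro f hf
  obtain ⟨h1, h2⟩ := h' f hf
  obtain ⟨h3, h4⟩ := h f hf
  exact ⟨h3.sub h1, by rw [LinearMap.sub_apply, rho_sub, h4, h2]; rfl⟩

lemma Intw.smul (c : ℂ) {A : Module.End ℂ (MvPolynomial (Fin n × Fin n) ℂ)}
    {B : Module.End ℂ (MvPolynomial (Fin n) ℂ)} (h : Intw A B) :
    Intw (c • A) (c • B) := by
  intro f hf
  obtain ⟨h3, h4⟩ := h f hf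
  exact ⟨h3.smul c, by rw [LinearMap.smul_apply, rho_smul, h4]; rfl⟩

lemma Intw.add {A A' : Module.End ℂ (MvPolynomial (Fin n × Fin n) ℂ)}
    {B B' : Module.End ℂ (MvPolynomial (Fin n) ℂ)} (h : Intw A B) (h' : Intw A' B') :
    Intw (A + A') (B + B') := by
  intro f hf
  obtain ⟨h1, h2⟩ := h' f hf
  obtain ⟨h3, h4⟩ := h f hf
  refine ⟨fun i j => ?_, by rw [LinearMap.add_apply, rho_add, h4, h2]; rfl⟩
  rw [LinearMap.add_apply, map_add, h3, h1, add_zero]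

lemma Intw.one : Intw (1 : Module.End ℂ (MvPolynomial (Fin n × Fin n) ℂ)) 1 :=
  fun _ hf => ⟨hf, rfl⟩

lemma Intw.adPow {A P : Module.End ℂ (MvPolynomial (Fin n × Fin n) ℂ)}
    {B Q : Module.End ℂ (MvPolynomial (Fin n) ℂ)} (h : Intw A B) (h' : Intw P Q) (k : ℕ) :
    Intw ((adL A ^ k) P) ((adL B ^ k) Q) := by
  induction k with
  | zero => simpa using h'
  | succ k ih =>
    rw [pow_succ', pow_succ', Module.End.mul_apply, Module.End.mul_apply, adL_apply, adL_apply]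
    exact (h.mul ih).sub (ih.mul h)

lemma res_homog {P : MvPolynomial (Fin n × Fin n) ℂ} {k : ℕ} (hP : P.IsHomogeneous k) :
    (res P).IsHomogeneous k := by
  have := hP.aeval (fun p : Fin n × Fin n => if p.1 = p.2 then
    (X p.1 : MvPolynomial (Fin n) ℂ) else 0) (n := 1) (by
      intro p; split_ifs
      · exact isHomogeneous_X _ _
      · exact isHomogeneous_zero _ _ _)
  rw [one_mul] at this
  exact this

lemma Intw.dop_homog {P : MvPolynomial (Fin n × Fin n) ℂ} {k : ℕ} (hP : P.IsHomogeneous k)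
    (hi : IInv P) : Intw (dop Prod.swap P) (dop id (res P)) := by
  have h1 : Intw (Lap Prod.swap) (Lap (id : Fin n → Fin n)) :=
    fun f hf => ⟨hf.lap, rho_lap hf⟩
  have h2 : Intw (mulOp P) (mulOp (res P)) := by
    intro f hf
    refine ⟨hi.mul hf, ?_⟩
    simp only [rho, mulOp_apply, map_mul]; ring
  have h3 := h1.adPow h2 k
  rw [adL_homog _ Prod.swap_swap k P hP, adL_homog _ (fun _ => rfl) k _ (res_homog hP)] at h3
  have hc : ((2 : ℂ) ^ k * (k.factorial : ℂ)) ≠ 0 :=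
    mul_ne_zero (pow_ne_zero _ two_ne_zero) (Nat.cast_ne_zero.mpr k.factorial_ne_zero)
  have h4 := h3.smul ((2 : ℂ) ^ k * (k.factorial : ℂ))⁻¹
  rwa [inv_smul_smul₀ hc, inv_smul_smul₀ hc] at h4

lemma Intw.dop_aeval {ι : Type*} (E : ι → MvPolynomial (Fin n × Fin n) ℂ) (d : ι → ℕ)
    (hE : ∀ i, (E i).IsHomogeneous (d i)) (hi : ∀ i, IInv (E i)) (q : MvPolynomial ι ℂ) :
    Intw (dop Prod.swap (aeval E q)) (dop id (res (aeval E q))) := by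
  induction q using MvPolynomial.induction_on with
  | C a =>
    rw [← MvPolynomial.algebraMap_eq, AlgHom.commutes, AlgHom.commutes, AlgHom.commutes,
      AlgHom.commutes, Algebra.algebraMap_eq_smul_one, Algebra.algebraMap_eq_smul_one]
    exact Intw.one.smul a
  | add p q hp hq => simp only [map_add]; exact hp.add hq
  | mul_X p i hp =>
    simp only [map_mul, aeval_X]
    exact hp.mul (Intw.dop_homog (hE i) (hi i))

end Radial

section UnitaryInv
variable {n : ℕ}

/-- Evaluation of a polynomial in the matrix entries. -/
noncomputable def ev (x : Matrix (Fin n) (Fin n) ℂ) :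
    MvPolynomial (Fin n × Fin n) ℂ →+* ℂ := eval fun p => x p.1 p.2

/-- Invariance under unitary conjugation. -/
def UInv (f : MvPolynomial (Fin n × Fin n) ℂ) : Prop :=
  ∀ (u : Matrix.unitaryGroup (Fin n) ℂ) (x : Matrix (Fin n) (Fin n) ℂ),
    ev ((u : Matrix (Fin n) (Fin n) ℂ) * x * (↑(u⁻¹) : Matrix (Fin n) (Fin n) ℂ)) f = ev x f

lemma ev_funext {f g : MvPolynomial (Fin n × Fin n) ℂ} (h : ∀ x, ev x f = ev x g) : f = g := by
  apply MvPolynomial.funext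
  intro v
  exact h (Matrix.of fun i j => v (i, j))

lemma hasDerivAt_eval {σ : Type*} [Fintype σ] (c : ℝ → σ → ℂ) (c' : σ → ℂ) (t : ℝ)
    (hc : ∀ p, HasDerivAt (fun t => c t p) (c' p) t) (f : MvPolynomial σ ℂ) :
    HasDerivAt (fun t => eval (c t) f) (∑ p, c' p * eval (c t) (pderiv p f)) t := by
  classical
  induction f using MvPolynomial.induction_on with
  | C a => simpa using hasDerivAt_const t a
  | add p q hp hq =>
    simp only [map_add, mul_add, Finset.sum_add_distrib]
    exact hp.add hq
  | mul_X p i hp =>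
    have := hp.mul (hc i)
    simp only [map_mul, eval_X, Derivation.leibniz, smul_eq_mul, map_add]
    refine this.congr_deriv ?_
    simp only [mul_add, Finset.sum_add_distrib]
    rw [add_comm]
    congr 1
    · rw [Finset.sum_eq_single i]
      · simp; ring
      · intro b _ hb; simp [pderiv_X, Pi.single_apply, hb.symm]
      · simp
    · rw [Finset.sum_mul]
      refine Finset.sum_congr rfl fun j _ => ?_
      ring

attribute [local instance] Matrix.linftyOpNormedRing Matrix.linftyOpNormedAlgebra

lemma curve_deriv (A x : Matrix (Fin n) (Fin n) ℂ) (p : Fin n × Fin n) :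
    HasDerivAt (fun t : ℝ => (NormedSpace.exp (t • A) * x * NormedSpace.exp (t • (-A))) p.1 p.2)
      ((A * x - x * A) p.1 p.2) 0 := by
  have h1 : HasDerivAt (fun t : ℝ => NormedSpace.exp (t • A)) A 0 := by
    have := hasDerivAt_exp_smul_const (𝕂 := ℝ) A (0 : ℝ)
    rw [zero_smul, NormedSpace.exp_zero, one_mul] at this
    exact this
  have h2 : HasDerivAt (fun t : ℝ => NormedSpace.exp (t • (-A))) (-A) 0 := by
    have := hasDerivAt_exp_smul_const (𝕂 := ℝ) (-A) (0 : ℝ)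
    rw [zero_smul, NormedSpace.exp_zero, one_mul] at this
    exact this
  have h3 := (h1.mul_const x).mul h2
  let L : Matrix (Fin n) (Fin n) ℂ →L[ℝ] ℂ :=
    LinearMap.toContinuousLinearMap (Matrix.entryLinearMap ℝ ℂ p.1 p.2)
  have h4 := (L.hasFDerivAt (x := _)).comp_hasDerivAt (0 : ℝ) h3
  refine h4.congr_deriv ?_
  change (A * x * NormedSpace.exp ((0 : ℝ) • -A) +
    NormedSpace.exp ((0 : ℝ) • A) * x * -A) p.1 p.2 = _
  simp [sub_eq_add_neg]

lemma UInv.iInv {f : MvPolynomial (Fin n × Fin n) ℂ} (hf : UInv f) : IInv f := by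
  intro i j
  apply ev_funext
  intro x
  rw [map_zero]
  let D : Matrix (Fin n) (Fin n) ℂ →ₗ[ℂ] ℂ :=
    { toFun := fun A => ∑ p : Fin n × Fin n, (A * x - x * A) p.1 p.2 * ev x (pderiv p f)
      map_add' := by
        intro A B
        rw [← Finset.sum_add_distrib]
        refine Finset.sum_congr rfl fun p _ => ?_
        simp only [add_mul, mul_add, Matrix.sub_apply, Matrix.add_apply]
        ring
      map_smul' := by
        intro c A
        rw [RingHom.id_apply, smul_eq_mul, Finset.mul_sum]
        refine Finset.sum_congr rfl fun p _ => ?_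
        simp only [Matrix.smul_mul, Matrix.mul_smul, Matrix.sub_apply, Matrix.smul_apply,
          smul_eq_mul]
        ring }
  have hskew : ∀ A : Matrix (Fin n) (Fin n) ℂ, star A = -A → D A = 0 := by
    intro A hA
    have h1 := hasDerivAt_eval (fun t (p : Fin n × Fin n) =>
      (NormedSpace.exp (t • A) * x * NormedSpace.exp (t • (-A))) p.1 p.2) _ 0
      (curve_deriv A x) f
    have h2 : (fun t : ℝ => eval (fun p : Fin n × Fin n =>
      (NormedSpace.exp (t • A) * x * NormedSpace.exp (t • (-A))) p.1 p.2) f) =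
        fun _ => ev x f := by
      funext t
      have hs : star (NormedSpace.exp (t • A)) = NormedSpace.exp (t • (-A)) := by
        rw [NormedSpace.star_exp, star_smul, hA]; simp
      have hcomm : NormedSpace.exp (t • (-A)) * NormedSpace.exp (t • A) = 1 := by
        rw [← Matrix.exp_add_of_commute]
        · simp
        · rw [smul_neg]; exact (Commute.refl _).neg_left
      have hu : NormedSpace.exp (t • A) ∈ Matrix.unitaryGroup (Fin n) ℂ := by
        rw [Matrix.mem_unitaryGroup_iff', hs, hcomm]
      have := hf ⟨_, hu⟩ x
      rw [← this]
      simp only [ev, Matrix.UnitaryGroup.inv_val]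
      rw [hs]
    rw [h2] at h1
    have h3 := h1.unique (hasDerivAt_const _ _)
    simpa [D, ev] using h3
  have hall : ∀ A, D A = 0 := by
    intro A
    have e : A = (1/2 : ℂ) • (A - star A) + (-Complex.I/2) • (Complex.I • (A + star A)) := by
      rw [smul_smul, ← Matrix.ext_iff]
      intro a b
      simp only [Matrix.add_apply, Matrix.smul_apply, Matrix.sub_apply, smul_eq_mul]
      have : (-Complex.I/2 * Complex.I) = 1/2 := by
        linear_combination (-1/2) * Complex.I_mul_I
      rw [this]; ring
    rw [e, map_add, map_smul, map_smul, hskew, hskew]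
    · simp
    · rw [star_smul, star_add, star_star]; simp [add_comm]
    · rw [star_sub, star_star, neg_sub]
  have h := hall (Matrix.single i j 1)
  rw [xi_apply]
  simp only [map_sub, map_sum, map_mul]
  have hD : D (Matrix.single i j 1) = ∑ p : Fin n × Fin n, (Matrix.single i j 1 * x -
    x * Matrix.single i j 1 : Matrix (Fin n) (Fin n) ℂ) p.1 p.2 * ev x (pderiv p f) := rfl
  rw [hD] at h
  rw [← h]
  simp only [Matrix.sub_apply, sub_mul, Finset.sum_sub_distrib]
  congr 1
  · symm
    rw [Fintype.sum_prod_type, Finset.sum_eq_single i]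
    · refine Finset.sum_congr rfl fun l _ => ?_
      simp [ev]
    · intro b _ hb
      refine Finset.sum_eq_zero fun l _ => ?_
      simp [hb]
    · simp
  · symm
    rw [Fintype.sum_prod_type_right, Finset.sum_eq_single j]
    · refine Finset.sum_congr rfl fun l _ => ?_
      simp [ev]
    · intro b _ hb
      refine Finset.sum_eq_zero fun l _ => ?_
      simp [hb]
    · simp

end UnitaryInv

section Ext
variable {n : ℕ}

lemma card_roots_charpoly (x : Matrix (Fin n) (Fin n) ℂ) :
    Multiset.card x.charpoly.roots = n := by
  have h := IsAlgClosed.splits x.charpoly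
  rw [Polynomial.splits_iff_card_roots.1 h, Matrix.charpoly_natDegree_eq_dim, Fintype.card_fin]

lemma map_eigs (x : Matrix (Fin n) (Fin n) ℂ) :
    (Finset.univ : Finset (Fin n)).val.map (eigs x) = x.charpoly.roots := by
  have hl : x.charpoly.roots.toList.length = n := by
    rw [Multiset.length_toList, card_roots_charpoly]
  conv_rhs => rw [← Multiset.coe_toList x.charpoly.roots]
  rw [Fin.univ_val_map, Multiset.coe_eq_coe]
  apply List.Perm.of_eq
  apply List.ext_getElem
  · simp [hl]
  · intro i h1 h2
    rw [List.getElem_ofFn]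
    exact List.getD_eq_getElem _ _ h2

lemma eval_res (d : Fin n → ℂ) (f : MvPolynomial (Fin n × Fin n) ℂ) :
    eval d (res f) = ev (Matrix.diagonal d) f := by
  have : (eval d).comp (res : MvPolynomial (Fin n × Fin n) ℂ →ₐ[ℂ] _).toRingHom =
      ev (Matrix.diagonal d) := by
    apply MvPolynomial.ringHom_ext
    · intro r; simp [ev, res]
    · intro p
      rcases p with ⟨a, b⟩
      by_cases h : a = b <;> simp [ev, res, h]
  exact congrArg (fun F => F f) this

/-- Elementary symmetric functions of the eigenvalues as polynomials in the entries. -/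
noncomputable def EE (n : ℕ) (i : Fin n) : MvPolynomial (Fin n × Fin n) ℂ :=
  C ((-1) ^ ((i : ℕ) + 1)) * (Matrix.charpoly.univ ℂ (Fin n)).coeff (n - (i + 1))

lemma ev_univ (x : Matrix (Fin n) (Fin n) ℂ) (k : ℕ) :
    ev x ((Matrix.charpoly.univ ℂ (Fin n)).coeff k) = x.charpoly.coeff k := by
  have := Matrix.charpoly.univ_coeff_eval₂Hom (Fin n) (RingHom.id ℂ)
    (fun p : Fin n × Fin n => x p.1 p.2) k
  exact this

lemma EE_homog (i : Fin n) : (EE n i).IsHomogeneous (i + 1) := by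
  have h := Matrix.charpoly.univ_coeff_isHomogeneous ℂ (Fin n) (n - (i + 1)) (i + 1)
    (by rw [Fintype.card_fin]; omega)
  have := (isHomogeneous_C (Fin n × Fin n) ((-1 : ℂ) ^ ((i : ℕ) + 1))).mul h
  rwa [zero_add] at this

lemma ev_EE (x : Matrix (Fin n) (Fin n) ℂ) (v : Fin n → ℂ)
    (hv : x.charpoly.roots = (Finset.univ : Finset (Fin n)).val.map v) (i : Fin n) :
    ev x (EE n i) = eval v (esymm (Fin n) ℂ (i + 1)) := by
  rw [EE, map_mul, ev_univ]
  have hd : x.charpoly.natDegree = n := by simp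
  rw [Polynomial.coeff_eq_esymm_roots_of_card
    (by rw [card_roots_charpoly, hd]) (by rw [hd]; omega), hd, hv]
  have h := aeval_esymm_eq_multiset_esymm (Fin n) ℂ (i + 1) v
  have e : n - (n - ((i : ℕ) + 1)) = i + 1 := by omega
  rw [e, ← h, (Matrix.charpoly_monic x).leadingCoeff, one_mul, ← mul_assoc]
  have e2 : ev x (C ((-1) ^ ((i : ℕ) + 1))) = (-1) ^ ((i : ℕ) + 1) := by simp [ev]
  rw [e2, ← mul_pow]
  simp [MvPolynomial.aeval_eq_eval]

lemma charpoly_conj (u : Matrix.unitaryGroup (Fin n) ℂ) (x : Matrix (Fin n) (Fin n) ℂ) :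
    ((u : Matrix (Fin n) (Fin n) ℂ) * x * (↑(u⁻¹) : Matrix (Fin n) (Fin n) ℂ)).charpoly =
      x.charpoly := by
  rw [Matrix.charpoly_mul_comm, ← mul_assoc]
  simp

lemma EE_uinv (i : Fin n) : UInv (EE n i) := by
  intro u x
  rw [EE, map_mul, map_mul, ev_univ, ev_univ, charpoly_conj]
  simp [ev]

lemma exists_ext (g : MvPolynomial (Fin n) ℂ) (hg : g.IsSymmetric) :
    ∃ P : MvPolynomial (Fin n × Fin n) ℂ,
      (∀ (x : Matrix (Fin n) (Fin n) ℂ) (v : Fin n → ℂ),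
        x.charpoly.roots = (Finset.univ : Finset (Fin n)).val.map v → ev x P = eval v g) ∧
      UInv P ∧ res P = g ∧ Intw (dop Prod.swap P) (dop id g) := by
  obtain ⟨q, hq⟩ := esymmAlgHom_fin_surjective (R := ℂ) (le_refl n) ⟨g, hg⟩
  have hq' : g = aeval (fun i : Fin n => esymm (Fin n) ℂ (i + 1)) q := by
    rw [← esymmAlgHom_apply, hq]
  have hE : ∀ (x : Matrix (Fin n) (Fin n) ℂ) (v : Fin n → ℂ),
        x.charpoly.roots = (Finset.univ : Finset (Fin n)).val.map v →
        ev x (aeval (EE n) q) = eval v g := by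
    intro x v hv
    rw [hq']
    have h1 : ∀ (τ : Type) (w : τ → ℂ) (F : Fin n → MvPolynomial τ ℂ),
        eval w (aeval F q) = eval (fun i => eval w (F i)) q := by
      intro τ w F
      have := MvPolynomial.comp_aeval_apply (f := F) (φ := (aeval w : MvPolynomial τ ℂ →ₐ[ℂ] ℂ)) q
      simpa [MvPolynomial.aeval_eq_eval] using this
    rw [ev, h1, h1]
    congr 2
    funext i
    exact ev_EE x v hv i
  have hres : res (aeval (EE n) q) = g := by
    apply MvPolynomial.funext
    intro d
    rw [eval_res]
    apply hE
    rw [Matrix.charpoly_diagonal]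
    exact Polynomial.roots_multiset_prod_X_sub_C (Multiset.map d Finset.univ.val) |> fun h => by
      rw [← h, Multiset.map_map]; rfl
  refine ⟨aeval (EE n) q, hE, ?_, hres, ?_⟩
  · intro u x
    rw [hE _ _ (map_eigs x).symm, hE _ (eigs x)]
    rw [charpoly_conj, map_eigs]
  · have := Intw.dop_aeval (EE n) _ EE_homog (fun i => (EE_uinv i).iInv) q
    rwa [hres] at this

end Ext

section Avg
variable {n : ℕ}

instance unitaryBorel (n : ℕ) : BorelSpace (Matrix.unitaryGroup (Fin n) ℂ) := ⟨rfl⟩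

instance unitaryCompact (n : ℕ) : CompactSpace (Matrix.unitaryGroup (Fin n) ℂ) := by
  have h : IsCompact ((Matrix.unitaryGroup (Fin n) ℂ : Set (Matrix (Fin n) (Fin n) ℂ))) := by
    have hc : IsCompact (Set.pi Set.univ fun _ : Fin n => Set.pi Set.univ fun _ : Fin n =>
        Metric.closedBall (0 : ℂ) 1) :=
      isCompact_univ_pi fun _ => isCompact_univ_pi fun _ => isCompact_closedBall 0 1
    refine IsCompact.of_isClosed_subset hc ?_ ?_
    · have : (Matrix.unitaryGroup (Fin n) ℂ : Set (Matrix (Fin n) (Fin n) ℂ)) =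
          {A | A * star A = 1} := by
        ext A; exact Matrix.mem_unitaryGroup_iff
      rw [this]
      exact isClosed_eq (by fun_prop) continuous_const
    · intro A hA
      exact fun i _ j _ => mem_closedBall_zero_iff.mpr (entry_norm_bound_of_unitary hA i j)
  exact isCompact_iff_compactSpace.mp h

lemma integrable_cont (μ : Measure (Matrix.unitaryGroup (Fin n) ℂ)) [IsProbabilityMeasure μ]
    {F : Matrix.unitaryGroup (Fin n) ℂ → ℂ} (hF : Continuous F) : Integrable F μ :=
  hF.integrable_of_hasCompactSupport (HasCompactSupport.of_compactSpace _)

/-- The conjugate `u z u⁻¹`. -/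
noncomputable def cj (u : Matrix.unitaryGroup (Fin n) ℂ) (z : Matrix (Fin n) (Fin n) ℂ) :
    Matrix (Fin n) (Fin n) ℂ :=
  (u : Matrix (Fin n) (Fin n) ℂ) * z * (↑(u⁻¹) : Matrix (Fin n) (Fin n) ℂ)

lemma continuous_cj (z : Matrix (Fin n) (Fin n) ℂ) : Continuous fun u => cj u z := by
  unfold cj
  simp only [Matrix.UnitaryGroup.inv_val]
  fun_prop

/-- The linear form `x ↦ Tr (x u z u⁻¹)`. -/
noncomputable def lf (u : Matrix.unitaryGroup (Fin n) ℂ) (z : Matrix (Fin n) (Fin n) ℂ) :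
    MvPolynomial (Fin n × Fin n) ℂ :=
  ∑ p : Fin n × Fin n, C (cj u z p.2 p.1) * X p

lemma pderiv_lf (u : Matrix.unitaryGroup (Fin n) ℂ) (z : Matrix (Fin n) (Fin n) ℂ)
    (p : Fin n × Fin n) : pderiv (Prod.swap p) (lf u z) = C (cj u z p.1 p.2) := by
  rw [lf, map_sum, Finset.sum_eq_single (Prod.swap p)]
  · simp
  · intro b _ hb; simp [pderiv_X, Pi.single_apply, hb.symm]
  · simp

lemma eval_zero_lf (u : Matrix.unitaryGroup (Fin n) ℂ) (z : Matrix (Fin n) (Fin n) ℂ) :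
    eval 0 (lf u z) = 0 := by
  simp [lf]

lemma ev_lf (u : Matrix.unitaryGroup (Fin n) ℂ) (z x : Matrix (Fin n) (Fin n) ℂ) :
    ev x (lf u z) = (x * cj u z).trace := by
  simp only [lf, map_sum, ev, map_mul, eval_C, eval_X, Matrix.trace, Matrix.diag_apply,
    Matrix.mul_apply, Fintype.sum_prod_type]
  exact Finset.sum_congr rfl fun i _ => Finset.sum_congr rfl fun j _ => mul_comm _ _

lemma lf_homog (u : Matrix.unitaryGroup (Fin n) ℂ) (z : Matrix (Fin n) (Fin n) ℂ) (k : ℕ) :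
    (lf u z ^ k).IsHomogeneous k := by
  have h : (lf u z).IsHomogeneous 1 := by
    apply IsHomogeneous.sum
    intro p _
    have := (isHomogeneous_C (Fin n × Fin n) (cj u z p.2 p.1)).mul (isHomogeneous_X ℂ p)
    rwa [zero_add] at this
  have := h.pow k
  rwa [one_mul] at this

lemma continuous_coeff_lf (z : Matrix (Fin n) (Fin n) ℂ) (k : ℕ) (m : Fin n × Fin n →₀ ℕ) :
    Continuous fun u => coeff m (lf u z ^ k) := by
  induction k generalizing m with
  | zero => simpa using continuous_const
  | succ k ih =>
    simp only [pow_succ, coeff_mul]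
    refine continuous_finsetSum _ fun a _ => (ih a.1).mul ?_
    simp only [lf, coeff_sum, coeff_C_mul]
    refine continuous_finsetSum _ fun p _ => Continuous.mul ?_ continuous_const
    exact (continuous_cj z).matrix_elem _ _

lemma exists_avg (μ : Measure (Matrix.unitaryGroup (Fin n) ℂ)) [IsProbabilityMeasure μ]
    (z : Matrix (Fin n) (Fin n) ℂ) (k : ℕ) :
    ∃ f : MvPolynomial (Fin n × Fin n) ℂ, f.IsHomogeneous k ∧
      ∀ Λ : MvPolynomial (Fin n × Fin n) ℂ →ₗ[ℂ] ℂ, Λ f = ∫ u, Λ (lf u z ^ k) ∂μ := by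
  classical
  let S := (Finset.univ : Finset (Fin n × Fin n)).finsuppAntidiag k
  refine ⟨∑ m ∈ S, monomial m (∫ u, coeff m (lf u z ^ k) ∂μ), ?_, ?_⟩
  · apply IsHomogeneous.sum
    intro m hm
    apply isHomogeneous_monomial
    have := (Finset.mem_finsuppAntidiag.mp hm).1
    rw [Finsupp.degree_eq_sum]; exact this
  · intro Λ
    have hdec : ∀ u, lf u z ^ k = ∑ m ∈ S, coeff m (lf u z ^ k) • monomial m (1 : ℂ) := by
      intro u
      conv_lhs => rw [(lf u z ^ k).as_sum]
      have hsub : (lf u z ^ k).support ⊆ S := by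
        intro m hm
        rw [Finset.mem_finsuppAntidiag]
        refine ⟨?_, Finset.subset_univ _⟩
        have := lf_homog u z k
        have h2 := this.coeff_eq_zero (d := m)
        rw [mem_support_iff] at hm
        by_contra h3
        exact hm (h2 (by rw [Finsupp.degree_eq_sum]; exact h3))
      rw [Finset.sum_subset hsub]
      · simp only [smul_monomial, smul_eq_mul, mul_one]
      · intro m _ hm
        rw [notMem_support_iff.mp hm]; simp
    have e : ∀ u, Λ (lf u z ^ k) = ∑ m ∈ S, coeff m (lf u z ^ k) * Λ (monomial m 1) := by
      intro u
      conv_lhs => rw [hdec u]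
      simp only [map_sum, map_smul, smul_eq_mul]
    simp only [e]
    rw [integral_finsetSum _ fun m _ =>
      (integrable_cont μ (continuous_coeff_lf z k m)).mul_const _, map_sum]
    refine Finset.sum_congr rfl fun m _ => ?_
    rw [integral_mul_const, ← smul_eq_mul, ← map_smul, smul_monomial, smul_eq_mul, mul_one]

lemma UInv.res_symm {f : MvPolynomial (Fin n × Fin n) ℂ} (hf : UInv f) :
    (res f).IsSymmetric := by
  intro π
  apply MvPolynomial.funext
  intro d
  rw [eval_rename, eval_res, eval_res]
  let w : Matrix (Fin n) (Fin n) ℂ := (1 : Matrix (Fin n) (Fin n) ℂ).submatrix π id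
  have hw : w * star w = 1 := by
    rw [Matrix.star_eq_conjTranspose, Matrix.conjTranspose_submatrix, Matrix.conjTranspose_one]
    rw [← Matrix.submatrix_mul _ _ _ _ _ Function.bijective_id]
    simp
  have := hf ⟨w, Matrix.mem_unitaryGroup_iff.mpr hw⟩ (Matrix.diagonal d)
  rw [← this]
  congr 2
  simp only [Matrix.UnitaryGroup.inv_val]
  ext i j
  simp [w, Matrix.star_eq_conjTranspose, Matrix.mul_apply, Matrix.diagonal_apply,
    Matrix.one_apply, apply_ite]
  by_cases h : i = j
  · subst h; simp
  · simp [h]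

end Avg

section Main
variable {n : ℕ}

lemma vand_anti : Anti (vand n) := by
  rw [vand_eq]; exact aDet_anti _

lemma symm_of_vand {g : MvPolynomial (Fin n) ℂ} {ν : Fin n → ℕ}
    (h : vand n * g = aDet n ν) : g.IsSymmetric := by
  intro π
  have h1 := aDet_anti ν π
  rw [← h, map_mul, vand_anti π] at h1
  have h2 : C (sg π) * vand n ≠ 0 := by
    refine mul_ne_zero ?_ vand_ne_zero
    rw [Ne, C_eq_zero]
    intro h0
    have := sg_mul_self π
    rw [h0] at this; simp at this
  apply mul_left_cancel₀ h2
  rw [h1, mul_assoc]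

lemma rho_anti {f : MvPolynomial (Fin n × Fin n) ℂ} (hf : UInv f) : Anti (rho f) := by
  intro π
  rw [rho, map_mul, vand_anti π, hf.res_symm π, mul_assoc]

lemma ev_hermitian {f : MvPolynomial (Fin n × Fin n) ℂ} (hf : UInv f) (h0 : res f = 0)
    (A : Matrix (Fin n) (Fin n) ℂ) (hA : A.IsHermitian) : ev A f = 0 := by
  have h1 := hA.spectral_theorem
  have h2 := hf hA.eigenvectorUnitary (Matrix.diagonal (RCLike.ofReal ∘ hA.eigenvalues))
  rw [← eval_res, h0, map_zero] at h2
  rw [← h2]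
  congr 2

lemma uinv_zero {f : MvPolynomial (Fin n × Fin n) ℂ} (hf : UInv f) (h0 : res f = 0) : f = 0 := by
  apply ev_funext
  intro x
  rw [map_zero]
  let h1 : Matrix (Fin n) (Fin n) ℂ := (1/2 : ℂ) • (x + star x)
  let h2 : Matrix (Fin n) (Fin n) ℂ := (-Complex.I/2) • (x - star x)
  have hx : x = h1 + Complex.I • h2 := by
    ext a b
    simp only [h1, h2, Matrix.add_apply, Matrix.smul_apply, Matrix.sub_apply, smul_eq_mul]
    linear_combination (1/2) * (x a b - (star x) a b) * Complex.I_mul_I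
  have hh1 : star h1 = h1 := by
    simp only [h1]
    rw [star_smul, star_add, star_star, add_comm]; simp
  have hh2 : star h2 = h2 := by
    simp only [h2]
    rw [star_smul, star_sub, star_star]
    ext a b
    simp only [Matrix.smul_apply, Matrix.sub_apply, smul_eq_mul]
    simp; ring
  let Q : Polynomial ℂ := aeval (fun p : Fin n × Fin n =>
    Polynomial.C (h1 p.1 p.2) + Polynomial.X * Polynomial.C (h2 p.1 p.2)) f
  have hQ : ∀ t : ℂ, Q.eval t = ev (h1 + t • h2) f := by
    intro t
    have := MvPolynomial.comp_aeval_apply (f := fun p : Fin n × Fin n =>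
      Polynomial.C (h1 p.1 p.2) + Polynomial.X * Polynomial.C (h2 p.1 p.2))
      (φ := (Polynomial.aeval t : Polynomial ℂ →ₐ[ℂ] ℂ)) f
    rw [← Polynomial.coe_aeval_eq_eval]
    change Polynomial.aeval t Q = _
    rw [this, MvPolynomial.aeval_eq_eval, ev]
    congr 2
    funext p
    simp; exact mul_comm _ _
  have hQ0 : Q = 0 := by
    apply Polynomial.eq_zero_of_infinite_isRoot
    refine Set.Infinite.mono ?_ (Set.infinite_range_of_injective Complex.ofReal_injective)
    rintro _ ⟨t, rfl⟩
    change Q.eval _ = 0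
    rw [hQ]
    apply ev_hermitian hf h0
    change star _ = _
    rw [star_add, hh1, star_smul, hh2]; simp
  rw [hx, ← hQ, hQ0]; simp

lemma exists_avg' (μ : Measure (Matrix.unitaryGroup (Fin n) ℂ)) [μ.IsHaarMeasure]
    [IsProbabilityMeasure μ] (z : Matrix (Fin n) (Fin n) ℂ) (k : ℕ) :
    ∃ f : MvPolynomial (Fin n × Fin n) ℂ, f.IsHomogeneous k ∧ UInv f ∧
      ∀ Λ : MvPolynomial (Fin n × Fin n) ℂ →ₗ[ℂ] ℂ, Λ f = ∫ u, Λ (lf u z ^ k) ∂μ := by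
  obtain ⟨f, h1, h2⟩ := exists_avg μ z k
  refine ⟨f, h1, ?_, h2⟩
  have hev : ∀ x, ev x f = ∫ u, (x * cj u z).trace ^ k ∂μ := by
    intro x
    have := h2 (aeval fun p : Fin n × Fin n => x p.1 p.2).toLinearMap
    simp only [AlgHom.toLinearMap_apply, MvPolynomial.aeval_eq_eval] at this
    change ev x f = ∫ u, ev x (lf u z ^ k) ∂μ at this
    simpa only [map_pow, ev_lf] using this
  intro v x
  rw [hev, hev, ← integral_mul_left_eq_self (fun u => (x * cj u z).trace ^ k) v⁻¹]
  congr 1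
  funext u
  congr 1
  simp only [cj, mul_inv_rev, inv_inv, Submonoid.coe_mul]
  simp only [mul_assoc]
  rw [Matrix.trace_mul_comm]
  simp only [mul_assoc]

lemma avg_coeff (μ : Measure (Matrix.unitaryGroup (Fin n) ℂ)) [IsProbabilityMeasure μ]
    (z : Matrix (Fin n) (Fin n) ℂ) (k : ℕ) {f : MvPolynomial (Fin n × Fin n) ℂ}
    (hf : UInv f)
    (hΛ : ∀ Λ : MvPolynomial (Fin n × Fin n) ℂ →ₗ[ℂ] ℂ, Λ f = ∫ u, Λ (lf u z ^ k) ∂μ)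
    {g : MvPolynomial (Fin n) ℂ} {ν : Fin n → ℕ} (hg : vand n * g = aDet n ν)
    {P : MvPolynomial (Fin n × Fin n) ℂ} (hP : Intw (dop Prod.swap P) (dop id g)) :
    (∏ i, ((ν i).factorial : ℂ)) * coeff (ex ν) (rho f) =
      (∏ i : Fin n, ((n - 1 - (i : ℕ)).factorial : ℂ)) * (k.factorial : ℂ) *
        ∫ u, ev (cj u z) (homogeneousComponent k P) ∂μ := by
  have h1 := fis_aDet_anti ν (rho_anti hf)
  rw [← hg, map_mul, Module.End.mul_apply, ← (hP f hf.iInv).2] at h1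
  change eval 0 (dop id (vand n) (vand n * res (dop Prod.swap P f))) = _ at h1
  rw [fis_vand_mul, eval_res] at h1
  have h2 := hΛ ((aeval (0 : Fin n × Fin n → ℂ)).toLinearMap ∘ₗ (dop Prod.swap P))
  simp only [LinearMap.comp_apply, AlgHom.toLinearMap_apply, MvPolynomial.aeval_eq_eval] at h2
  have h3 : ∀ u, (eval (0 : Fin n × Fin n → ℂ)) (dop Prod.swap P (lf u z ^ k)) =
      (k.factorial : ℂ) * ev (cj u z) (homogeneousComponent k P) := fun u =>
    eval_zero_dop_pow Prod.swap (fun p => cj u z p.1 p.2) (lf u z) (pderiv_lf u z)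
      (eval_zero_lf u z) k P
  have h4 : ev (Matrix.diagonal (0 : Fin n → ℂ)) (dop Prod.swap P f) =
      eval (0 : Fin n × Fin n → ℂ) (dop Prod.swap P f) := by
    rw [ev]; congr 2; funext p; simp [Matrix.diagonal_apply]
  have h5 : (eval (0 : Fin n × Fin n → ℂ)) (dop Prod.swap P f) =
      ∫ u, (eval (0 : Fin n × Fin n → ℂ)) (dop Prod.swap P (lf u z ^ k)) ∂μ := h2
  simp only [h3] at h5
  rw [h4, h5, integral_const_mul] at h1
  have hn : (n.factorial : ℂ) ≠ 0 := Nat.cast_ne_zero.mpr n.factorial_ne_zero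
  apply mul_left_cancel₀ hn
  linear_combination -h1

end Main

section Finite
variable {n : ℕ}

lemma continuous_ev_cj (z : Matrix (Fin n) (Fin n) ℂ) (Q : MvPolynomial (Fin n × Fin n) ℂ) :
    Continuous fun u => ev (cj u z) Q := by
  unfold ev
  refine (MvPolynomial.continuous_eval Q).comp ?_
  exact continuous_pi fun p => (continuous_cj z).matrix_elem _ _

lemma sum_shifted (lam : Fin n → ℕ) :
    ∑ i, shiftedExp n lam i = ∑ i, shiftedExp n 0 i + ∑ i, lam i := by
  rw [← Finset.sum_add_distrib]
  refine Finset.sum_congr rfl fun i _ => ?_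
  simp [shiftedExp, add_comm]

lemma rho_homog {f : MvPolynomial (Fin n × Fin n) ℂ} {k : ℕ} (hf : f.IsHomogeneous k) :
    (rho f).IsHomogeneous (∑ i, shiftedExp n 0 i + k) := by
  have : (vand n).IsHomogeneous (∑ i, shiftedExp n 0 i) := by
    rw [vand_eq]; exact aDet_homog _
  exact this.mul (res_homog hf)

lemma prod_fact_ne (ν : Fin n → ℕ) : (∏ i, ((ν i).factorial : ℂ)) ≠ 0 :=
  Finset.prod_ne_zero_iff.mpr fun i _ => Nat.cast_ne_zero.mpr (ν i).factorial_ne_zero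

lemma avg_component (μ : Measure (Matrix.unitaryGroup (Fin n) ℂ)) [μ.IsHaarMeasure]
    [IsProbabilityMeasure μ] (z : Matrix (Fin n) (Fin n) ℂ)
    {g : MvPolynomial (Fin n) ℂ} {lam : Fin n → ℕ}
    (hg : vand n * g = aDet n (shiftedExp n lam))
    {P : MvPolynomial (Fin n × Fin n) ℂ} (hP : Intw (dop Prod.swap P) (dop id g))
    (hU : UInv P) (k : ℕ) :
    ∫ u, ev (cj u z) (homogeneousComponent k P) ∂μ = if ∑ i, lam i = k then ev z P else 0 := by
  have h0 : ∀ j, ∑ i, lam i ≠ j → ∫ u, ev (cj u z) (homogeneousComponent j P) ∂μ = 0 := by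
    intro j hj
    obtain ⟨f, hf, hfu, hfΛ⟩ := exists_avg' μ z j
    have h1 := avg_coeff μ z j hfu hfΛ hg hP
    have h2 : coeff (ex (shiftedExp n lam)) (rho f) = 0 := by
      apply (rho_homog hf).coeff_eq_zero
      rw [ex_degree, sum_shifted]
      omega
    rw [h2, mul_zero, eq_comm, mul_eq_zero] at h1
    refine h1.resolve_left (mul_ne_zero (prod_fact_ne _) ?_)
    exact Nat.cast_ne_zero.mpr j.factorial_ne_zero
  split_ifs with hk
  · subst hk
    set d := ∑ i, lam i with hd
    have hsum : P = ∑ j ∈ Finset.range (P.totalDegree + d + 1), homogeneousComponent j P := by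
      conv_lhs => rw [← sum_homogeneousComponent P]
      apply Finset.sum_subset
      · intro a ha
        rw [Finset.mem_range] at ha ⊢
        omega
      · intro a _ ha
        apply homogeneousComponent_eq_zero
        rw [Finset.mem_range] at ha
        omega
    have h1 : ∀ u, ev (cj u z) P = ev z P := fun u => hU u z
    have h2 : ∫ u, ev (cj u z) P ∂μ = ev z P := by simp [h1]
    rw [← h2]
    conv_rhs => rw [hsum]
    simp only [map_sum]
    rw [integral_finsetSum _ fun j _ => integrable_cont μ (continuous_ev_cj z _),
      Finset.sum_eq_single d]
    · intro b _ hb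
      exact h0 b (Ne.symm hb)
    · intro h; exact absurd (Finset.mem_range.mpr (by omega)) h
  · exact h0 k hk

open Classical in
/-- Partitions of `k` with at most `n` parts. -/
noncomputable def SS (n k : ℕ) : Finset (Fin n → ℕ) :=
  ((Finset.univ : Finset (Fin n)).piAntidiag k).filter fun lam => Antitone lam

lemma mem_SS {k : ℕ} {lam : Fin n → ℕ} : lam ∈ SS n k ↔ ∑ i, lam i = k ∧ Antitone lam := by
  simp [SS]

lemma exists_shifted {m : Fin n → ℕ} (hm : StrictAnti m) :
    ∃ lam : Fin n → ℕ, Antitone lam ∧ shiftedExp n lam = m := by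
  refine ⟨fun i => m i - (n - 1 - (i : ℕ)), ?_, ?_⟩
  · have key : ∀ d : ℕ, ∀ i j : Fin n, (j : ℕ) = i + d → m j + d ≤ m i := by
      intro d
      induction d with
      | zero => intro i j h; have : j = i := Fin.ext (by simpa using h); simp [this]
      | succ d ih =>
        intro i j h
        have hj := j.2
        have h1 := ih i ⟨i + d, by omega⟩ rfl
        have h2 := hm (show (⟨i + d, by omega⟩ : Fin n) < j from Fin.lt_def.mpr (by simp [h]))
        omega
    intro i j hij
    have h1 := key (j - i) i j (by have := Fin.le_def.mp hij; omega)
    have h2 := strictAnti_ge hm i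
    have h3 := strictAnti_ge hm j
    have := Fin.le_def.mp hij
    have := j.2
    change m j - (n - 1 - (j : ℕ)) ≤ m i - (n - 1 - (i : ℕ))
    omega
  · funext i
    have := strictAnti_ge hm i
    simp only [shiftedExp]
    omega

lemma shiftedExp_inj {a b : Fin n → ℕ} (h : shiftedExp n a = shiftedExp n b) : a = b := by
  funext i
  have := congrFun h i
  simp only [shiftedExp] at this
  omega

/-- The coefficient `δ!/(λ+δ)!`. -/
noncomputable def cc (n : ℕ) (lam : Fin n → ℕ) : ℂ :=
  (∏ i : Fin n, ((n - 1 - (i : ℕ)).factorial : ℂ)) /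
          (∏ i : Fin n, ((shiftedExp n lam i).factorial : ℂ))

lemma degree_identity (μ : Measure (Matrix.unitaryGroup (Fin n) ℂ)) [μ.IsHaarMeasure]
    [IsProbabilityMeasure μ]
    (s : (Fin n → ℕ) → MvPolynomial (Fin n) ℂ)
    (hs : ∀ lam : Fin n → ℕ, Antitone lam → vand n * s lam = aDet n (shiftedExp n lam))
    (x z : Matrix (Fin n) (Fin n) ℂ) (k : ℕ) :
    ∫ u, (x * cj u z).trace ^ k ∂μ =
      ∑ lam ∈ SS n k, (k.factorial : ℂ) * (cc n lam * eval (eigs x) (s lam) *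
        eval (eigs z) (s lam)) := by
  have hex : ∀ lam : Fin n → ℕ, ∃ P : MvPolynomial (Fin n × Fin n) ℂ, Antitone lam →
      (∀ x : Matrix (Fin n) (Fin n) ℂ, ev x P = eval (eigs x) (s lam)) ∧
      UInv P ∧ res P = s lam ∧ Intw (dop Prod.swap P) (dop id (s lam)) := by
    intro lam
    by_cases h : Antitone lam
    · obtain ⟨P, h1, h2, h3, h4⟩ := exists_ext (s lam) (symm_of_vand (hs lam h))
      exact ⟨P, fun _ => ⟨fun x => h1 x _ (map_eigs x).symm, h2, h3, h4⟩⟩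
    · exact ⟨0, fun h' => absurd h' h⟩
  choose P hP using hex
  obtain ⟨f, hf, hfu, hfΛ⟩ := exists_avg' μ z k
  have hev : ev x f = ∫ u, (x * cj u z).trace ^ k ∂μ := by
    have := hfΛ (aeval fun p : Fin n × Fin n => x p.1 p.2).toLinearMap
    simp only [AlgHom.toLinearMap_apply, MvPolynomial.aeval_eq_eval] at this
    change ev x f = ∫ u, ev x (lf u z ^ k) ∂μ at this
    simpa only [map_pow, ev_lf] using this
  let a : (Fin n → ℕ) → ℂ := fun lam => (k.factorial : ℂ) * (cc n lam * ev z (P lam))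
  have hrho : rho f - ∑ lam ∈ SS n k, C (a lam) * aDet n (shiftedExp n lam) = 0 := by
    apply anti_eq_zero
    · intro π
      rw [map_sub, map_sum, rho_anti hfu π, mul_sub, Finset.mul_sum]
      congr 1
      refine Finset.sum_congr rfl fun lam _ => ?_
      rw [map_mul, aDet_anti _ π, rename_C]; ring
    · intro m hm
      obtain ⟨lam, hlam, rfl⟩ := exists_shifted hm
      have h1 := avg_coeff μ z k hfu hfΛ (hs lam hlam) (hP lam hlam).2.2.2
      rw [avg_component μ z (hs lam hlam) (hP lam hlam).2.2.2 (hP lam hlam).2.1] at h1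
      have h2 : coeff (ex (shiftedExp n lam)) (rho f) =
          if ∑ i, lam i = k then a lam else 0 := by
        have hne := prod_fact_ne (shiftedExp n lam)
        apply mul_left_cancel₀ hne
        rw [h1]
        split_ifs
        · simp only [a, cc]; field_simp
        · simp
      rw [coeff_sub, h2, coeff_sum]
      simp only [coeff_C_mul]
      rw [sub_eq_zero, eq_comm]
      split_ifs with hk
      · rw [Finset.sum_eq_single lam]
        · rw [coeff_aDet hm hm]; simp
        · intro b hb hne
          rw [coeff_aDet (shiftedExp_strictAnti (mem_SS.mp hb).2) hm, if_neg, mul_zero]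
          intro h; exact hne (shiftedExp_inj h).symm
        · intro h; exact absurd (mem_SS.mpr ⟨hk, hlam⟩) h
      · refine Finset.sum_eq_zero fun b hb => ?_
        rw [coeff_aDet (shiftedExp_strictAnti (mem_SS.mp hb).2) hm, if_neg, mul_zero]
        intro h
        rw [shiftedExp_inj h] at hk
        exact hk (mem_SS.mp hb).1
  have hfin : f - ∑ lam ∈ SS n k, C (a lam) * P lam = 0 := by
    apply uinv_zero
    · intro u y
      simp only [map_sub, map_sum, map_mul]
      rw [hfu u y]
      congr 1
      refine Finset.sum_congr rfl fun lam hl => ?_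
      rw [(hP lam (mem_SS.mp hl).2).2.1 u y]
      simp [ev]
    · apply mul_left_cancel₀ (vand_ne_zero (n := n))
      rw [mul_zero, ← hrho, rho, map_sub, map_sum, mul_sub, Finset.mul_sum]
      congr 1
      refine Finset.sum_congr rfl fun lam hl => ?_
      rw [map_mul, (hP lam (mem_SS.mp hl).2).2.2.1, ← hs lam (mem_SS.mp hl).2]
      have : (res (C (a lam)) : MvPolynomial (Fin n) ℂ) = C (a lam) := by simp [res]
      rw [this]; ring
  rw [← hev, sub_eq_zero.mp hfin, map_sum]
  refine Finset.sum_congr rfl fun lam hl => ?_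
  rw [map_mul, (hP lam (mem_SS.mp hl).2).1 x, ← (hP lam (mem_SS.mp hl).2).1 z]
  simp [a, ev]; ring

end Finite

section Conv
variable {n : ℕ}

lemma map_conj_aDet (ν : Fin n → ℕ) :
    MvPolynomial.map (starRingEnd ℂ) (aDet n ν) = aDet n ν := by
  rw [aDet, RingHom.map_det]
  congr 1
  ext i j
  simp

lemma conj_eval {g : MvPolynomial (Fin n) ℂ} {ν : Fin n → ℕ}
    (hg : vand n * g = aDet n ν) (y : Matrix (Fin n) (Fin n) ℂ) :
    (starRingEnd ℂ) (eval (eigs y) g) = eval (eigs y.conjTranspose) g := by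
  have h1 : MvPolynomial.map (starRingEnd ℂ) g = g := by
    have h := map_conj_aDet (n := n) ν
    rw [← hg, map_mul, vand_eq, map_conj_aDet, ← vand_eq] at h
    exact mul_left_cancel₀ vand_ne_zero h
  have h2 : (starRingEnd ℂ) (eval (eigs y) g) = eval ((starRingEnd ℂ) ∘ eigs y) g := by
    conv_rhs => rw [← h1]
    rw [eval_map]
    have := eval₂_comp_left (starRingEnd ℂ) (RingHom.id ℂ) (eigs y) g
    rw [RingHom.comp_id] at this
    exact this
  rw [h2]
  obtain ⟨P, hP, -⟩ := exists_ext g (symm_of_vand hg)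
  rw [← hP y.conjTranspose (eigs y.conjTranspose) (map_eigs _).symm]
  symm
  apply hP
  have h3 : y.conjTranspose = (y.map (starRingEnd ℂ)).transpose := rfl
  rw [h3, Matrix.charpoly_transpose, Matrix.charpoly_map,
    (IsAlgClosed.splits y.charpoly).roots_map, ← map_eigs, Multiset.map_map]

lemma exists_bound (K : Set (Matrix (Fin n) (Fin n) ℂ × Matrix (Fin n) (Fin n) ℂ))
    (hK : IsCompact K) (a b : Matrix (Fin n) (Fin n) ℂ × Matrix (Fin n) (Fin n) ℂ →
      Matrix (Fin n) (Fin n) ℂ) (ha : Continuous a) (hb : Continuous b) :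
    ∃ M : ℝ, 0 ≤ M ∧ ∀ p ∈ K, ∀ u : Matrix.unitaryGroup (Fin n) ℂ,
      ‖(a p * cj u (b p)).trace‖ ≤ M := by
  have hc : Continuous fun q : (Matrix (Fin n) (Fin n) ℂ × Matrix (Fin n) (Fin n) ℂ) ×
      Matrix.unitaryGroup (Fin n) ℂ => (a q.1 * cj q.2 (b q.1)).trace := by
    unfold cj
    simp only [Matrix.UnitaryGroup.inv_val]
    fun_prop
  obtain ⟨M, hM⟩ := (hK.prod isCompact_univ).exists_bound_of_continuousOn hc.continuousOn
  exact ⟨max M 0, le_max_right _ _, fun p hp u =>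
    (hM (p, u) ⟨hp, Set.mem_univ _⟩).trans (le_max_left _ _)⟩

lemma integral_pow_le (μ : Measure (Matrix.unitaryGroup (Fin n) ℂ)) [IsProbabilityMeasure μ]
    (F : Matrix.unitaryGroup (Fin n) ℂ → ℂ) (M : ℝ) (hF : ∀ u, ‖F u‖ ≤ M) (k : ℕ) :
    ‖∫ u, F u ^ k ∂μ‖ ≤ M ^ k := by
  have := norm_integral_le_of_norm_le_const (μ := μ) (f := fun u => F u ^ k) (C := M ^ k)
    (Filter.Eventually.of_forall fun u => by
      rw [norm_pow]; exact pow_le_pow_left₀ (norm_nonneg _) (hF u) k)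
  simpa using this

lemma cc_eq (lam : Fin n → ℕ) : cc n lam = ((‖cc n lam‖ : ℝ) : ℂ) := by
  have : cc n lam = (((∏ i : Fin n, ((n - 1 - (i : ℕ)).factorial : ℝ)) /
          (∏ i : Fin n, ((shiftedExp n lam i).factorial : ℝ)) : ℝ) : ℂ) := by
    simp [cc]
  rw [this, Complex.norm_real, Real.norm_of_nonneg]
  positivity

lemma diag_bound (μ : Measure (Matrix.unitaryGroup (Fin n) ℂ)) [μ.IsHaarMeasure]
    [IsProbabilityMeasure μ]
    (s : (Fin n → ℕ) → MvPolynomial (Fin n) ℂ)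
    (hs : ∀ lam : Fin n → ℕ, Antitone lam → vand n * s lam = aDet n (shiftedExp n lam))
    (x : Matrix (Fin n) (Fin n) ℂ) (M : ℝ)
    (hM : ∀ u : Matrix.unitaryGroup (Fin n) ℂ, ‖(x * cj u x.conjTranspose).trace‖ ≤ M)
    (lam : Fin n → ℕ) (hlam : Antitone lam) :
    ‖cc n lam‖ * ‖eval (eigs x) (s lam)‖ ^ 2 ≤
      M ^ (∑ i, lam i) / ((∑ i, lam i).factorial : ℝ) := by
  set k := ∑ i, lam i with hk
  have h1 := integral_pow_le μ _ M hM k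
  rw [degree_identity μ s hs x x.conjTranspose k] at h1
  have h2 : ∀ l ∈ SS n k, (k.factorial : ℂ) * (cc n l * eval (eigs x) (s l) *
        eval (eigs x.conjTranspose) (s l)) =
      (((k.factorial : ℝ) * (‖cc n l‖ * ‖eval (eigs x) (s l)‖ ^ 2) : ℝ) : ℂ) := by
    intro l hl
    rw [← conj_eval (hs l (mem_SS.mp hl).2), mul_assoc (cc n l), Complex.mul_conj,
      Complex.normSq_eq_norm_sq]
    conv_lhs => rw [cc_eq]
    push_cast
    ring
  rw [Finset.sum_congr rfl h2, ← Complex.ofReal_sum, Complex.norm_real, Real.norm_of_nonneg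
    (Finset.sum_nonneg fun l _ => by positivity)] at h1
  have h3 : (k.factorial : ℝ) * (‖cc n lam‖ * ‖eval (eigs x) (s lam)‖ ^ 2) ≤ M ^ k :=
    (Finset.single_le_sum (f := fun l => (k.factorial : ℝ) *
      (‖cc n l‖ * ‖eval (eigs x) (s l)‖ ^ 2)) (fun l _ => by positivity)
      (mem_SS.mpr ⟨hk.symm, hlam⟩)).trans h1
  rw [le_div_iff₀ (by positivity)]
  linarith

lemma summable_bound (M : ℝ) (hM : 0 ≤ M) :
    Summable fun lam : Partn n => M ^ (∑ i, lam.1 i) / ((∑ i, lam.1 i).factorial : ℝ) := by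
  classical
  have h : Summable fun lam : Fin n → ℕ => ∏ i, (M ^ (lam i) / ((lam i).factorial : ℝ)) := by
    apply summable_of_sum_le (c := (Real.exp M) ^ n)
    · intro lam; exact Finset.prod_nonneg fun i _ => by positivity
    · intro t
      obtain ⟨N, hN⟩ : ∃ N, t ⊆ Fintype.piFinset fun _ : Fin n => Finset.range N := by
        refine ⟨(t.sup fun l => ∑ i, l i) + 1, fun l hl => ?_⟩
        rw [Fintype.mem_piFinset]
        intro i
        rw [Finset.mem_range]
        have h1 : l i ≤ ∑ i, l i := Finset.single_le_sum (fun _ _ => Nat.zero_le _)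
          (Finset.mem_univ i)
        have h2 := Finset.le_sup (f := fun l : Fin n → ℕ => ∑ i, l i) hl
        omega
      calc _ ≤ ∑ lam ∈ Fintype.piFinset fun _ : Fin n => Finset.range N,
            ∏ i, (M ^ (lam i) / ((lam i).factorial : ℝ)) :=
            Finset.sum_le_sum_of_subset_of_nonneg hN fun _ _ _ =>
              Finset.prod_nonneg fun i _ => by positivity
        _ = ∏ _i : Fin n, ∑ j ∈ Finset.range N, M ^ j / (j.factorial : ℝ) := by
            rw [Finset.prod_univ_sum]
        _ ≤ ∏ _i : Fin n, Real.exp M :=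
            Finset.prod_le_prod (fun _ _ => Finset.sum_nonneg fun _ _ => by positivity)
              fun _ _ => Real.sum_le_exp_of_nonneg hM N
        _ = _ := by simp
  have h2 : Summable fun lam : Partn n => ∏ i, (M ^ (lam.1 i) / ((lam.1 i).factorial : ℝ)) :=
    h.comp_injective Subtype.val_injective
  refine Summable.of_nonneg_of_le (fun _ => by positivity) (fun lam => ?_) h2
  rw [Finset.prod_div_distrib, Finset.prod_pow_eq_pow_sum]
  have h3 : ∏ i, (lam.1 i).factorial ≤ (∑ i, lam.1 i).factorial :=
    Nat.le_of_dvd (Nat.factorial_pos _) (Nat.prod_factorial_dvd_factorial_sum _ _)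
  have h4 : (∏ i, ((lam.1 i).factorial : ℝ)) ≤ ((∑ i, lam.1 i).factorial : ℝ) := by
    exact_mod_cast h3
  exact div_le_div_of_nonneg_left (by positivity) (by positivity) h4

lemma exp_series (μ : Measure (Matrix.unitaryGroup (Fin n) ℂ)) [IsProbabilityMeasure μ]
    (x z : Matrix (Fin n) (Fin n) ℂ) :
    HasSum (fun k : ℕ => (∫ u, (x * cj u z).trace ^ k ∂μ) / (k.factorial : ℂ))
      (∫ u, Complex.exp (x * cj u z).trace ∂μ) := by
  obtain ⟨M, hM0, hM⟩ := exists_bound {(x, z)} isCompact_singleton Prod.fst Prod.snd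
    continuous_fst continuous_snd
  have hM' : ∀ u, ‖(x * cj u z).trace‖ ≤ M := hM (x, z) rfl
  have hcont : Continuous fun u => (x * cj u z).trace := by
    have := continuous_cj z
    fun_prop
  have h := hasSum_integral_of_summable_integral_norm (μ := μ)
    (F := fun (k : ℕ) u => (x * cj u z).trace ^ k / (k.factorial : ℂ))
    (fun k => integrable_cont μ ((hcont.pow k).div_const _)) ?_
  · simp only [integral_div] at h
    have he : ∀ w : ℂ, ∑' i : ℕ, w ^ i / (i.factorial : ℂ) = Complex.exp w := by
      intro w
      rw [Complex.exp_eq_exp_ℂ]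
      exact (NormedSpace.expSeries_div_hasSum_exp w).tsum_eq
    simp only [he] at h
    exact h
  · refine Summable.of_nonneg_of_le (fun k => integral_nonneg fun u => norm_nonneg _)
      (fun k => ?_) (Real.summable_pow_div_factorial M)
    have : ∀ u, ‖(x * cj u z).trace ^ k / (k.factorial : ℂ)‖ ≤ M ^ k / (k.factorial : ℝ) := by
      intro u
      rw [norm_div, norm_pow, Complex.norm_natCast]
      gcongr
      exact hM' u
    have h2 := integral_mono (μ := μ)
      (integrable_cont μ ((hcont.pow k).div_const (k.factorial : ℂ))).norm
      (integrable_const _) this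
    simpa using h2

end Conv

/-- Character expansion of the HCIZ kernel: for a Haar probability measure on `U(n)`
and for any choice `s λ` of the Schur polynomials (characterized by `Δ · s_λ = a_{λ+δ}`),
setting `χ_λ(x) = s_λ(eigenvalues of x)`, one has
`∫_{U(n)} e^{Tr(u⁻¹ x u y*)} du = Σ_λ (δ!/(λ+δ)!) χ_λ(x) conj(χ_λ(y))`,
the series converging absolutely, and uniformly on compact subsets of
`M_n(ℂ) × M_n(ℂ)`. -/
theorem HCIZ_character_expansion (n : ℕ)
    (μ : Measure (Matrix.unitaryGroup (Fin n) ℂ))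
    [μ.IsHaarMeasure] [IsProbabilityMeasure μ]
    (s : (Fin n → ℕ) → MvPolynomial (Fin n) ℂ)
    (hs : ∀ lam : Fin n → ℕ, Antitone lam → vand n * s lam = aDet n (shiftedExp n lam))
    (chi : (Fin n → ℕ) → Matrix (Fin n) (Fin n) ℂ → ℂ)
    (hchi : ∀ lam x, chi lam x = eval (eigs x) (s lam))
    (term : Partn n → Matrix (Fin n) (Fin n) ℂ × Matrix (Fin n) (Fin n) ℂ → ℂ)
    (hterm : ∀ lam p, term lam p =
      ((∏ i : Fin n, ((n - 1 - (i : ℕ)).factorial : ℂ)) /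
          (∏ i : Fin n, ((shiftedExp n lam.1 i).factorial : ℂ))) *
        chi lam.1 p.1 * (starRingEnd ℂ) (chi lam.1 p.2))
    (I : Matrix (Fin n) (Fin n) ℂ × Matrix (Fin n) (Fin n) ℂ → ℂ)
    (hI : ∀ p, I p = ∫ u : Matrix.unitaryGroup (Fin n) ℂ,
        Complex.exp (((↑(u⁻¹) : Matrix (Fin n) (Fin n) ℂ) * p.1 *
          (↑u : Matrix (Fin n) (Fin n) ℂ) * Matrix.conjTranspose p.2).trace) ∂μ) :
    (∀ p, HasSum (fun lam : Partn n => term lam p) (I p)) ∧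
    (∀ p, Summable (fun lam : Partn n => ‖term lam p‖)) ∧
    (∀ K : Set (Matrix (Fin n) (Fin n) ℂ × Matrix (Fin n) (Fin n) ℂ), IsCompact K →
      TendstoUniformlyOn (fun (t : Finset (Partn n)) p => ∑ lam ∈ t, term lam p)
        I Filter.atTop K) := by
  classical
  -- the integrand in terms of `cj`
  have hI' : ∀ p, I p = ∫ u, Complex.exp (p.1 * cj u p.2.conjTranspose).trace ∂μ := by
    intro p
    rw [hI]
    congr 1
    funext u
    congr 1
    simp only [cj, mul_assoc]
    rw [Matrix.trace_mul_comm]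
    simp only [mul_assoc]
  have hterm' : ∀ (lam : Partn n) p, term lam p = cc n lam.1 * eval (eigs p.1) (s lam.1) *
      eval (eigs p.2.conjTranspose) (s lam.1) := by
    intro lam p
    rw [hterm, hchi, hchi, conj_eval (hs lam.1 lam.2), cc]
  -- the domination on compact sets
  have hbound : ∀ K : Set (Matrix (Fin n) (Fin n) ℂ × Matrix (Fin n) (Fin n) ℂ), IsCompact K →
      ∃ M : ℝ, 0 ≤ M ∧ ∀ (lam : Partn n), ∀ p ∈ K,
        ‖term lam p‖ ≤ M ^ (∑ i, lam.1 i) / ((∑ i, lam.1 i).factorial : ℝ) := by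
    intro K hK
    obtain ⟨M1, h10, h1⟩ := exists_bound K hK Prod.fst (fun p => p.1.conjTranspose)
      continuous_fst (by fun_prop)
    obtain ⟨M2, h20, h2⟩ := exists_bound K hK Prod.snd (fun p => p.2.conjTranspose)
      continuous_snd (by fun_prop)
    refine ⟨max M1 M2, le_max_of_le_left h10, fun lam p hp => ?_⟩
    have b1 := diag_bound μ s hs p.1 (max M1 M2) (fun u => (h1 p hp u).trans (le_max_left _ _))
      lam.1 lam.2
    have b2 := diag_bound μ s hs p.2 (max M1 M2) (fun u => (h2 p hp u).trans (le_max_right _ _))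
      lam.1 lam.2
    rw [hterm', ← conj_eval (hs lam.1 lam.2), norm_mul, norm_mul, Complex.norm_conj]
    have h0 := norm_nonneg (cc n lam.1)
    nlinarith [mul_nonneg h0 (sq_nonneg (‖eval (eigs p.1) (s lam.1)‖ -
      ‖eval (eigs p.2) (s lam.1)‖))]
  have hsumm : ∀ p, Summable (fun lam : Partn n => ‖term lam p‖) := by
    intro p
    obtain ⟨M, hM0, hM⟩ := hbound {p} isCompact_singleton
    exact Summable.of_nonneg_of_le (fun _ => norm_nonneg _) (fun lam => hM lam p rfl)
      (summable_bound M hM0)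
  have hsum : ∀ p, HasSum (fun lam : Partn n => term lam p) (I p) := by
    intro p
    have hS : Summable (fun lam : Partn n => term lam p) := (hsumm p).of_norm
    let S' : ℕ → Finset (Partn n) := fun k => (SS n k).subtype fun lam => Antitone lam
    have hmem : ∀ k (lam : Partn n), lam ∈ S' k ↔ ∑ i, lam.1 i = k := by
      intro k lam
      have h : lam ∈ S' k ↔ lam.1 ∈ SS n k :=
        Finset.mem_subtype (p := fun lam => Antitone lam) (s := SS n k) (a := lam)
      rw [h, mem_SS]
      exact ⟨fun h => h.1, fun h => ⟨h, lam.2⟩⟩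
    let T : ℕ → Finset (Partn n) := fun N => (Finset.range N).biUnion S'
    have hT : Filter.Tendsto T Filter.atTop Filter.atTop := by
      apply Filter.tendsto_atTop_finset_of_monotone
      · intro a b hab
        exact Finset.biUnion_subset_biUnion_of_subset_left _ (Finset.range_mono hab)
      · intro lam
        refine ⟨∑ i, lam.1 i + 1, ?_⟩
        rw [Finset.mem_biUnion]
        exact ⟨∑ i, lam.1 i, Finset.mem_range.mpr (Nat.lt_succ_self _), (hmem _ _).mpr rfl⟩
    have h1 : Filter.Tendsto (fun N => ∑ lam ∈ T N, term lam p) Filter.atTop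
        (nhds (∑' lam, term lam p)) := hS.hasSum.comp hT
    have hk : ∀ k, ∑ lam ∈ S' k, term lam p =
        (∫ u, (p.1 * cj u p.2.conjTranspose).trace ^ k ∂μ) / (k.factorial : ℂ) := by
      intro k
      have hkf : (k.factorial : ℂ) ≠ 0 := Nat.cast_ne_zero.mpr k.factorial_ne_zero
      rw [degree_identity μ s hs, ← Finset.mul_sum, mul_div_cancel_left₀ _ hkf]
      rw [← Finset.sum_subtype_of_mem (p := fun lam => Antitone lam) _
        fun lam hl => (mem_SS.mp hl).2]
      exact Finset.sum_congr rfl fun lam _ => hterm' lam p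
    have h2 : Filter.Tendsto (fun N => ∑ lam ∈ T N, term lam p) Filter.atTop (nhds (I p)) := by
      have h3 := (exp_series μ p.1 p.2.conjTranspose).tendsto_sum_nat
      rw [← hI'] at h3
      refine h3.congr fun N => ?_
      rw [Finset.sum_biUnion]
      · exact Finset.sum_congr rfl fun k _ => (hk k).symm
      · intro a _ b _ hab
        rw [Function.onFun, Finset.disjoint_left]
        intro lam ha hb
        exact hab (((hmem _ _).mp ha).symm.trans ((hmem _ _).mp hb))
    rw [← tendsto_nhds_unique h1 h2]
    exact hS.hasSum
  refine ⟨hsum, hsumm, ?_⟩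
  intro K hK
  obtain ⟨M, hM0, hM⟩ := hbound K hK
  have h := tendstoUniformlyOn_tsum (summable_bound M hM0) hM
  refine h.congr_right ?_
  intro p _
  exact (hsum p).tsum_eq
end
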